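/- arXiv:1807.06465 — 2 statements merged into one kernel-verified Lean document; each statement's English description precedes it below -/
import Mathlib

section
/- Let d ≥ 3 be a fixed integer. There exists 𝔟₀ > 0 such that for every 𝔟 ≥ 𝔟₀ there exist constants C, c, N > 0 with the following property: for all n ≥ N and all primes p with gcd(p,d) = 1 and p ≤ c·n^{1/4}, defining ℰ_𝔟 = {(n_0,…,n_{p−1}) ∈ ℤ_{≥0}^p : n_0+⋯+n_{p−1} = n and Σ_{j=0}^{p−1} (n_j/n − 1/p)² ≤ 𝔟·(ln n)/n}, one has | Σ_{(n_0,…,n_{p−1}) ∈ ℰ_𝔟} (n!·∏_{j=0}^{p−1}(d·n_j)!)/((∏_{j=0}^{p−1} n_j!)·(nd)!) · #{(a¹,…,aⁿ) ∈ (Z_{d,p})^n : Σ_{k=1}^n Φ(aᵏ) = (dn_0, dn_1, …, dn_{p−1})} − 1 | ≤ C·p²·(ln n)^{3/2}/√n. -/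
open Finset

/-- The counting map `Φ` : the `j`-th coordinate of `Φ(a)` is `#{r : a r = j}`. -/
def Phi {d p : ℕ} (a : Fin d → ZMod p) (j : ZMod p) : ℕ :=
  (Finset.univ.filter (fun r : Fin d => a r = j)).card

/-!
Expanding `n! ∏ (d nⱼ)! / (∏ nⱼ! (nd)!)` shows that the sum over types is the expected number of
words `v : Fin n → ZMod p` of typical type killed by the adjacency matrix `A` of a random
`d`-regular directed multigraph on `n` vertices, drawn from the configuration model. By Fourier
inversion this is `p⁻ⁿ ∑ᵥ ∑_τ φ(τ, v)`, where `φ(τ, v) = 𝔼 ψ(τ · A v)` is symmetric in `τ` and `v`.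

Frequencies `τ` within Hamming distance `16 p` of a constant word give the main term: exchanging
the roles of `τ` and `v`, and completing the sum over typical `v` to all words (large deviations
make atypical words negligible), it becomes the expected number of near-constant words in the
kernel of `A`. Here `0` contributes exactly `1`. Words near a constant `s ≠ 0` are never in the
kernel, since some row of `A` only sees the letter `s` and `d s ≠ 0`. Sparse words are rarely in
it, since every row of `A` meeting the support does so at least twice.

For the other frequencies, `φ(τ, v)` is a coefficient of a product of exponential sums, hence at
most a polynomial factor times an average of `∏ᵢ |z(τᵢ)| ^ d`. By Parseval `∑ₜ |z(t)|²` is nearly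
`1` when `v` is typical, so for `d ≥ 3` either one `|z(t)|` dominates, and a word far from constant
uses it too seldom, or `∑ₜ |z(t)| ^ d` is bounded away from `1`; both make the sum over `τ` small.
-/

namespace DirectedLCLT

open scoped BigOperators

/-! ### Words and their types -/

section Words

variable {ι κ : Type*} [Fintype ι] [DecidableEq κ]

/-- The type of a word `w : ι → κ`: the number of occurrences of each letter. -/
def letterCount (w : ι → κ) (j : κ) : ℕ := #{i | w i = j}

/-- The empirical distribution of the letters of a word (zero if the word is empty). -/
noncomputable def letterFreq (w : ι → κ) (j : κ) : ℝ := letterCount w j / Fintype.card ι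

lemma letterFreq_nonneg (w : ι → κ) (j : κ) : 0 ≤ letterFreq w j := by
  unfold letterFreq; positivity

lemma letterCount_le_card (w : ι → κ) (j : κ) : letterCount w j ≤ Fintype.card ι :=
  card_le_univ _

lemma letterCount_comp_perm (w : ι → κ) (σ : Equiv.Perm ι) :
    letterCount (w ∘ σ) = letterCount w :=
  funext fun _ => card_bijective σ σ.bijective (by simp)

lemma letterCount_comp_fst {ι' : Type*} [Fintype ι'] (w : ι → κ) (j : κ) :
    letterCount (fun x : ι × ι' => w x.1) j = Fintype.card ι' * letterCount w j := by
  have slots : ({x | w x.1 = j} : Finset (ι × ι')) = ({i | w i = j} : Finset ι) ×ˢ univ := by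
    ext; simp
  rw [letterCount, slots, card_product, card_univ, mul_comm, letterCount]

lemma exists_comp_perm_eq {v w : ι → κ} (h : letterCount w = letterCount v) :
    ∃ σ : Equiv.Perm ι, v ∘ σ = w := by
  have card_fibers (j : κ) : Fintype.card {i // w i = j} = Fintype.card {i // v i = j} := by
    simpa only [Fintype.card_subtype] using! congrFun h j
  let e (j : κ) : {i // w i = j} ≃ {i // v i = j} := Fintype.equivOfCardEq (card_fibers j)
  exact ⟨((Equiv.sigmaFiberEquiv w).symm.trans (Equiv.sigmaCongrRight e)).trans
    (Equiv.sigmaFiberEquiv v), funext fun i => (e (w i) ⟨i, rfl⟩).2⟩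

variable [Fintype κ]

lemma sum_letterCount (w : ι → κ) : ∑ j, letterCount w j = Fintype.card ι :=
  (card_eq_sum_card_fiberwise fun _ _ => mem_coe.2 (mem_univ _)).symm

lemma sum_letterFreq [Nonempty ι] (w : ι → κ) : ∑ j, letterFreq w j = 1 := by
  simp only [letterFreq]
  rw [← sum_div, ← Nat.cast_sum, sum_letterCount, div_self (by simp)]

lemma prod_apply_eq_prod_pow_letterCount {M : Type*} [CommMonoid M] (w : ι → κ) (f : κ → M) :
    ∏ i, f (w i) = ∏ j, f j ^ letterCount w j := by
  simp only [← prod_fiberwise' univ w f, prod_const, letterCount]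

lemma sum_apply_eq_sum_letterCount_mul {R : Type*} [CommSemiring R] (w : ι → κ) (f : κ → R) :
    ∑ i, f (w i) = ∑ j, letterCount w j * f j := by
  simp only [← sum_fiberwise' univ w f, sum_const, letterCount, nsmul_eq_mul]

lemma exists_letterCount_eq (ν : κ → ℕ) (h : ∑ j, ν j = Fintype.card ι) :
    ∃ w : ι → κ, letterCount w = ν := by
  let e : ι ≃ Σ j, Fin (ν j) := Fintype.equivOfCardEq (by simp [h])
  refine ⟨fun i => (e i).1, funext fun j => ?_⟩
  rw [letterCount, ← Fintype.card_subtype,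
    Fintype.card_congr ((e.subtypeEquiv fun _ => Iff.rfl).trans (Equiv.sigmaSubtype j)),
    Fintype.card_fin]

variable [DecidableEq ι]

lemma card_perm_comp_eq {v w : ι → κ} (h : letterCount w = letterCount v) :
    #{σ : Equiv.Perm ι | v ∘ σ = w} = ∏ j, (letterCount v j).factorial := by
  obtain ⟨π, rfl⟩ := exists_comp_perm_eq h
  have stabilizer : ∏ j, (letterCount v j).factorial = #{σ : Equiv.Perm ι | v ∘ σ = v} := by
    simp only [← Fintype.card_subtype, DomMulAct.stabilizer_card, letterCount]
  rw [stabilizer]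
  refine card_bijective (· * π⁻¹) (Group.mulRight_bijective _) fun σ => ?_
  simp only [mem_filter, mem_univ, true_and, Equiv.Perm.coe_mul, ← Function.comp_assoc]
  exact eq_comm.trans ((Equiv.eq_comp_symm π v (v ∘ σ)).symm.trans eq_comm)

lemma sum_perm_comp {M : Type*} [AddCommMonoid M] (v : ι → κ) (g : (ι → κ) → M) :
    ∑ σ : Equiv.Perm ι, g (v ∘ σ) =
      (∏ j, (letterCount v j).factorial) • ∑ w with letterCount w = letterCount v, g w := by
  rw [← sum_fiberwise_of_maps_to' (s := univ) (t := {w | letterCount w = letterCount v})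
    (g := fun σ : Equiv.Perm ι => v ∘ σ) (by simp [letterCount_comp_perm]), smul_sum]
  refine sum_congr rfl fun w hw => ?_
  rw [sum_const, card_perm_comp_eq (mem_filter.1 hw).2]

lemma card_letterCount_eq_mul_prod_factorial (ν : κ → ℕ) (h : ∑ j, ν j = Fintype.card ι) :
    #{w : ι → κ | letterCount w = ν} * ∏ j, (ν j).factorial = (Fintype.card ι).factorial := by
  obtain ⟨v, rfl⟩ := exists_letterCount_eq (ι := ι) ν h
  rw [← Fintype.card_perm, ← card_univ, card_eq_sum_ones univ, sum_perm_comp v fun _ => 1,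
    ← card_eq_sum_ones, smul_eq_mul, mul_comm]

end Words

/-! ### Coefficient extraction on a finite torus -/

section CoefficientExtraction

lemma factorial_le_exp_mul {c : ℕ} (hc : 1 ≤ c) :
    (c.factorial : ℝ) ≤ Real.exp 1 * c * (c / Real.exp 1) ^ c := by
  induction c, hc using Nat.le_induction with
  | base => simp
  | succ c hc ih =>
    have ratio : Real.exp 1 * (c : ℝ) ^ (c + 1) ≤ ((c : ℝ) + 1) ^ (c + 1) := by
      have := Real.one_sub_div_pow_le_exp_neg (n := c + 1) (t := 1) (by simp)
      rw [one_sub_div (by positivity), div_pow, Real.exp_neg, div_le_iff₀ (by positivity),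
        inv_mul_eq_div, le_div_iff₀' (by positivity)] at this
      simpa using this
    calc ((c + 1).factorial : ℝ) = (c + 1) * c.factorial := by
          rw [Nat.factorial_succ, Nat.cast_mul, Nat.cast_succ]
      _ ≤ (c + 1) * (Real.exp 1 * c * (c / Real.exp 1) ^ c) := by gcongr
      _ = (c + 1) * (Real.exp 1 * (c : ℝ) ^ (c + 1)) / Real.exp 1 ^ c := by
          rw [div_pow]; ring
      _ ≤ (c + 1) * ((c : ℝ) + 1) ^ (c + 1) / Real.exp 1 ^ c := by gcongr
      _ = Real.exp 1 * (c + 1 : ℕ) * ((c + 1 : ℕ) / Real.exp 1) ^ (c + 1) := by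
          rw [div_pow, pow_succ (Real.exp 1)]; push_cast; field_simp

lemma addChar_map_sum {A M ι : Type*} [AddCommMonoid A] [CommMonoid M] (ψ : AddChar A M)
    (s : Finset ι) (f : ι → A) : ψ (∑ i ∈ s, f i) = ∏ i ∈ s, ψ (f i) :=
  map_prod ψ.toMonoidHom (fun i => Multiplicative.ofAdd (f i)) s

variable {ι κ : Type*} [Fintype ι] [Fintype κ] [DecidableEq ι] [DecidableEq κ]

lemma sum_stdAddChar_dotProduct {Q : ℕ} [NeZero Q] (u : κ → ZMod Q) :
    ∑ θ : κ → ZMod Q, ZMod.stdAddChar (θ ⬝ᵥ u) =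
      if u = 0 then (Q : ℂ) ^ Fintype.card κ else 0 := by
  calc ∑ θ : κ → ZMod Q, (ZMod.stdAddChar (θ ⬝ᵥ u) : ℂ)
      = ∏ j, ∑ t : ZMod Q, (ZMod.stdAddChar (t * u j) : ℂ) := by
        simp only [dotProduct, addChar_map_sum, Finset.prod_univ_sum, Fintype.piFinset_univ]
    _ = ∏ j, if u j = 0 then (Q : ℂ) else 0 := by
        simp only [AddChar.sum_mulShift _ (ZMod.isPrimitive_stdAddChar Q), ZMod.card,
          Nat.cast_ite, Nat.cast_zero]
    _ = if u = 0 then (Q : ℂ) ^ Fintype.card κ else 0 := by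
        simp only [prod_ite_zero, mem_univ, true_imp_iff, prod_const, card_univ, funext_iff,
          Pi.zero_apply]

omit [DecidableEq ι] in
lemma expect_stdAddChar_sum_sub_sum {Q : ℕ} [NeZero Q] (hQ : Fintype.card ι < Q) (v w : ι → κ) :
    𝔼 θ : κ → ZMod Q, ZMod.stdAddChar (∑ i, θ (w i) - ∑ i, θ (v i)) =
      if letterCount w = letterCount v then (1 : ℂ) else 0 := by
  let u (j : κ) : ZMod Q := letterCount w j - letterCount v j
  have dot (θ : κ → ZMod Q) : ∑ i, θ (w i) - ∑ i, θ (v i) = θ ⬝ᵥ u := by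
    simp only [sum_apply_eq_sum_letterCount_mul, ← sum_sub_distrib, dotProduct, u, ← sub_mul,
      mul_comm (θ _)]
  have u_eq_zero : u = 0 ↔ letterCount w = letterCount v := by
    simp only [funext_iff, u, Pi.zero_apply, sub_eq_zero]
    refine forall_congr' fun j => ⟨fun h => ?_, fun h => by rw [h]⟩
    exact ((ZMod.natCast_eq_natCast_iff _ _ _).1 h).eq_of_lt_of_lt
      ((letterCount_le_card w j).trans_lt hQ) ((letterCount_le_card v j).trans_lt hQ)
  simp only [Fintype.expect_eq_sum_div_card, dot, sum_stdAddChar_dotProduct, u_eq_zero,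
    Fintype.card_fun, ZMod.card, Nat.cast_pow]
  split_ifs
  · exact div_self (pow_ne_zero _ (NeZero.ne _))
  · exact zero_div _

lemma sum_letterCount_eq_prod_eq_expect {Q : ℕ} [NeZero Q] (hQ : Fintype.card ι < Q) (v : ι → κ)
    (a : ι → κ → ℂ) :
    ∑ w with letterCount w = letterCount v, ∏ i, a i (w i) =
      𝔼 θ : κ → ZMod Q, ZMod.stdAddChar (-∑ i, θ (v i)) *
        ∏ i, ∑ j, a i j * ZMod.stdAddChar (θ j) := by
  have expand (θ : κ → ZMod Q) :
      (ZMod.stdAddChar (-∑ i, θ (v i)) : ℂ) * ∏ i, ∑ j, a i j * ZMod.stdAddChar (θ j) =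
        ∑ w : ι → κ, (∏ i, a i (w i)) * ZMod.stdAddChar (∑ i, θ (w i) - ∑ i, θ (v i)) := by
    simp only [prod_univ_sum, Fintype.piFinset_univ, mul_sum, prod_mul_distrib, ← addChar_map_sum,
      sub_eq_neg_add, AddChar.map_add_eq_mul]
    exact sum_congr rfl fun w _ => mul_left_comm _ _ _
  simp only [expand, expect_sum_comm, ← mul_expect, expect_stdAddChar_sum_sub_sum hQ, mul_ite,
    mul_one, mul_zero, sum_filter]

lemma expect_perm_eq (v : ι → κ) (g : (ι → κ) → ℂ) :
    𝔼 σ : Equiv.Perm ι, g (v ∘ σ) =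
      (∏ j, ((letterCount v j).factorial : ℂ)) / (Fintype.card ι).factorial *
        ∑ w with letterCount w = letterCount v, g w := by
  rw [Fintype.expect_eq_sum_div_card, sum_perm_comp, Fintype.card_perm, nsmul_eq_mul,
    Nat.cast_prod, div_mul_eq_mul_div]

omit [DecidableEq κ] in
lemma prod_factorial_le_mul_prod_div_pow {N : ℕ} (hN : 1 ≤ N) (c : κ → ℕ) (h : ∑ j, c j = N) :
    ∏ j, ((c j).factorial : ℝ) ≤
      (Real.exp 1 * N) ^ Fintype.card κ * (N.factorial * ∏ j, ((c j : ℝ) / N) ^ c j) := by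
  have pow_le : (N : ℝ) ^ N ≤ N.factorial * Real.exp 1 ^ N := by
    have := Real.pow_div_factorial_le_exp (N : ℝ) (by positivity) N
    rwa [div_le_iff₀' (by positivity), ← mul_one (N : ℝ), Real.exp_nat_mul, mul_one] at this
  have factorial_le (j : κ) :
      ((c j).factorial : ℝ) ≤ Real.exp 1 * N * (c j / Real.exp 1) ^ c j := by
    rcases (c j).eq_zero_or_pos with h0 | h0
    · simpa [h0] using one_le_mul_of_one_le_of_one_le (Real.one_le_exp zero_le_one)
        (Nat.one_le_cast.2 hN)
    · have : c j ≤ N := h ▸ single_le_sum (fun _ _ => Nat.zero_le _) (mem_univ j)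
      exact (factorial_le_exp_mul h0).trans (by gcongr)
  calc ∏ j, ((c j).factorial : ℝ) ≤ ∏ j, (Real.exp 1 * N * (c j / Real.exp 1) ^ c j) := by
        exact prod_le_prod (fun _ _ => by positivity) fun j _ => factorial_le j
    _ = (Real.exp 1 * N) ^ Fintype.card κ * ((∏ j, (c j : ℝ) ^ c j) / Real.exp 1 ^ N) := by
        simp only [prod_mul_distrib, prod_const, card_univ, div_pow, prod_div_distrib,
          prod_pow_eq_pow_sum, h, mul_pow]
    _ ≤ (Real.exp 1 * N) ^ Fintype.card κ * (N.factorial * ∏ j, ((c j : ℝ) / N) ^ c j) := by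
        simp only [div_pow, prod_div_distrib, prod_pow_eq_pow_sum, h]
        gcongr
        rw [← mul_div_assoc, div_le_div_iff₀ (by positivity) (by positivity),
          mul_comm (N.factorial : ℝ), mul_assoc]
        gcongr

lemma norm_expect_perm_prod_le [Nonempty ι] (v : ι → κ) (a : ι → κ → ℂ) :
    ‖𝔼 σ : Equiv.Perm ι, ∏ i, a i (v (σ i))‖ ≤
      (Real.exp 1 * Fintype.card ι) ^ Fintype.card κ *
        𝔼 θ : κ → ZMod (Fintype.card ι + 1),
          ∏ i, ‖∑ j, a i j * letterFreq v j * ZMod.stdAddChar (θ j)‖ := by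
  have weights : (∏ j, (letterFreq v j : ℂ) ^ letterCount v j) *
        ∑ w with letterCount w = letterCount v, ∏ i, a i (w i) =
      ∑ w with letterCount w = letterCount v, ∏ i, a i (w i) * letterFreq v (w i) := by
    rw [mul_sum]
    refine sum_congr rfl fun w hw => ?_
    rw [prod_mul_distrib, prod_apply_eq_prod_pow_letterCount w fun j => (letterFreq v j : ℂ),
      (mem_filter.1 hw).2, mul_comm]
  calc ‖𝔼 σ : Equiv.Perm ι, ∏ i, a i (v (σ i))‖
      = (∏ j, ((letterCount v j).factorial : ℝ)) / (Fintype.card ι).factorial *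
        ‖∑ w with letterCount w = letterCount v, ∏ i, a i (w i)‖ := by
        rw [show 𝔼 σ : Equiv.Perm ι, ∏ i, a i (v (σ i)) = _ from
          expect_perm_eq v fun w => ∏ i, a i (w i)]
        simp only [norm_mul, norm_div, norm_prod, Complex.norm_natCast]
    _ ≤ (Real.exp 1 * Fintype.card ι) ^ Fintype.card κ *
        (∏ j, letterFreq v j ^ letterCount v j) *
        ‖∑ w with letterCount w = letterCount v, ∏ i, a i (w i)‖ := by
        gcongr
        rw [div_le_iff₀' (by positivity), mul_left_comm]
        exact prod_factorial_le_mul_prod_div_pow Fintype.card_pos _ (sum_letterCount v)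
    _ = (Real.exp 1 * Fintype.card ι) ^ Fintype.card κ *
        ‖∑ w with letterCount w = letterCount v, ∏ i, a i (w i) * letterFreq v (w i)‖ := by
        rw [← weights, norm_mul, mul_assoc, norm_prod]
        simp only [norm_pow, Complex.norm_real, Real.norm_of_nonneg (letterFreq_nonneg v _)]
    _ ≤ _ := by
        gcongr
        rw [sum_letterCount_eq_prod_eq_expect (Nat.lt_succ_self _) v
          fun i j => a i j * letterFreq v j]
        refine (RCLike.norm_expect_le (K := ℂ)).trans_eq ?_
        simp only [norm_mul, norm_prod, AddChar.norm_apply, one_mul]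

end CoefficientExtraction

/-! ### Words far from every constant word -/

section FarFromConstant

variable {ι κ : Type*} [Fintype ι] [DecidableEq ι] [Fintype κ] [DecidableEq κ]

variable (ι κ) in
/-- The words that differ from some constant word in at most `K` positions. -/
def nearConstant (K : ℕ) : Finset (ι → κ) := {τ | ∃ s, hammingDist τ (fun _ => s) ≤ K}

lemma mem_nearConstant {K : ℕ} {τ : ι → κ} :
    τ ∈ nearConstant ι κ K ↔ ∃ s, hammingDist τ (fun _ => s) ≤ K := by
  simp [nearConstant]

lemma sum_pow_hammingDist_mul_prod {R : Type*} [CommSemiring R] (s : κ) (a : κ → R) (l : R) :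
    ∑ τ : ι → κ, l ^ hammingDist τ (fun _ => s) * ∏ i, a (τ i) =
      (a s + l * ∑ t ∈ {s}ᶜ, a t) ^ Fintype.card ι := by
  have weighted : a s + l * ∑ t ∈ {s}ᶜ, a t = ∑ t, (if t ≠ s then l else 1) * a t := by
    rw [Fintype.sum_eq_add_sum_compl s, mul_sum]
    simp +contextual [sum_congr]
  rw [weighted, ← card_univ, ← prod_const, prod_univ_sum, Fintype.piFinset_univ]
  simp only [prod_mul_distrib, prod_ite, prod_const, one_pow, mul_one, hammingDist]

lemma pow_mul_sum_prod_le_of_lt_hammingDist (K : ℕ) (s : κ) {a : κ → ℝ} (ha : ∀ t, 0 ≤ a t)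
    {l : ℝ} (hl : 1 ≤ l) :
    l ^ K * ∑ τ : ι → κ with K < hammingDist τ (fun _ => s), ∏ i, a (τ i) ≤
      (a s + l * ∑ t ∈ {s}ᶜ, a t) ^ Fintype.card ι := by
  have nonneg (τ : ι → κ) : 0 ≤ ∏ i, a (τ i) := prod_nonneg fun i _ => ha _
  rw [← sum_pow_hammingDist_mul_prod, mul_sum]
  refine (sum_le_sum fun τ hτ => ?_).trans (sum_le_univ_sum_of_nonneg fun τ => ?_)
  · have := (mem_filter.1 hτ).2.le
    exact mul_le_mul_of_nonneg_right (pow_le_pow_right₀ hl this) (nonneg τ)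
  · exact mul_nonneg (by positivity) (nonneg τ)

lemma card_hammingDist_le_le (K : ℕ) (s : κ) {l : ℝ} (hl : 1 ≤ l) :
    (#{τ : ι → κ | hammingDist τ (fun _ => s) ≤ K} : ℝ) ≤
      l ^ K * Real.exp (Fintype.card ι * Fintype.card κ / l) := by
  have base_le : 1 + l⁻¹ * ∑ _t ∈ ({s}ᶜ : Finset κ), (1 : ℝ) ≤ Real.exp (Fintype.card κ / l) := by
    refine le_trans ?_ (Real.add_one_le_exp _)
    rw [add_comm, inv_mul_eq_div, sum_const, nsmul_eq_mul, mul_one]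
    gcongr
    exact card_le_univ _
  calc (#{τ : ι → κ | hammingDist τ (fun _ => s) ≤ K} : ℝ)
      = ∑ τ : ι → κ with hammingDist τ (fun _ => s) ≤ K, 1 := by simp
    _ ≤ ∑ τ : ι → κ, l ^ K * (l⁻¹ ^ hammingDist τ (fun _ => s) * ∏ _i, (1 : ℝ)) := by
        refine (sum_le_sum fun τ hτ => ?_).trans
          (sum_le_univ_sum_of_nonneg fun τ => by positivity)
        rw [prod_const_one, mul_one, inv_pow, ← div_eq_mul_inv, one_le_div (by positivity)]
        exact pow_le_pow_right₀ hl (mem_filter.1 hτ).2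
    _ = l ^ K * (1 + l⁻¹ * ∑ _t ∈ ({s}ᶜ : Finset κ), (1 : ℝ)) ^ Fintype.card ι := by
        rw [← mul_sum, sum_pow_hammingDist_mul_prod s fun _ => (1 : ℝ)]
    _ ≤ l ^ K * Real.exp (Fintype.card κ / l) ^ Fintype.card ι := by gcongr
    _ = l ^ K * Real.exp (Fintype.card ι * Fintype.card κ / l) := by
        rw [← Real.exp_nat_mul, mul_div_assoc]

lemma card_nearConstant_le (K : ℕ) {l : ℝ} (hl : 1 ≤ l) :
    (#(nearConstant ι κ K) : ℝ) ≤
      Fintype.card κ * (l ^ K * Real.exp (Fintype.card ι * Fintype.card κ / l)) := by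
  have cover : nearConstant ι κ K =
      univ.biUnion fun s => {τ : ι → κ | hammingDist τ (fun _ => s) ≤ K} := by
    ext; simp [nearConstant]
  calc (#(nearConstant ι κ K) : ℝ)
      ≤ ∑ s : κ, (#{τ : ι → κ | hammingDist τ (fun _ => s) ≤ K} : ℝ) := by
        rw [cover]; exact_mod_cast card_biUnion_le
    _ ≤ ∑ _s : κ, l ^ K * Real.exp (Fintype.card ι * Fintype.card κ / l) :=
        sum_le_sum fun s _ => card_hammingDist_le_le K s hl
    _ = _ := by rw [sum_const, card_univ, nsmul_eq_mul]

omit [Fintype κ] [DecidableEq κ] in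
lemma sum_pow_three_le_mul_sqrt (S : Finset κ) (z : κ → ℝ) :
    ∑ t ∈ S, z t ^ 3 ≤ (∑ t ∈ S, z t ^ 2) * √(∑ t ∈ S, z t ^ 2) := by
  rw [sum_mul]
  refine sum_le_sum fun t ht => ?_
  rw [pow_succ]
  gcongr
  exact Real.le_sqrt_of_sq_le (single_le_sum (f := fun t => z t ^ 2) (fun _ _ => sq_nonneg _) ht)

lemma two_mul_mul_sqrt_two_mul_le {y : ℝ} (hy : 0 ≤ y) : 2 * y * √(2 * y) ≤ 3 * (y * √y) := by
  have sqrt_two_le : √2 ≤ 3 / 2 := Real.sqrt_le_left (by norm_num) |>.2 (by norm_num)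
  rw [Real.sqrt_mul zero_le_two]
  nlinarith [mul_nonneg hy (Real.sqrt_nonneg y)]

lemma pow_three_add_mul_sum_le_of_le_sq {z : κ → ℝ} (hz0 : ∀ t, 0 ≤ z t) (hz1 : ∀ t, z t ≤ 1)
    {η : ℝ} (hη : 0 ≤ η) (hz : ∑ t, z t ^ 2 ≤ 1 + η) {l : ℝ} (hl : 1 ≤ l) {s : κ}
    (hs : 1 - 1 / (9 * l ^ 2) ≤ z s ^ 2) :
    z s ^ 3 + l * ∑ t ∈ {s}ᶜ, z t ^ 3 ≤ 1 + 3 * l * (η * √η) := by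
  set u := 1 - z s ^ 2 with hu
  have u_nonneg : 0 ≤ u := sub_nonneg.2 (pow_le_one₀ (hz0 s) (hz1 s))
  have u_le : (3 * l * √u) ^ 2 ≤ 1 := by
    have : u * (9 * l ^ 2) ≤ 1 := (le_div_iff₀ (by positivity)).1 (by linarith)
    rw [mul_pow, Real.sq_sqrt u_nonneg]
    linarith
  have pow_three_le : z s ^ 3 ≤ 1 - u := by
    rw [hu, sub_sub_cancel]
    exact pow_le_pow_of_le_one (hz0 s) (hz1 s) (by norm_num)
  have rest_le : ∑ t ∈ {s}ᶜ, z t ^ 2 ≤ u + η := by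
    rw [Fintype.sum_eq_add_sum_compl s] at hz
    linarith
  have rest_le_of_le {y : ℝ} (hy : 0 ≤ y) (h : u + η ≤ 2 * y) :
      ∑ t ∈ {s}ᶜ, z t ^ 3 ≤ 3 * (y * √y) :=
    calc ∑ t ∈ {s}ᶜ, z t ^ 3 ≤ (∑ t ∈ {s}ᶜ, z t ^ 2) * √(∑ t ∈ {s}ᶜ, z t ^ 2) :=
          sum_pow_three_le_mul_sqrt _ z
      _ ≤ 2 * y * √(2 * y) := by
          have := rest_le.trans h
          gcongr
      _ ≤ 3 * (y * √y) := two_mul_mul_sqrt_two_mul_le hy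
  rcases le_total u η with h | h
  · have := mul_le_mul_of_nonneg_left (rest_le_of_le hη (by linarith)) (zero_le_one.trans hl)
    linarith
  · have absorbed : l * ∑ t ∈ {s}ᶜ, z t ^ 3 ≤ u :=
      calc l * ∑ t ∈ {s}ᶜ, z t ^ 3 ≤ l * (3 * (u * √u)) := by
            gcongr
            exact rest_le_of_le u_nonneg (by linarith)
        _ = 3 * l * √u * u := by ring
        _ ≤ u := mul_le_of_le_one_left u_nonneg ((sq_le_one_iff₀ (by positivity)).1 u_le)
    have : 0 ≤ 3 * l * (η * √η) := by positivity
    linarith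

omit [DecidableEq κ] in
lemma sum_pow_three_le_exp {z : κ → ℝ} {η u : ℝ}
    (hz : ∑ t, z t ^ 2 ≤ 1 + η) (hu : ∀ t, z t ^ 2 ≤ 1 - u) :
    ∑ t, z t ^ 3 ≤ Real.exp (η - u / 2) := by
  have le_exp (t : κ) : z t ≤ Real.exp (-(u / 2)) := by
    refine le_of_sq_le_sq ((hu t).trans ?_) (Real.exp_pos _).le
    rw [← Real.exp_nat_mul]
    exact (Real.one_sub_le_exp_neg u).trans_eq (by push_cast; ring_nf)
  calc ∑ t, z t ^ 3 = ∑ t, z t * z t ^ 2 := by simp only [pow_succ']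
    _ ≤ ∑ t, Real.exp (-(u / 2)) * z t ^ 2 := by gcongr with t; exact le_exp t
    _ = Real.exp (-(u / 2)) * ∑ t, z t ^ 2 := (mul_sum ..).symm
    _ ≤ Real.exp (-(u / 2)) * Real.exp η := by
        gcongr
        exact hz.trans (by rw [add_comm]; exact Real.add_one_le_exp η)
    _ = Real.exp (η - u / 2) := by rw [← Real.exp_add, neg_add_eq_sub]

lemma sum_compl_nearConstant_prod_pow_le {d : ℕ} (hd : 3 ≤ d) (K : ℕ) {z : κ → ℝ}
    (hz0 : ∀ t, 0 ≤ z t) (hz1 : ∀ t, z t ≤ 1) {η : ℝ} (hη : 0 ≤ η)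
    (hz : ∑ t, z t ^ 2 ≤ 1 + η) {l : ℝ} (hl : 1 ≤ l) :
    ∑ τ ∈ (nearConstant ι κ K)ᶜ, ∏ i, z (τ i) ^ d ≤
      (l ^ K)⁻¹ * Real.exp (Fintype.card ι * (3 * l * (η * √η))) +
        Real.exp (Fintype.card ι * (η - 1 / (18 * l ^ 2))) := by
  have cube_nonneg (t : κ) : 0 ≤ z t ^ 3 := pow_nonneg (hz0 t) 3
  have prod_nonneg' (τ : ι → κ) : 0 ≤ ∏ i, z (τ i) ^ 3 := prod_nonneg fun i _ => cube_nonneg _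
  have le_cubes : ∑ τ ∈ (nearConstant ι κ K)ᶜ, ∏ i, z (τ i) ^ d ≤
      ∑ τ ∈ (nearConstant ι κ K)ᶜ, ∏ i, z (τ i) ^ 3 := by
    refine sum_le_sum fun τ _ => prod_le_prod (fun i _ => pow_nonneg (hz0 _) _) fun i _ => ?_
    exact pow_le_pow_of_le_one (hz0 _) (hz1 _) hd
  refine le_cubes.trans ?_
  by_cases dominant : ∃ s, 1 - 1 / (9 * l ^ 2) ≤ z s ^ 2
  · obtain ⟨s, hs⟩ := dominant
    refine le_add_of_le_of_nonneg ?_ (Real.exp_pos _).le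
    rw [← div_eq_inv_mul, le_div_iff₀' (by positivity)]
    calc l ^ K * ∑ τ ∈ (nearConstant ι κ K)ᶜ, ∏ i, z (τ i) ^ 3
        ≤ l ^ K * ∑ τ : ι → κ with K < hammingDist τ (fun _ => s), ∏ i, z (τ i) ^ 3 := by
          refine mul_le_mul_of_nonneg_left (sum_le_sum_of_subset_of_nonneg (fun τ hτ => ?_)
            fun τ _ _ => prod_nonneg' τ) (by positivity)
          simp only [mem_compl, mem_nearConstant, not_exists, not_le] at hτ
          simpa using hτ s
      _ ≤ (z s ^ 3 + l * ∑ t ∈ {s}ᶜ, z t ^ 3) ^ Fintype.card ι :=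
          pow_mul_sum_prod_le_of_lt_hammingDist K s cube_nonneg hl
      _ ≤ Real.exp (3 * l * (η * √η)) ^ Fintype.card ι := by
          have := sum_nonneg fun t (_ : t ∈ ({s}ᶜ : Finset κ)) => cube_nonneg t
          have := cube_nonneg s
          gcongr
          refine (pow_three_add_mul_sum_le_of_le_sq hz0 hz1 hη hz hl hs).trans ?_
          rw [add_comm]
          exact Real.add_one_le_exp _
      _ = _ := (Real.exp_nat_mul _ _).symm
  · push Not at dominant
    refine le_add_of_nonneg_of_le (by positivity) ?_
    calc ∑ τ ∈ (nearConstant ι κ K)ᶜ, ∏ i, z (τ i) ^ 3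
        ≤ ∑ τ : ι → κ, ∏ i, z (τ i) ^ 3 := sum_le_univ_sum_of_nonneg prod_nonneg'
      _ = (∑ t, z t ^ 3) ^ Fintype.card ι := by
          rw [← card_univ, ← prod_const, prod_univ_sum, Fintype.piFinset_univ]
      _ ≤ Real.exp (η - 1 / (9 * l ^ 2) / 2) ^ Fintype.card ι := by
          have := sum_nonneg fun t (_ : t ∈ (univ : Finset κ)) => cube_nonneg t
          gcongr
          exact sum_pow_three_le_exp hz fun t => (dominant t).le
      _ = _ := by rw [← Real.exp_nat_mul]; congr 3; field_simp; norm_num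

end FarFromConstant

/-! ### Types far from uniform -/

section FarFromUniform

open InformationTheory (klFun klFun_apply klFun_nonneg)

variable {ι κ : Type*} [Fintype ι] [Fintype κ]

/-- The `χ²`-distance `|κ| ∑ⱼ (qⱼ - 1 / |κ|)²` from `q` to the uniform distribution on `κ`. -/
noncomputable def chiSq (q : κ → ℝ) : ℝ :=
  Fintype.card κ * ∑ j, (q j - 1 / Fintype.card κ) ^ 2

lemma card_mul_sum_sq_eq [Nonempty κ] {q : κ → ℝ} (hq : ∑ j, q j = 1) :
    Fintype.card κ * ∑ j, q j ^ 2 = 1 + chiSq q := by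
  have : (Fintype.card κ : ℝ) ≠ 0 := by simp
  simp only [chiSq, sub_sq, sum_add_distrib, sum_sub_distrib, ← mul_sum, ← sum_mul, hq, sum_const,
    card_univ, nsmul_eq_mul]
  field_simp
  ring

lemma sum_card_mul_sub_one_sq [Nonempty κ] (q : κ → ℝ) :
    ∑ j, (Fintype.card κ * q j - 1) ^ 2 = Fintype.card κ * chiSq q := by
  have : (Fintype.card κ : ℝ) ≠ 0 := by simp
  rw [chiSq, mul_sum, mul_sum]
  refine sum_congr rfl fun j _ => ?_
  field_simp

lemma sqrt_sub_one_sq_le_klFun {x : ℝ} (hx : 0 ≤ x) : (√x - 1) ^ 2 ≤ klFun x := by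
  rcases hx.eq_or_lt with rfl | hx
  · simp [klFun_apply]
  have sqrt_pos : 0 < √x := Real.sqrt_pos.2 hx
  have log_bound := Real.one_sub_inv_le_log_of_pos sqrt_pos
  rw [Real.log_sqrt hx.le] at log_bound
  have : x * (1 - (√x)⁻¹) = x - √x := by
    rw [mul_sub, mul_one, ← div_eq_mul_inv, Real.div_sqrt]
  rw [klFun_apply]
  nlinarith [Real.sq_sqrt hx.le]

lemma min_sub_one_sq_one_le_klFun {x : ℝ} (hx : 0 ≤ x) : min ((x - 1) ^ 2) 1 / 6 ≤ klFun x := by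
  refine le_trans ?_ (sqrt_sub_one_sq_le_klFun hx)
  obtain ⟨s, hs, rfl⟩ : ∃ s, 0 ≤ s ∧ x = s ^ 2 := ⟨√x, Real.sqrt_nonneg x, (Real.sq_sqrt hx).symm⟩
  rw [Real.sqrt_sq hs]
  rcases le_total (s ^ 2) 2 with h | h
  · have : (s ^ 2 - 1) ^ 2 ≤ 6 * (s - 1) ^ 2 := by
      rw [show (s ^ 2 - 1) ^ 2 = (s + 1) ^ 2 * (s - 1) ^ 2 by ring]
      gcongr
      nlinarith
    linarith [min_le_left ((s ^ 2 - 1) ^ 2) 1]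
  · have : 1.41 ≤ s := by nlinarith
    nlinarith [min_le_right ((s ^ 2 - 1) ^ 2) 1]

lemma min_chiSq_le_sum_klFun [Nonempty κ] {q : κ → ℝ} (hq : ∀ j, 0 ≤ q j) :
    min (Fintype.card κ * chiSq q) 1 / 6 ≤ ∑ j, klFun (Fintype.card κ * q j) := by
  set x : κ → ℝ := fun j => Fintype.card κ * q j
  have hx (j : κ) : 0 ≤ x j := mul_nonneg (Nat.cast_nonneg _) (hq j)
  rw [← sum_card_mul_sub_one_sq]
  by_cases h : ∀ j, (x j - 1) ^ 2 ≤ 1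
  · calc min (∑ j, (x j - 1) ^ 2) 1 / 6 ≤ (∑ j, (x j - 1) ^ 2) / 6 := by
          gcongr; exact min_le_left _ _
      _ = ∑ j, min ((x j - 1) ^ 2) 1 / 6 := by simp only [sum_div, min_eq_left (h _)]
      _ ≤ ∑ j, klFun (x j) := sum_le_sum fun j _ => min_sub_one_sq_one_le_klFun (hx j)
  · push Not at h
    obtain ⟨j, hj⟩ := h
    calc min (∑ j, (x j - 1) ^ 2) 1 / 6 ≤ min ((x j - 1) ^ 2) 1 / 6 := by
          rw [min_eq_right hj.le]; gcongr; exact min_le_right _ _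
      _ ≤ klFun (x j) := min_sub_one_sq_one_le_klFun (hx j)
      _ ≤ ∑ j, klFun (x j) :=
          single_le_sum (f := fun j => klFun (x j)) (fun j _ => klFun_nonneg (hx j)) (mem_univ j)

variable [DecidableEq κ]

lemma prod_pow_letterCount_eq_exp [Nonempty ι] [Nonempty κ] (v : ι → κ) :
    ∏ j, (Fintype.card κ * letterFreq v j) ^ letterCount v j =
      Real.exp (Fintype.card ι / Fintype.card κ *
        ∑ j, klFun (Fintype.card κ * letterFreq v j)) := by
  have hι : (Fintype.card ι : ℝ) ≠ 0 := by simp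
  have hκ : (Fintype.card κ : ℝ) ≠ 0 := by simp
  have sum_kl : Fintype.card ι / Fintype.card κ * ∑ j, klFun (Fintype.card κ * letterFreq v j) =
      ∑ j, letterCount v j * Real.log (Fintype.card κ * letterFreq v j) := by
    simp only [klFun_apply, sum_sub_distrib, sum_add_distrib, ← mul_sum, sum_letterFreq,
      sum_const, card_univ, nsmul_eq_mul, mul_one, add_sub_cancel_right]
    rw [mul_sum]
    refine sum_congr rfl fun j _ => ?_
    rw [letterFreq]
    field_simp
  rw [sum_kl, Real.exp_sum]
  refine prod_congr rfl fun j _ => ?_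
  rcases (letterCount v j).eq_zero_or_pos with h | h
  · simp [h]
  · rw [Real.exp_nat_mul, Real.exp_log (by unfold letterFreq; positivity)]

variable [DecidableEq ι]

lemma card_letterCount_eq_mul_prod_pow_le_one [Nonempty ι] (v : ι → κ) :
    #{w : ι → κ | letterCount w = letterCount v} * ∏ j, letterFreq v j ^ letterCount v j ≤ 1 := by
  calc #{w : ι → κ | letterCount w = letterCount v} * ∏ j, letterFreq v j ^ letterCount v j
      = ∑ w : ι → κ with letterCount w = letterCount v, ∏ i, letterFreq v (w i) := by
        rw [← nsmul_eq_mul, ← sum_const]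
        refine sum_congr rfl fun w hw => ?_
        rw [prod_apply_eq_prod_pow_letterCount w, (mem_filter.1 hw).2]
    _ ≤ ∑ w : ι → κ, ∏ i, letterFreq v (w i) :=
        sum_le_univ_sum_of_nonneg fun w => prod_nonneg fun i _ => letterFreq_nonneg v _
    _ = (∑ j, letterFreq v j) ^ Fintype.card ι := by
        rw [← card_univ, ← prod_const, prod_univ_sum, Fintype.piFinset_univ]
    _ = 1 := by rw [sum_letterFreq, one_pow]

lemma card_letterCount_eq_le [Nonempty ι] [Nonempty κ] (v : ι → κ) :
    #{w : ι → κ | letterCount w = letterCount v} ≤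
      (Fintype.card κ : ℝ) ^ Fintype.card ι *
        Real.exp (-(Fintype.card ι * (min (Fintype.card κ * chiSq (letterFreq v)) 1 /
          (6 * Fintype.card κ)))) := by
  rw [Real.exp_neg, ← div_eq_mul_inv, le_div_iff₀ (Real.exp_pos _)]
  calc #{w : ι → κ | letterCount w = letterCount v} * Real.exp (Fintype.card ι *
        (min (Fintype.card κ * chiSq (letterFreq v)) 1 / (6 * Fintype.card κ)))
      = #{w : ι → κ | letterCount w = letterCount v} * Real.exp (Fintype.card ι / Fintype.card κ *
        (min (Fintype.card κ * chiSq (letterFreq v)) 1 / 6)) := by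
        ring_nf
    _ ≤ #{w : ι → κ | letterCount w = letterCount v} * Real.exp (Fintype.card ι / Fintype.card κ *
        ∑ j, klFun (Fintype.card κ * letterFreq v j)) := by
        gcongr
        exact min_chiSq_le_sum_klFun (letterFreq_nonneg v)
    _ = Fintype.card κ ^ Fintype.card ι * (#{w : ι → κ | letterCount w = letterCount v} *
        ∏ j, letterFreq v j ^ letterCount v j) := by
        rw [← prod_pow_letterCount_eq_exp]
        simp only [mul_pow, prod_mul_distrib, prod_pow_eq_pow_sum, sum_letterCount]
        ring
    _ ≤ Fintype.card κ ^ Fintype.card ι * 1 := by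
        gcongr
        exact card_letterCount_eq_mul_prod_pow_le_one v
    _ = Fintype.card κ ^ Fintype.card ι := mul_one _

lemma card_lt_chiSq_le [Nonempty ι] [Nonempty κ] {η : ℝ} (hη : Fintype.card κ * η ≤ 1) :
    #{v : ι → κ | η < chiSq (letterFreq v)} ≤
      ((Fintype.card ι : ℝ) + 1) ^ Fintype.card κ *
        (Fintype.card κ ^ Fintype.card ι * Real.exp (-(Fintype.card ι * η / 6))) := by
  set S : Finset (ι → κ) := {v | η < chiSq (letterFreq v)}
  set types : Finset (κ → ℕ) := Fintype.piFinset fun _ => range (Fintype.card ι + 1)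
  have mem_types (v : ι → κ) : letterCount v ∈ types := by
    simpa [types, Nat.lt_succ_iff] using letterCount_le_card v
  have card_fiber_le (ν : κ → ℕ) : (#{v ∈ S | letterCount v = ν} : ℝ) ≤
      Fintype.card κ ^ Fintype.card ι * Real.exp (-(Fintype.card ι * η / 6)) := by
    rcases {v ∈ S | letterCount v = ν}.eq_empty_or_nonempty with h | ⟨v, hv⟩
    · rw [h, card_empty, Nat.cast_zero]; positivity
    obtain rfl := (mem_filter.1 hv).2
    calc (#{w ∈ S | letterCount w = letterCount v} : ℝ)
        ≤ #{w : ι → κ | letterCount w = letterCount v} := by gcongr; exact subset_univ _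
      _ ≤ _ := card_letterCount_eq_le v
      _ ≤ _ := by
        have : Fintype.card κ * η ≤ min (Fintype.card κ * chiSq (letterFreq v)) 1 :=
          le_min (by gcongr; exact (mem_filter.1 (mem_filter.1 hv).1).2.le) hη
        rw [mul_div_assoc]
        refine mul_le_mul_of_nonneg_left (Real.exp_le_exp.2 (neg_le_neg
          (mul_le_mul_of_nonneg_left ?_ (Nat.cast_nonneg _)))) (by positivity)
        rw [div_le_div_iff₀ (by norm_num) (by positivity)]
        linarith
  calc (#S : ℝ) = ∑ ν ∈ types, (#{v ∈ S | letterCount v = ν} : ℝ) := by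
        exact_mod_cast card_eq_sum_card_fiberwise fun v _ => mem_types v
    _ ≤ ∑ _ν ∈ types, Fintype.card κ ^ Fintype.card ι * Real.exp (-(Fintype.card ι * η / 6)) :=
        sum_le_sum fun ν _ => card_fiber_le ν
    _ = _ := by simp [types]

end FarFromUniform

/-! ### The random regular multigraph -/

section Permutations

variable {α : Type*} [Fintype α] [DecidableEq α]

lemma card_perm_insert_le {P : Finset α} (W : Finset α) {a : α} (ha : a ∉ P) (b : α) :
    #{σ : Equiv.Perm α | ∀ x ∈ insert a P, σ x ∈ W} ≤
      #{σ : Equiv.Perm α | ∀ x ∈ insert b P, σ x ∈ W} := by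
  refine card_le_card_of_injOn (· * Equiv.swap a b) (fun σ hσ => ?_) (mul_left_injective _).injOn
  simp only [coe_filter, mem_univ, true_and, mem_insert, forall_eq_or_imp, Set.mem_ofPred_eq,
    Equiv.Perm.mul_apply, Equiv.swap_apply_right] at hσ ⊢
  refine ⟨hσ.1, fun x hx => ?_⟩
  rcases eq_or_ne x b with rfl | hxb
  · rw [Equiv.swap_apply_right]
    exact hσ.1
  · rw [Equiv.swap_apply_of_ne_of_ne (ne_of_mem_of_not_mem hx ha) hxb]
    exact hσ.2 x hx

lemma sum_card_perm_insert (P W : Finset α) :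
    ∑ b, #{σ : Equiv.Perm α | ∀ x ∈ insert b P, σ x ∈ W} =
      #W * #{σ : Equiv.Perm α | ∀ x ∈ P, σ x ∈ W} := by
  have split (b : α) : #{σ : Equiv.Perm α | ∀ x ∈ insert b P, σ x ∈ W} =
      ∑ σ : Equiv.Perm α with ∀ x ∈ P, σ x ∈ W, if σ b ∈ W then 1 else 0 := by
    rw [← card_filter, filter_filter]
    simp only [mem_insert, forall_eq_or_imp, and_comm]
  have card_preimage (σ : Equiv.Perm α) : #{b | σ b ∈ W} = #W :=
    card_nbij σ (fun b hb => by simpa using hb) σ.injective.injOn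
      fun w hw => ⟨σ.symm w, by simpa using hw, σ.apply_symm_apply w⟩
  simp only [split]
  rw [sum_comm]
  simp only [← card_filter, card_preimage, sum_const, smul_eq_mul, mul_comm]

lemma card_perm_mapsTo_mul_pow_le (P W : Finset α) :
    #{σ : Equiv.Perm α | ∀ x ∈ P, σ x ∈ W} * Fintype.card α ^ #P ≤
      #W ^ #P * (Fintype.card α).factorial := by
  induction P using Finset.induction_on with
  | empty => simp [Fintype.card_perm]
  | insert a P ha ih =>
    have average : Fintype.card α * #{σ : Equiv.Perm α | ∀ x ∈ insert a P, σ x ∈ W} ≤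
        #W * #{σ : Equiv.Perm α | ∀ x ∈ P, σ x ∈ W} := by
      rw [← sum_card_perm_insert, ← smul_eq_mul, ← card_univ, ← sum_const]
      exact sum_le_sum fun b _ => card_perm_insert_le W ha b
    rw [card_insert_of_notMem ha, pow_succ', pow_succ', mul_left_comm, ← mul_assoc]
    calc Fintype.card α * #{σ : Equiv.Perm α | ∀ x ∈ insert a P, σ x ∈ W} * Fintype.card α ^ #P
        ≤ #W * #{σ : Equiv.Perm α | ∀ x ∈ P, σ x ∈ W} * Fintype.card α ^ #P := by gcongr
      _ ≤ #W * #W ^ #P * (Fintype.card α).factorial := by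
        rw [mul_assoc, mul_assoc]
        gcongr

lemma card_perm_mapsTo_le (P W : Finset α) :
    (#{σ : Equiv.Perm α | ∀ x ∈ P, σ x ∈ W} : ℝ) ≤
      (#W / Fintype.card α) ^ #P * (Fintype.card α).factorial := by
  have count := card_perm_mapsTo_mul_pow_le P W
  rcases P.eq_empty_or_nonempty with rfl | ⟨a, -⟩
  · simpa using (Nat.cast_le (α := ℝ)).2 count
  have : 0 < Fintype.card α := Fintype.card_pos_iff.2 ⟨a⟩
  rw [div_pow, div_mul_eq_mul_div, le_div_iff₀ (by positivity)]
  exact_mod_cast count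

end Permutations

section Multigraph

variable {ι R : Type*} [Fintype ι] {d : ℕ}

/-- The adjacency matrix of a `d`-regular directed multigraph applied to the vector `v`: every
vertex `k` has the `d` half-edges `(k, i)`, and the permutation `σ` matches out-half-edges with
in-half-edges (the configuration model). -/
def adjMulVec [AddCommMonoid R] (σ : Equiv.Perm (ι × Fin d)) (v : ι → R) (k : ι) : R :=
  ∑ i, v (σ (k, i)).1

lemma dotProduct_adjMulVec [NonUnitalNonAssocSemiring R] (σ : Equiv.Perm (ι × Fin d))
    (τ v : ι → R) : τ ⬝ᵥ adjMulVec σ v = ∑ x : ι × Fin d, τ x.1 * v (σ x).1 := by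
  simp only [dotProduct, adjMulVec, mul_sum, Fintype.sum_prod_type]

lemma dotProduct_adjMulVec_comm [NonUnitalCommSemiring R] (σ : Equiv.Perm (ι × Fin d))
    (τ v : ι → R) : τ ⬝ᵥ adjMulVec σ v = v ⬝ᵥ adjMulVec σ⁻¹ τ := by
  rw [dotProduct_adjMulVec, dotProduct_adjMulVec,
    ← Equiv.sum_comp σ fun x => v x.1 * τ (σ⁻¹ x).1]
  simp only [Equiv.Perm.inv_def, Equiv.symm_apply_apply, mul_comm]

lemma card_filter_fst (p : ι → Prop) [DecidablePred p] :
    #{x : ι × Fin d | p x.1} = #{k | p k} * d := by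
  rw [← univ_product_univ, filter_product_left, card_product, card_univ, Fintype.card_fin]

variable [DecidableEq ι]

section KernelProb

variable [AddCommMonoid R] [DecidableEq R]

variable (d) in
/-- The probability that `v` lies in the kernel of the adjacency matrix of the random `d`-regular
directed multigraph. -/
noncomputable def kernelProb (v : ι → R) : ℝ :=
  #{σ : Equiv.Perm (ι × Fin d) | adjMulVec σ v = 0} / (Fintype.card ι * d).factorial

lemma kernelProb_nonneg (v : ι → R) : 0 ≤ kernelProb d v := by
  unfold kernelProb; positivity

lemma kernelProb_zero : kernelProb d (0 : ι → R) = 1 := by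
  have adj_zero (σ : Equiv.Perm (ι × Fin d)) : adjMulVec σ (0 : ι → R) = 0 :=
    funext fun _ => sum_const_zero
  rw [kernelProb, filter_true_of_mem fun σ _ => adj_zero σ, card_univ, Fintype.card_perm,
    Fintype.card_prod, Fintype.card_fin, div_self (by positivity)]

lemma kernelProb_eq_zero {v : ι → R} {s : R} (hs : d • s ≠ 0)
    (hv : hammingDist v (fun _ => s) * d < Fintype.card ι) : kernelProb d v = 0 := by
  suffices ∀ σ : Equiv.Perm (ι × Fin d), adjMulVec σ v ≠ 0 by simp [kernelProb, this]
  intro σ h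
  have card_rows : #(({x | v x.1 ≠ s} : Finset (ι × Fin d)).image fun x => (σ.symm x).1) <
      #(univ : Finset ι) := by
    refine card_image_le.trans_lt ?_
    rwa [card_filter_fst fun k => v k ≠ s, card_univ]
  obtain ⟨k, -, hk⟩ := exists_mem_notMem_of_card_lt_card card_rows
  have row_const (i : Fin d) : v (σ (k, i)).1 = s := by
    by_contra hne
    exact hk (mem_image.2 ⟨σ (k, i), by simpa using hne, by simp⟩)
  refine hs ?_
  calc d • s = ∑ i, v (σ (k, i)).1 := by simp only [row_const, sum_const, card_univ,
        Fintype.card_fin]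
    _ = 0 := congrFun h k

-- A row meeting the support of `v` meets it at least twice, as a single nonzero entry would be
-- the row sum.
lemma two_mul_card_rows_le_of_adjMulVec_eq_zero {σ : Equiv.Perm (ι × Fin d)} {v : ι → R}
    (h : adjMulVec σ v = 0) :
    2 * #(({x | v x.1 ≠ 0} : Finset (ι × Fin d)).image fun x => (σ.symm x).1) ≤
      hammingNorm v * d := by
  rw [hammingNorm, ← card_filter_fst fun k => v k ≠ 0]
  refine mul_card_image_le_card _ _ fun k hk => ?_
  obtain ⟨x, hx, rfl⟩ := mem_image.1 hk
  obtain ⟨⟨k, i⟩, rfl⟩ := σ.surjective x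
  obtain ⟨i', hi', hne⟩ : ∃ i', i' ≠ i ∧ v (σ (k, i')).1 ≠ 0 := by
    by_contra! others
    refine (mem_filter.1 hx).2 ?_
    calc v (σ (k, i)).1 = ∑ i', v (σ (k, i')).1 :=
          (sum_eq_single i (fun i' _ hi' => others i' hi') (by simp)).symm
      _ = 0 := congrFun h k
  exact one_lt_card.2 ⟨σ (k, i'), by simpa using hne, σ (k, i), by simpa using hx,
    by simpa using hi'⟩

lemma kernelProb_le_choose_mul_pow [NeZero d] {v : ι → R}
    (hv : hammingNorm v * d ≤ Fintype.card ι) :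
    kernelProb d v ≤ (Fintype.card ι).choose (hammingNorm v * d / 2) *
      ((hammingNorm v * d / 2 : ℕ) / Fintype.card ι) ^ (hammingNorm v * d) := by
  set m := hammingNorm v * d
  set slots : Finset (ι × Fin d) := {x | v x.1 ≠ 0}
  have card_slots : #slots = m := card_filter_fst fun k => v k ≠ 0
  have covered : ({σ | adjMulVec σ v = 0} : Finset (Equiv.Perm (ι × Fin d))) ⊆
      (powersetCard (m / 2) univ).biUnion fun H => {σ | ∀ x ∈ slots, σ⁻¹ x ∈ H ×ˢ univ} := by
    intro σ hσ
    have rows_le : 2 * #(slots.image fun x => (σ.symm x).1) ≤ m :=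
      two_mul_card_rows_le_of_adjMulVec_eq_zero (mem_filter.1 hσ).2
    obtain ⟨H, rows_subset, -, card_H⟩ := exists_subsuperset_card_eq
      (subset_univ (slots.image fun x => (σ.symm x).1))
      (show _ ≤ m / 2 by omega) (by rw [card_univ]; omega)
    exact mem_biUnion.2 ⟨H, mem_powersetCard.2 ⟨subset_univ _, card_H⟩, mem_filter.2
      ⟨mem_univ _, fun x hx => mem_product.2 ⟨rows_subset (mem_image_of_mem _ hx), mem_univ _⟩⟩⟩
  have card_mapsTo_le (H : Finset ι) (hH : #H = m / 2) :
      (#{σ : Equiv.Perm (ι × Fin d) | ∀ x ∈ slots, σ⁻¹ x ∈ H ×ˢ univ} : ℝ) ≤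
        ((m / 2 : ℕ) / Fintype.card ι : ℝ) ^ m * (Fintype.card ι * d).factorial := by
    have inv_eq : #{σ : Equiv.Perm (ι × Fin d) | ∀ x ∈ slots, σ⁻¹ x ∈ H ×ˢ univ} =
        #{σ : Equiv.Perm (ι × Fin d) | ∀ x ∈ slots, σ x ∈ H ×ˢ univ} :=
      card_bijective _ inv_involutive.bijective (by simp)
    have count := card_perm_mapsTo_le slots (H ×ˢ univ)
    rwa [card_slots, card_product, hH, card_univ, Fintype.card_prod, Fintype.card_fin,
      Nat.cast_mul, Nat.cast_mul, mul_div_mul_right _ _ (NeZero.ne (d : ℝ)), ← inv_eq] at count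
  rw [kernelProb, div_le_iff₀ (by positivity)]
  calc (#{σ : Equiv.Perm (ι × Fin d) | adjMulVec σ v = 0} : ℝ)
      ≤ ∑ H ∈ powersetCard (m / 2) univ,
          (#{σ : Equiv.Perm (ι × Fin d) | ∀ x ∈ slots, σ⁻¹ x ∈ H ×ˢ univ} : ℝ) := by
        exact_mod_cast (card_le_card covered).trans card_biUnion_le
    _ ≤ ∑ _H ∈ powersetCard (m / 2) (univ : Finset ι),
          ((m / 2 : ℕ) / Fintype.card ι : ℝ) ^ m * (Fintype.card ι * d).factorial :=
        sum_le_sum fun H hH => card_mapsTo_le H (mem_powersetCard.1 hH).2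
    _ = _ := by rw [sum_const, card_powersetCard, card_univ, nsmul_eq_mul, mul_assoc]

lemma choose_mul_div_pow_le {N h L : ℕ} (hL : h ≤ L) :
    (N.choose h : ℝ) * ((h : ℝ) / N) ^ L ≤ Real.exp h * ((h : ℝ) / N) ^ (L - h) := by
  rcases N.eq_zero_or_pos with rfl | hN
  · rcases h.eq_zero_or_pos with rfl | hh
    · simp
    · simp only [Nat.choose_eq_zero_of_lt hh, Nat.cast_zero, zero_mul]; positivity
  have pow_mul_choose_le : ((h : ℝ) / N) ^ h * N.choose h ≤ Real.exp h :=
    calc ((h : ℝ) / N) ^ h * N.choose h ≤ ((h : ℝ) / N) ^ h * (N ^ h / h.factorial) := by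
          gcongr; exact Nat.choose_le_pow_div h N
      _ = (h : ℝ) ^ h / h.factorial := by rw [div_pow]; field_simp
      _ ≤ Real.exp h := Real.pow_div_factorial_le_exp _ (by positivity) _
  calc (N.choose h : ℝ) * ((h : ℝ) / N) ^ L
      = ((h : ℝ) / N) ^ h * N.choose h * ((h : ℝ) / N) ^ (L - h) := by
        rw [mul_right_comm, ← pow_add, Nat.add_sub_cancel' hL, mul_comm]
    _ ≤ _ := by gcongr

lemma kernelProb_le_pow (hd : 3 ≤ d) {v : ι → R} (hv : hammingNorm v * d ≤ Fintype.card ι) :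
    kernelProb d v ≤
      (Real.exp d * √(hammingNorm v * d / Fintype.card ι) ^ 3) ^ hammingNorm v := by
  have : NeZero d := ⟨by omega⟩
  set k := hammingNorm v
  set y : ℝ := k * d / Fintype.card ι
  have half_le : ((k * d / 2 : ℕ) : ℝ) ≤ k * d := by exact_mod_cast Nat.div_le_self (k * d) 2
  have y_le_one : y ≤ 1 := div_le_one_of_le₀ (by exact_mod_cast hv) (by positivity)
  have exponent : 3 * k ≤ 2 * (k * d - k * d / 2) := by
    have : 3 * k ≤ k * d := by rw [mul_comm]; gcongr
    omega
  calc kernelProb d v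
      ≤ Real.exp (k * d / 2 : ℕ) * ((k * d / 2 : ℕ) / Fintype.card ι) ^ (k * d - k * d / 2) :=
        (kernelProb_le_choose_mul_pow hv).trans (choose_mul_div_pow_le (Nat.div_le_self _ _))
    _ ≤ Real.exp (k * d) * y ^ (k * d - k * d / 2) := by
        gcongr
        exact div_le_div_of_nonneg_right half_le (by positivity)
    _ = Real.exp (k * d) * √y ^ (2 * (k * d - k * d / 2)) := by
        rw [pow_mul, Real.sq_sqrt (by positivity)]
    _ ≤ Real.exp (k * d) * √y ^ (3 * k) := by
        gcongr Real.exp (k * d) * ?_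
        exact pow_le_pow_of_le_one (Real.sqrt_nonneg _) (Real.sqrt_le_one.2 y_le_one) exponent
    _ = (Real.exp d * √y ^ 3) ^ k := by rw [Real.exp_nat_mul, mul_pow, ← pow_mul]

end KernelProb

section CharMean

variable {Q : ℕ} [NeZero Q]

variable (d) in
/-- The value at the frequency `τ` of the characteristic function of `adjMulVec σ v`, where `σ`
is a uniformly random matching of half-edges. -/
noncomputable def charMean (τ v : ι → ZMod Q) : ℂ :=
  𝔼 σ : Equiv.Perm (ι × Fin d), ZMod.stdAddChar (τ ⬝ᵥ adjMulVec σ v)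

lemma norm_charMean_le_one (τ v : ι → ZMod Q) : ‖charMean d τ v‖ ≤ 1 := by
  refine (RCLike.norm_expect_le (K := ℂ)).trans ?_
  simp only [AddChar.norm_apply, expect_const univ_nonempty, le_refl]

lemma charMean_comm (τ v : ι → ZMod Q) : charMean d τ v = charMean d v τ := by
  refine Fintype.expect_equiv (Equiv.inv _) _ _ fun σ => ?_
  rw [Equiv.inv_apply, dotProduct_adjMulVec_comm]

lemma sum_charMean (v : ι → ZMod Q) :
    ∑ τ, charMean d τ v = (Q : ℂ) ^ Fintype.card ι * kernelProb d v := by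
  simp only [charMean, Fintype.expect_eq_sum_div_card, ← sum_div]
  rw [sum_comm]
  simp only [sum_stdAddChar_dotProduct, ← sum_filter, sum_const, nsmul_eq_mul, kernelProb,
    Fintype.card_perm, Fintype.card_prod, Fintype.card_fin]
  push_cast
  ring

end CharMean
end Multigraph

/-! ### The frequencies close to a constant -/

section NearConstant

variable {ι R : Type*} [Fintype ι] [DecidableEq ι] [AddCommMonoid R] [Fintype R] [DecidableEq R]
  {d : ℕ}

/-- The constant `exp (d + 1) * d ^ (3 / 2)` of the bound on the probability that the adjacency
matrix of the random `d`-regular multigraph annihilates some sparse vector. -/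
noncomputable def sparseConst (d : ℕ) : ℝ := Real.exp (d + 1) * (d * √d)

lemma sparseConst_nonneg (d : ℕ) : 0 ≤ sparseConst d := by
  unfold sparseConst; positivity

lemma card_hammingNorm_eq_le [Nonempty R] {k : ℕ} (hk : 1 ≤ k) (hkn : k ≤ Fintype.card ι) :
    (#{v : ι → R | hammingNorm v = k} : ℝ) ≤
      (Fintype.card ι * Fintype.card R / k * Real.exp 1) ^ k := by
  have hk0 : (0 : ℝ) < k := by exact_mod_cast hk
  have hkn' : (k : ℝ) ≤ Fintype.card ι := by exact_mod_cast hkn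
  have hR : (1 : ℝ) ≤ Fintype.card R := by exact_mod_cast Fintype.card_pos (α := R)
  have one_le : (1 : ℝ) ≤ Fintype.card ι * Fintype.card R / k := by
    rw [one_le_div hk0]; nlinarith
  have exponent : (Fintype.card ι : ℝ) * Fintype.card R /
      (Fintype.card ι * Fintype.card R / k) = k :=
    div_div_cancel₀ (ne_of_gt (mul_pos (hk0.trans_le hkn') (one_pos.trans_le hR)))
  calc (#{v : ι → R | hammingNorm v = k} : ℝ)
      ≤ #{v : ι → R | hammingDist v (fun _ => 0) ≤ k} := by
        gcongr with v
        exact fun h => (hammingDist_zero_right v).trans_le h.le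
    _ ≤ _ := card_hammingDist_le_le k 0 one_le
    _ = _ := by rw [exponent, mul_pow, ← Real.exp_nat_mul, mul_one]

lemma sum_hammingNorm_eq_kernelProb_le [Nonempty R] (hd : 3 ≤ d) {k : ℕ} (hk : 1 ≤ k)
    (hkn : k * d ≤ Fintype.card ι) :
    ∑ v : ι → R with hammingNorm v = k, kernelProb d v ≤
      (sparseConst d * Fintype.card R * √(k / Fintype.card ι)) ^ k := by
  have k_le : k ≤ Fintype.card ι := (Nat.le_mul_of_pos_right k (by omega)).trans hkn
  have hk0 : (0 : ℝ) < k := by exact_mod_cast hk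
  have hn0 : (0 : ℝ) < Fintype.card ι := hk0.trans_le (by exact_mod_cast k_le)
  have sqrt_pow_three : √((k : ℝ) * d / Fintype.card ι) ^ 3 =
      d * √d * (k / Fintype.card ι * √(k / Fintype.card ι)) := by
    rw [mul_comm (k : ℝ), mul_div_assoc, Real.sqrt_mul (by positivity), mul_pow, pow_succ _ 2,
      pow_succ _ 2, Real.sq_sqrt (by positivity), Real.sq_sqrt (by positivity)]
  calc ∑ v : ι → R with hammingNorm v = k, kernelProb d v
      ≤ #{v : ι → R | hammingNorm v = k} *
          (Real.exp d * √(k * d / Fintype.card ι) ^ 3) ^ k := by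
        rw [← nsmul_eq_mul]
        refine sum_le_card_nsmul _ _ _ fun v hv => ?_
        obtain rfl := (mem_filter.1 hv).2
        exact kernelProb_le_pow hd hkn
    _ ≤ (Fintype.card ι * Fintype.card R / k * Real.exp 1) ^ k *
          (Real.exp d * √(k * d / Fintype.card ι) ^ 3) ^ k := by
        gcongr
        exact card_hammingNorm_eq_le hk k_le
    _ = (sparseConst d * Fintype.card R * √(k / Fintype.card ι)) ^ k := by
        rw [← mul_pow, sqrt_pow_three, sparseConst, Real.exp_add]
        field_simp

lemma mul_sqrt_div_pow_le {c N : ℝ} (hc : 0 ≤ c) {k : ℕ} (hk : 1 ≤ k) (h : c * √(k / N) ≤ 1 / 2) :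
    (c * √(k / N)) ^ k ≤ 2 * c / √N * (k * (1 / 2) ^ k) := by
  obtain ⟨k, rfl⟩ := Nat.exists_eq_add_of_le' hk
  calc (c * √((k + 1 : ℕ) / N)) ^ (k + 1)
      ≤ (1 / 2) ^ k * (c * √((k + 1 : ℕ) / N)) := by
        rw [pow_succ]; gcongr
    _ ≤ (1 / 2) ^ k * (c * ((k + 1 : ℕ) / √N)) := by
        rw [Real.sqrt_div (by positivity)]
        gcongr
        exact Real.sqrt_le_iff.2 ⟨by positivity, le_self_pow₀ (by simp) two_ne_zero⟩
    _ = _ := by rw [pow_succ]; ring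

lemma sum_mul_half_pow_le (s : Finset ℕ) : ∑ k ∈ s, (k : ℝ) * (1 / 2) ^ k ≤ 2 := by
  refine (sum_le_hasSum s (fun _ _ => by positivity)
    (hasSum_coe_mul_geometric_of_norm_lt_one (r := (1 / 2 : ℝ)) (by norm_num))).trans_eq ?_
  norm_num

lemma sum_hammingNorm_mem_Icc_kernelProb_le [Nonempty R] (hd : 3 ≤ d) {K : ℕ}
    (hK : K * d ≤ Fintype.card ι)
    (hsmall : sparseConst d * Fintype.card R * √(K / Fintype.card ι) ≤ 1 / 2) :
    ∑ v : ι → R with hammingNorm v ∈ Icc 1 K, kernelProb d v ≤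
      4 * sparseConst d * Fintype.card R / √(Fintype.card ι) := by
  have c_nonneg : 0 ≤ sparseConst d * Fintype.card R :=
    mul_nonneg (sparseConst_nonneg d) (Nat.cast_nonneg _)
  have fiber_le (k : ℕ) (hk : k ∈ Icc 1 K) : ∑ v : ι → R with hammingNorm v = k, kernelProb d v ≤
      2 * (sparseConst d * Fintype.card R) / √(Fintype.card ι) * (k * (1 / 2) ^ k) := by
    obtain ⟨one_le, le_K⟩ := mem_Icc.1 hk
    refine (sum_hammingNorm_eq_kernelProb_le hd one_le (le_trans (by gcongr) hK)).trans
      (mul_sqrt_div_pow_le c_nonneg one_le (le_trans ?_ hsmall))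
    gcongr
  calc ∑ v : ι → R with hammingNorm v ∈ Icc 1 K, kernelProb d v
      = ∑ k ∈ Icc 1 K, ∑ v : ι → R with hammingNorm v = k, kernelProb d v := by
        rw [← sum_fiberwise_of_maps_to (t := Icc 1 K) fun v hv => (mem_filter.1 hv).2]
        refine sum_congr rfl fun k hk => ?_
        rw [filter_filter]
        refine sum_congr (filter_congr fun v _ => and_iff_right_of_imp ?_) fun _ _ => rfl
        rintro rfl
        exact hk
    _ ≤ ∑ k ∈ Icc 1 K, 2 * (sparseConst d * Fintype.card R) / √(Fintype.card ι) *
          (k * (1 / 2) ^ k) := sum_le_sum fiber_le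
    _ ≤ 2 * (sparseConst d * Fintype.card R) / √(Fintype.card ι) * 2 := by
        rw [← mul_sum]
        gcongr
        exact sum_mul_half_pow_le _
    _ = _ := by ring

lemma sum_nearConstant_erase_zero_kernelProb_le (hd : 3 ≤ d) (hR : ∀ s : R, s ≠ 0 → d • s ≠ 0)
    {K : ℕ} (hK : K * d < Fintype.card ι)
    (hsmall : sparseConst d * Fintype.card R * √(K / Fintype.card ι) ≤ 1 / 2) :
    ∑ v ∈ (nearConstant ι R K).erase 0, kernelProb d v ≤
      4 * sparseConst d * Fintype.card R / √(Fintype.card ι) := by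
  have : Nonempty R := ⟨0⟩
  refine le_trans ?_ (sum_hammingNorm_mem_Icc_kernelProb_le (ι := ι) hd hK.le hsmall)
  rw [← sum_filter_ne_zero]
  refine sum_le_sum_of_subset_of_nonneg (fun v hv => ?_) fun _ _ _ => kernelProb_nonneg _
  obtain ⟨hv, hprob⟩ := mem_filter.1 hv
  rw [mem_filter, mem_Icc]
  obtain ⟨v_ne_zero, v_near⟩ := mem_erase.1 hv
  obtain ⟨s, hs⟩ := mem_nearConstant.1 v_near
  refine ⟨mem_univ _, Nat.one_le_iff_ne_zero.2 (hammingNorm_ne_zero_iff.2 v_ne_zero), ?_⟩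
  rw [← hammingDist_zero_right]
  obtain rfl : s = 0 := by
    by_contra s_ne_zero
    exact hprob (kernelProb_eq_zero (hR s s_ne_zero) (lt_of_le_of_lt (by gcongr) hK))
  exact hs

end NearConstant

/-! ### The frequencies far from constants -/

section FarFrequencies

lemma sum_norm_sq_sum_stdAddChar_mul {Q : ℕ} [NeZero Q] (x : ZMod Q → ℂ) :
    ∑ t, ‖∑ j, (ZMod.stdAddChar (t * j) : ℂ) * x j‖ ^ 2 = Q * ∑ j, ‖x j‖ ^ 2 := by
  have orthogonality (i j : ZMod Q) :
      ∑ t, (ZMod.stdAddChar (t * j) : ℂ) * starRingEnd ℂ (ZMod.stdAddChar (t * i)) =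
        if j = i then (Q : ℂ) else 0 := by
    simp only [← AddChar.map_neg_eq_conj, ← AddChar.map_add_eq_mul, ← sub_eq_add_neg, ← mul_sub,
      AddChar.sum_mulShift _ (ZMod.isPrimitive_stdAddChar Q), sub_eq_zero, ZMod.card,
      Nat.cast_ite, Nat.cast_zero]
  apply Complex.ofReal_injective
  push_cast
  calc ∑ t, (‖∑ j, (ZMod.stdAddChar (t * j) : ℂ) * x j‖ : ℂ) ^ 2
      = ∑ j, ∑ i, (∑ t, (ZMod.stdAddChar (t * j) : ℂ) *
          starRingEnd ℂ (ZMod.stdAddChar (t * i))) * (x j * starRingEnd ℂ (x i)) := by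
        simp only [← Complex.mul_conj', map_sum, map_mul, sum_mul_sum]
        rw [sum_comm]
        refine sum_congr rfl fun j _ => sum_comm.trans (sum_congr rfl fun i _ => ?_)
        simp only [mul_mul_mul_comm, sum_mul]
    _ = (Q : ℂ) * ∑ j, (‖x j‖ : ℂ) ^ 2 := by
        simp only [orthogonality, ite_mul, zero_mul, sum_ite_eq, mem_univ, if_true,
          Complex.mul_conj', mul_sum]

variable {ι : Type*} [Fintype ι] [DecidableEq ι] {d Q : ℕ} [NeZero Q]

lemma norm_charMean_le [Nonempty ι] [NeZero d] (τ v : ι → ZMod Q) :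
    ‖charMean d τ v‖ ≤ (Real.exp 1 * (Fintype.card ι * d)) ^ Q *
      𝔼 θ : ZMod Q → ZMod (Fintype.card (ι × Fin d) + 1),
        ∏ i, ‖∑ j, (ZMod.stdAddChar (τ i * j) : ℂ) *
          (letterFreq v j * ZMod.stdAddChar (θ j))‖ ^ d := by
  let w (x : ι × Fin d) : ZMod Q := v x.1
  have freq_eq (j : ZMod Q) : letterFreq w j = letterFreq v j := by
    rw [letterFreq, letterCount_comp_fst, Fintype.card_prod, Fintype.card_fin, mul_comm,
      Nat.cast_mul, Nat.cast_mul, mul_div_mul_right _ _ (NeZero.ne (d : ℝ)), letterFreq]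
  have bound := norm_expect_perm_prod_le w fun x j => (ZMod.stdAddChar (τ x.1 * j) : ℂ)
  simpa only [charMean, dotProduct_adjMulVec, addChar_map_sum, w, freq_eq, Fintype.card_prod,
    Fintype.card_fin, ZMod.card, Nat.cast_mul, Fintype.prod_prod_type, prod_const, card_univ,
    mul_assoc] using bound

lemma sum_compl_nearConstant_norm_charMean_le [Nonempty ι] (hd : 3 ≤ d) (K : ℕ)
    {v : ι → ZMod Q} {l η : ℝ} (hl : 1 ≤ l) (hη : 0 ≤ η) (hv : chiSq (letterFreq v) ≤ η) :
    ∑ τ ∈ (nearConstant ι (ZMod Q) K)ᶜ, ‖charMean d τ v‖ ≤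
      (Real.exp 1 * (Fintype.card ι * d)) ^ Q *
        ((l ^ K)⁻¹ * Real.exp (Fintype.card ι * (3 * l * (η * √η))) +
          Real.exp (Fintype.card ι * (η - 1 / (18 * l ^ 2)))) := by
  have : NeZero d := ⟨by omega⟩
  let Θ := ZMod Q → ZMod (Fintype.card (ι × Fin d) + 1)
  let z (θ : Θ) (t : ZMod Q) : ℝ :=
    ‖∑ j, (ZMod.stdAddChar (t * j) : ℂ) * (letterFreq v j * ZMod.stdAddChar (θ j))‖
  have norm_term (θ : Θ) (j : ZMod Q) :
      ‖(letterFreq v j : ℂ) * ZMod.stdAddChar (θ j)‖ = letterFreq v j := by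
    rw [norm_mul, AddChar.norm_apply, mul_one, Complex.norm_real,
      Real.norm_of_nonneg (letterFreq_nonneg v j)]
  have z_le_one (θ : Θ) (t : ZMod Q) : z θ t ≤ 1 := by
    refine (norm_sum_le _ _).trans ?_
    simp only [norm_mul _ ((letterFreq v _ : ℂ) * _), AddChar.norm_apply, one_mul, norm_term,
      sum_letterFreq, le_refl]
  have sum_z_sq_le (θ : Θ) : ∑ t, z θ t ^ 2 ≤ 1 + η := by
    have energy := card_mul_sum_sq_eq (sum_letterFreq v)
    rw [ZMod.card] at energy
    simp only [z, sum_norm_sq_sum_stdAddChar_mul, norm_term, energy]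
    gcongr
  calc ∑ τ ∈ (nearConstant ι (ZMod Q) K)ᶜ, ‖charMean d τ v‖
      ≤ ∑ τ ∈ (nearConstant ι (ZMod Q) K)ᶜ, (Real.exp 1 * (Fintype.card ι * d)) ^ Q *
          𝔼 θ : Θ, ∏ i, z θ (τ i) ^ d := sum_le_sum fun τ _ => norm_charMean_le τ v
    _ = (Real.exp 1 * (Fintype.card ι * d)) ^ Q *
          𝔼 θ : Θ, ∑ τ ∈ (nearConstant ι (ZMod Q) K)ᶜ, ∏ i, z θ (τ i) ^ d := by
        rw [← mul_sum, expect_sum_comm]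
    _ ≤ _ := by
        gcongr
        exact expect_le univ_nonempty fun θ _ => sum_compl_nearConstant_prod_pow_le hd K
          (fun _ => norm_nonneg _) (z_le_one θ) hη (sum_z_sq_le θ) hl

end FarFrequencies

/-! ### The sum over types as a sum of kernel probabilities -/

section Types

variable {ι R : Type*} [Fintype ι] [DecidableEq R]

lemma letterCount_uncurry {κ : Type*} [Fintype κ] (a : ι → κ → R) (j : R) :
    letterCount (Function.uncurry a) j = ∑ k, letterCount (a k) j := by
  simp only [letterCount, card_filter, Fintype.sum_prod_type]
  rfl

variable [DecidableEq ι] [Fintype R] [AddCommMonoid R] {d : ℕ}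

lemma card_adjMulVec_eq_zero (v : ι → R) :
    #{σ : Equiv.Perm (ι × Fin d) | adjMulVec σ v = 0} =
      (∏ j, (d * letterCount v j).factorial) *
        #{a : ι → Fin d → R | (∀ k, ∑ i, a k i = 0) ∧
          ∀ j, ∑ k, letterCount (a k) j = d * letterCount v j} := by
  let v' (x : ι × Fin d) : R := v x.1
  have letterCount_v' (j : R) : letterCount v' j = d * letterCount v j := by
    rw [letterCount_comp_fst, Fintype.card_fin]
  have count := sum_perm_comp v' fun w => if ∀ k, ∑ i, w (k, i) = 0 then 1 else 0
  simp only [← card_filter, smul_eq_mul, letterCount_v', filter_filter] at count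
  calc #{σ : Equiv.Perm (ι × Fin d) | adjMulVec σ v = 0}
      = #{σ : Equiv.Perm (ι × Fin d) | ∀ k, ∑ i, (v' ∘ σ) (k, i) = 0} := by
        simp only [funext_iff, adjMulVec, Pi.zero_apply, Function.comp_apply, v']
    _ = _ := count
    _ = _ := by
        congr 1
        refine (card_equiv (Equiv.curry ι (Fin d) R).symm fun a => ?_).symm
        simp only [mem_filter, mem_univ, true_and, funext_iff, letterCount_v',
          Equiv.curry_symm_apply, letterCount_uncurry, Function.uncurry_apply_pair, and_comm]

variable (ι d) in
/-- The contribution of the type `ν` to the normalised count of matrices `a : ι → Fin d → R` with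
zero row sums, i.e. the summand of the local limit estimate. -/
noncomputable def typeWeight (ν : R → ℕ) : ℝ :=
  (Fintype.card ι).factorial * (∏ j, ((d * ν j).factorial : ℝ)) /
      ((∏ j, ((ν j).factorial : ℝ)) * (Fintype.card ι * d).factorial) *
    #{a : ι → Fin d → R | (∀ k, ∑ i, a k i = 0) ∧ ∀ j, ∑ k, letterCount (a k) j = d * ν j}

lemma sum_kernelProb_of_letterCount_eq {ν : R → ℕ} (hν : ∑ j, ν j = Fintype.card ι) :
    ∑ v : ι → R with letterCount v = ν, kernelProb d v = typeWeight ι d ν := by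
  have kernelProb_eq : ∀ v ∈ ({v | letterCount v = ν} : Finset (ι → R)), kernelProb d v =
      (∏ j, ((d * ν j).factorial : ℝ)) * #{a : ι → Fin d → R | (∀ k, ∑ i, a k i = 0) ∧
        ∀ j, ∑ k, letterCount (a k) j = d * ν j} / (Fintype.card ι * d).factorial := by
    intro v hv
    rw [kernelProb, card_adjMulVec_eq_zero, (mem_filter.1 hv).2, Nat.cast_mul, Nat.cast_prod]
  have card_words : (#{v : ι → R | letterCount v = ν} : ℝ) * ∏ j, ((ν j).factorial : ℝ) =
      (Fintype.card ι).factorial := by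
    exact_mod_cast card_letterCount_eq_mul_prod_factorial ν hν
  rw [sum_congr rfl kernelProb_eq, sum_const, nsmul_eq_mul, typeWeight, ← card_words]
  field_simp

lemma finsum_typeWeight (P : (R → ℕ) → Prop) [DecidablePred P] :
    ∑ᶠ ν ∈ {ν : R → ℕ | ∑ j, ν j = Fintype.card ι ∧ P ν}, typeWeight ι d ν =
      ∑ v : ι → R with P (letterCount v), kernelProb d v := by
  let words : Finset (ι → R) := {v | P (letterCount v)}
  have types_eq : {ν : R → ℕ | ∑ j, ν j = Fintype.card ι ∧ P ν} = ↑(words.image letterCount) := by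
    ext ν
    simp only [Set.mem_ofPred_eq, coe_image, Set.mem_image, mem_coe, words, mem_filter, mem_univ,
      true_and]
    constructor
    · rintro ⟨card_eq, hν⟩
      obtain ⟨v, rfl⟩ := exists_letterCount_eq (ι := ι) ν card_eq
      exact ⟨v, hν, rfl⟩
    · rintro ⟨v, hv, rfl⟩
      exact ⟨sum_letterCount v, hv⟩
  rw [types_eq, finsum_mem_coe_finset,
    ← sum_fiberwise_of_maps_to fun v (hv : v ∈ words) => mem_image_of_mem letterCount hv]
  refine sum_congr rfl fun ν hν => ?_
  obtain ⟨v, hv, rfl⟩ := mem_image.1 hν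
  rw [← sum_kernelProb_of_letterCount_eq (sum_letterCount v), filter_filter]
  refine sum_congr (filter_congr fun w _ => ?_) fun _ _ => rfl
  exact ⟨fun h => ⟨h ▸ (mem_filter.1 hv).2, h⟩, And.right⟩

end Types

section Duality

variable {ι : Type*} [Fintype ι] [DecidableEq ι] {d Q : ℕ} [NeZero Q]

lemma pow_mul_sum_kernelProb (G N : Finset (ι → ZMod Q)) :
    (Q : ℂ) ^ Fintype.card ι * ∑ v ∈ G, (kernelProb d v : ℂ) =
      (Q : ℂ) ^ Fintype.card ι * ∑ τ ∈ N, (kernelProb d τ : ℂ) -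
        ∑ τ ∈ N, ∑ v ∈ Gᶜ, charMean d τ v + ∑ v ∈ G, ∑ τ ∈ Nᶜ, charMean d τ v := by
  have expand_near : (Q : ℂ) ^ Fintype.card ι * ∑ τ ∈ N, (kernelProb d τ : ℂ) =
      ∑ τ ∈ N, ∑ v ∈ G, charMean d τ v + ∑ τ ∈ N, ∑ v ∈ Gᶜ, charMean d τ v := by
    rw [mul_sum, ← sum_add_distrib]
    refine sum_congr rfl fun τ _ => ?_
    rw [sum_add_sum_compl, ← sum_charMean]
    exact sum_congr rfl fun v _ => charMean_comm v τ
  rw [expand_near, add_sub_cancel_right, sum_comm, ← sum_add_distrib, mul_sum]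
  refine sum_congr rfl fun v _ => ?_
  rw [sum_add_sum_compl, sum_charMean]

lemma norm_sum_sum_charMean_le (N G : Finset (ι → ZMod Q)) :
    ‖∑ τ ∈ N, ∑ v ∈ G, charMean d τ v‖ ≤ #N * #G := by
  have bound := norm_sum_le_of_le N fun τ _ =>
    norm_sum_le_of_le G fun v _ => norm_charMean_le_one (d := d) τ v
  simpa only [sum_const, nsmul_eq_mul, mul_one] using bound

lemma abs_sum_kernelProb_sub_one_le {G N : Finset (ι → ZMod Q)} (h0 : 0 ∈ N) {F : ℝ} (hF : 0 ≤ F)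
    (hfar : ∀ v ∈ G, ∑ τ ∈ Nᶜ, ‖charMean d τ v‖ ≤ F) :
    |∑ v ∈ G, kernelProb d v - 1| ≤
      ∑ v ∈ N.erase 0, kernelProb d v + #N * #Gᶜ / (Q : ℝ) ^ Fintype.card ι + F := by
  set q : ℝ := (Q : ℝ) ^ Fintype.card ι
  have q_pos : 0 < q := pow_pos (Nat.cast_pos.2 (NeZero.pos Q)) _
  set S := ∑ v ∈ N.erase 0, kernelProb d v
  have S_nonneg : 0 ≤ S := sum_nonneg fun v _ => kernelProb_nonneg v
  have far_le : ‖∑ v ∈ G, ∑ τ ∈ Nᶜ, charMean d τ v‖ ≤ q * F :=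
    calc ‖∑ v ∈ G, ∑ τ ∈ Nᶜ, charMean d τ v‖ ≤ ∑ _v ∈ G, F :=
          norm_sum_le_of_le G fun v hv => (norm_sum_le _ _).trans (hfar v hv)
      _ = #G * F := by rw [sum_const, nsmul_eq_mul]
      _ ≤ q * F := by
          gcongr
          have := card_le_univ G
          rw [Fintype.card_fun, ZMod.card] at this
          simpa only [q, Nat.cast_pow] using (Nat.cast_le (α := ℝ)).2 this
  have identity : ((q * (∑ v ∈ G, kernelProb d v - 1) : ℝ) : ℂ) =
      (q * S : ℝ) - ∑ τ ∈ N, ∑ v ∈ Gᶜ, charMean d τ v + ∑ v ∈ G, ∑ τ ∈ Nᶜ, charMean d τ v := by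
    have := pow_mul_sum_kernelProb (d := d) G N
    rw [← add_sum_erase N (fun τ => (kernelProb d τ : ℂ)) h0, kernelProb_zero,
      Complex.ofReal_one] at this
    push_cast [q, S]
    linear_combination this
  have scaled : q * |∑ v ∈ G, kernelProb d v - 1| ≤ q * S + #N * #Gᶜ + q * F := by
    nth_rw 1 [← abs_of_pos q_pos]
    rw [← abs_mul, ← Real.norm_eq_abs, ← Complex.norm_real, identity]
    refine (norm_add_le _ _).trans (add_le_add ((norm_sub_le _ _).trans (add_le_add ?_ ?_)) far_le)
    · rw [Complex.norm_real, Real.norm_of_nonneg (by positivity)]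
    · exact norm_sum_sum_charMean_le N Gᶜ
  refine le_of_mul_le_mul_left (scaled.trans_eq ?_) q_pos
  field_simp

end Duality

/-! ### The quantitative estimate -/

section Estimate

lemma abs_sum_typical_kernelProb_sub_one_le {ι : Type*} [Fintype ι] [DecidableEq ι] [Nonempty ι]
    {d Q K : ℕ} [NeZero Q] (hd : 3 ≤ d) (hQ : Q.Coprime d) (hK : K * d < Fintype.card ι)
    (hsmall : sparseConst d * Q * √(K / Fintype.card ι) ≤ 1 / 2) {η l : ℝ} (hη : 0 ≤ η)
    (hη' : Q * η ≤ 1) (hl : 1 ≤ l) :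
    |∑ v : ι → ZMod Q with chiSq (letterFreq v) ≤ η, kernelProb d v - 1| ≤
      4 * sparseConst d * Q / √(Fintype.card ι) +
      Q * ((Fintype.card ι * Q) ^ K * Real.exp 1) *
        ((Fintype.card ι + 1) ^ Q * Real.exp (-(Fintype.card ι * η / 6))) +
      (Real.exp 1 * (Fintype.card ι * d)) ^ Q *
        ((l ^ K)⁻¹ * Real.exp (Fintype.card ι * (3 * l * (η * √η))) +
          Real.exp (Fintype.card ι * (η - 1 / (18 * l ^ 2)))) := by
  set n := Fintype.card ι with hn
  have n_pos : 0 < n := Fintype.card_pos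
  have Q_pos : 0 < Q := NeZero.pos Q
  let G : Finset (ι → ZMod Q) := {v | chiSq (letterFreq v) ≤ η}
  have zero_mem : 0 ∈ nearConstant ι (ZMod Q) K :=
    mem_nearConstant.2 ⟨0, (hammingDist_self _).trans_le (Nat.zero_le K)⟩
  have smul_ne_zero (s : ZMod Q) (hs : s ≠ 0) : d • s ≠ 0 := by
    rwa [nsmul_eq_mul, Ne, ((ZMod.isUnit_iff_coprime d Q).2 hQ.symm).mul_right_eq_zero]
  have near_le : ∑ v ∈ (nearConstant ι (ZMod Q) K).erase 0, kernelProb d v ≤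
      4 * sparseConst d * Q / √n := by
    simpa only [ZMod.card] using sum_nearConstant_erase_zero_kernelProb_le hd smul_ne_zero hK
      (by simpa only [ZMod.card] using hsmall)
  have card_near : (#(nearConstant ι (ZMod Q) K) : ℝ) ≤ Q * ((n * Q) ^ K * Real.exp 1) := by
    have := card_nearConstant_le (ι := ι) (κ := ZMod Q) K (l := n * Q)
      (by exact_mod_cast Nat.mul_pos n_pos Q_pos)
    rwa [ZMod.card, ← hn, div_self (by positivity)] at this
  have card_atypical : (#Gᶜ : ℝ) ≤ (n + 1) ^ Q * ((Q : ℝ) ^ n * Real.exp (-(n * η / 6))) := by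
    have := card_lt_chiSq_le (ι := ι) (κ := ZMod Q) (η := η) (by rwa [ZMod.card])
    simpa only [G, compl_filter, not_le, ZMod.card] using this
  refine (abs_sum_kernelProb_sub_one_le zero_mem (by positivity) fun v hv =>
    sum_compl_nearConstant_norm_charMean_le hd K hl hη (mem_filter.1 hv).2).trans ?_
  rw [← hn]
  gcongr
  rw [div_le_iff₀ (by positivity)]
  calc (#(nearConstant ι (ZMod Q) K) : ℝ) * #Gᶜ ≤ Q * ((n * Q) ^ K * Real.exp 1) *
        ((n + 1) ^ Q * ((Q : ℝ) ^ n * Real.exp (-(n * η / 6)))) := by gcongr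
    _ = _ := by ring

variable {n p : ℕ} {b η : ℝ}

lemma atypical_error_le (hL : 1 ≤ Real.log n) (hp : 1 ≤ p) (hpn : p ≤ n) (hb : 240 ≤ b)
    (hη : n * η = p * (b * Real.log n)) :
    p * ((n * p : ℝ) ^ (16 * p) * Real.exp 1) *
      ((n + 1 : ℝ) ^ p * Real.exp (-(n * η / 6))) ≤ 1 / n := by
  set L := Real.log n
  have n_pos : (0 : ℝ) < n := by exact_mod_cast hp.trans hpn
  have exp_L : Real.exp L = n := Real.exp_log n_pos
  have exp_two_L : Real.exp (2 * L) = n * n := by rw [two_mul, Real.exp_add, exp_L]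
  have two_le : (2 : ℝ) ≤ n := by linarith [Real.add_one_le_exp L]
  have one_le_p : (1 : ℝ) ≤ p := by exact_mod_cast hp
  have p_le : (p : ℝ) ≤ Real.exp L := by rw [exp_L]; exact_mod_cast hpn
  have mul_le : (n * p : ℝ) ≤ Real.exp (2 * L) := by rw [exp_two_L]; gcongr
  have succ_le : (n + 1 : ℝ) ≤ Real.exp (2 * L) := by rw [exp_two_L]; nlinarith
  calc p * ((n * p : ℝ) ^ (16 * p) * Real.exp 1) * ((n + 1 : ℝ) ^ p * Real.exp (-(n * η / 6)))
      ≤ Real.exp L * (Real.exp (2 * L) ^ (16 * p) * Real.exp 1) *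
          (Real.exp (2 * L) ^ p * Real.exp (-(n * η / 6))) := by gcongr
    _ = Real.exp (L + (16 * p * (2 * L) + 1) + (p * (2 * L) - p * (b * L) / 6)) := by
        simp only [← Real.exp_nat_mul, ← Real.exp_add, hη]
        push_cast
        ring_nf
    _ ≤ Real.exp (-L) := by
        have L_le : L ≤ p * L := le_mul_of_one_le_left (by linarith) one_le_p
        have : p * L * 240 ≤ p * L * b := by gcongr
        exact Real.exp_le_exp.2 (by nlinarith)
    _ = 1 / n := by rw [Real.exp_neg, exp_L, one_div]

variable {d : ℕ} {x : ℝ}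

lemma cubic_exponent_le (hx : x ^ 4 = n) (hp : 1 ≤ p) (hpx : p ≤ x) (hb : 0 < b)
    (hbx : 9 * b ^ 3 * Real.log n ≤ x) (hη : n * η = p * (b * Real.log n)) :
    n * (3 * x * (η * √η)) ≤ p * Real.log n := by
  have one_le_x : 1 ≤ x := le_trans (by exact_mod_cast hp) hpx
  have n_pos : (0 : ℝ) < n := by rw [← hx]; positivity
  have sqrt_le : √η ≤ 1 / (3 * b * x) := by
    rw [Real.sqrt_le_left (by positivity), div_pow, one_pow, le_div_iff₀ (by positivity)]
    refine le_of_mul_le_mul_left ?_ n_pos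
    calc n * (η * (3 * b * x) ^ 2) = n * η * (3 * b * x) ^ 2 := by ring
      _ = p * (9 * b ^ 3 * Real.log n) * x ^ 2 := by rw [hη]; ring
      _ ≤ x * x * x ^ 2 := by gcongr
      _ = n * 1 := by rw [← hx]; ring
  calc n * (3 * x * (η * √η)) = n * η * (3 * x * √η) := by ring
    _ ≤ p * (b * Real.log n) * (3 * x * (1 / (3 * b * x))) := by rw [hη]; gcongr
    _ = p * Real.log n := by field_simp

lemma far_error_le (hx : x ^ 4 = n) (hp : 1 ≤ p) (hpx : p ≤ x) (hL : 1 ≤ Real.log n) (hb : 0 < b)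
    (hdx : 3 * d ≤ x) (hbx : 9 * b ^ 3 * Real.log n ≤ x) (hbx' : 18 * (3 + b) * Real.log n ≤ x)
    (hη : n * η = p * (b * Real.log n)) :
    (Real.exp 1 * (n * d)) ^ p * ((x ^ (16 * p))⁻¹ * Real.exp (n * (3 * x * (η * √η))) +
      Real.exp (n * (η - 1 / (18 * x ^ 2)))) ≤ 2 / n := by
  have cubic := cubic_exponent_le hx hp hpx hb hbx hη
  set L := Real.log n
  have one_le_p : (1 : ℝ) ≤ p := by exact_mod_cast hp
  have one_le_x : 1 ≤ x := one_le_p.trans hpx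
  have n_pos : (0 : ℝ) < n := by rw [← hx]; positivity
  have x_le_n : x ≤ n := by rw [← hx]; exact le_self_pow₀ one_le_x (by norm_num)
  have exp_L : Real.exp L = n := Real.exp_log n_pos
  have L_le : L ≤ p * L := le_mul_of_one_le_left (by linarith) one_le_p
  have base_le : Real.exp 1 * (n * d) ≤ Real.exp (2 * L) :=
    calc Real.exp 1 * (n * d) ≤ 3 * (n * d) := by gcongr; exact Real.exp_one_lt_three.le
      _ = n * (3 * d) := by ring
      _ ≤ n * n := by gcongr; exact hdx.trans x_le_n
      _ = Real.exp (2 * L) := by rw [two_mul, Real.exp_add, exp_L]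
  have inv_eq : (x ^ (16 * p))⁻¹ = Real.exp (-(4 * p * L)) := by
    rw [show 16 * p = 4 * (4 * p) by ring, pow_mul, hx, ← exp_L, ← Real.exp_nat_mul, ← Real.exp_neg]
    push_cast
    rfl
  have gap : n * (η - 1 / (18 * x ^ 2)) = p * (b * L) - x ^ 2 / 18 := by
    rw [mul_sub, hη, ← hx]
    field_simp
  rw [inv_eq, gap]
  calc (Real.exp 1 * (n * d)) ^ p * (Real.exp (-(4 * p * L)) *
        Real.exp (n * (3 * x * (η * √η))) + Real.exp (p * (b * L) - x ^ 2 / 18))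
      ≤ Real.exp (2 * L) ^ p * (Real.exp (-(4 * p * L)) * Real.exp (p * L) +
          Real.exp (p * (b * L) - x ^ 2 / 18)) := by gcongr
    _ = Real.exp (-(p * L)) + Real.exp (p * (2 + b) * L - x ^ 2 / 18) := by
        rw [← Real.exp_nat_mul, mul_add, ← Real.exp_add, ← Real.exp_add, ← Real.exp_add]
        ring_nf
    _ ≤ Real.exp (-L) + Real.exp (-L) := by
        gcongr
        have : p * (18 * (3 + b) * L) ≤ x * x := by gcongr
        linarith
    _ = 2 / n := by rw [Real.exp_neg, exp_L]; ring

lemma sparseConst_mul_sqrt_le (hx : x ^ 4 = n) (hp : 1 ≤ p) (hpx : p ≤ x)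
    (hAx : 64 * sparseConst d ^ 2 ≤ x) :
    sparseConst d * p * √((16 * p : ℕ) / n) ≤ 1 / 2 := by
  have x_pos : 0 < x := lt_of_lt_of_le (by exact_mod_cast hp) hpx
  refine abs_le_of_sq_le_sq' ?_ (by norm_num) |>.2
  rw [mul_pow, Real.sq_sqrt (by positivity), Nat.cast_mul, ← hx, ← mul_div_assoc,
    div_le_iff₀ (by positivity)]
  calc (sparseConst d * p) ^ 2 * ((16 : ℕ) * p) = 64 * sparseConst d ^ 2 * (p : ℝ) ^ 3 / 4 := by
        push_cast; ring
    _ ≤ x * x ^ 3 / 4 := by gcongr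
    _ = (1 / 2) ^ 2 * x ^ 4 := by ring

lemma mul_radius_le_one (hx : x ^ 4 = n) (hp : 1 ≤ p) (hpx : p ≤ x)
    (hbx : b * Real.log n ≤ x) (hη : n * η = p * (b * Real.log n)) : p * η ≤ 1 := by
  have one_le_x : 1 ≤ x := le_trans (by exact_mod_cast hp) hpx
  have n_pos : (0 : ℝ) < n := by rw [← hx]; positivity
  refine le_of_mul_le_mul_left ?_ n_pos
  calc n * (p * η) = p * p * (b * Real.log n) := by rw [mul_left_comm, hη, mul_assoc]
    _ ≤ p * p * x := by gcongr
    _ ≤ x * x * x := by gcongr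
    _ = x ^ 3 := by ring
    _ ≤ x ^ 4 := pow_le_pow_right₀ one_le_x (by norm_num)
    _ = n * 1 := by rw [hx, mul_one]

lemma near_radius_lt (hx : x ^ 4 = n) (hp : 1 ≤ p) (hpx : p ≤ x) (hdx : 16 * d < x) :
    16 * p * d < n := by
  have one_le_x : 1 ≤ x := le_trans (by exact_mod_cast hp) hpx
  suffices ((16 * p * d : ℕ) : ℝ) < n by exact_mod_cast this
  calc ((16 * p * d : ℕ) : ℝ) = p * (16 * d) := by push_cast; ring
    _ < x * x := mul_lt_mul' hpx hdx (by positivity) (by positivity)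
    _ = x ^ 2 := (sq x).symm
    _ ≤ x ^ 4 := pow_le_pow_right₀ one_le_x (by norm_num)
    _ = n := hx

lemma abs_sum_typical_kernelProb_sub_one_le_div_sqrt [NeZero p] (hd : 3 ≤ d) (hpd : p.Coprime d)
    (hx : x ^ 4 = n) (hpx : p ≤ x) (hL : 1 ≤ Real.log n) (hb : 240 ≤ b) (hdx : 16 * d < x)
    (hAx : 64 * sparseConst d ^ 2 ≤ x) (hbx : 9 * b ^ 3 * Real.log n ≤ x)
    (hbx' : 18 * (3 + b) * Real.log n ≤ x) :
    |∑ v : Fin n → ZMod p with chiSq (letterFreq v) ≤ p * (b * Real.log n / n),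
      kernelProb d v - 1| ≤ (4 * sparseConst d + 3) * p / √n := by
  have hp : 1 ≤ p := NeZero.one_le
  have one_le_p : (1 : ℝ) ≤ p := by exact_mod_cast hp
  have one_le_x : 1 ≤ x := one_le_p.trans hpx
  have n_pos : (0 : ℝ) < n := by rw [← hx]; positivity
  have x_le_n : x ≤ n := by rw [← hx]; exact le_self_pow₀ one_le_x (by norm_num)
  have one_le_n : (1 : ℝ) ≤ n := one_le_x.trans x_le_n
  have : Nonempty (Fin n) := ⟨0, by exact_mod_cast n_pos⟩
  set η : ℝ := p * (b * Real.log n / n)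
  have hη : n * η = p * (b * Real.log n) := by simp only [η]; field_simp
  have hη' : p * η ≤ 1 := mul_radius_le_one hx hp hpx (by nlinarith) hη
  have hK : 16 * p * d < n := near_radius_lt hx hp hpx hdx
  have explicit := abs_sum_typical_kernelProb_sub_one_le (ι := Fin n) hd hpd
    (by rwa [Fintype.card_fin])
    (by rw [Fintype.card_fin]; exact sparseConst_mul_sqrt_le hx hp hpx hAx)
    (show 0 ≤ η by positivity) hη' one_le_x
  rw [Fintype.card_fin] at explicit
  calc _ ≤ 4 * sparseConst d * p / √n + 1 / n + 2 / n := by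
        refine explicit.trans (add_le_add (add_le_add_right ?_ _) ?_)
        · exact atypical_error_le hL hp (by exact_mod_cast hpx.trans x_le_n) hb hη
        · exact far_error_le hx hp hpx hL (by linarith) (by linarith) hbx hbx' hη
    _ = (4 * sparseConst d * p) / √n + 3 * 1 / n := by ring
    _ ≤ (4 * sparseConst d * p) / √n + 3 * p / √n := by
        gcongr
        exact Real.sqrt_le_iff.2 ⟨n_pos.le, le_self_pow₀ one_le_n two_ne_zero⟩
    _ = (4 * sparseConst d + 3) * p / √n := by ring

end Estimate

/-! ### From the quantitative estimate to the theorem -/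

section Asymptotics

open Filter in
lemma eventually_mul_log_le_rpow (M : ℝ) {r : ℝ} (hr : 0 < r) :
    ∀ᶠ n : ℕ in atTop, M * Real.log n ≤ (n : ℝ) ^ r := by
  have small := ((isLittleO_log_rpow_atTop hr).const_mul_left M).bound one_pos
  filter_upwards [tendsto_natCast_atTop_atTop.eventually small] with n hn
  rw [one_mul, Real.norm_of_nonneg (r := (n : ℝ) ^ r) (by positivity)] at hn
  exact (Real.le_norm_self _).trans hn

lemma one_le_log_natCast {n : ℕ} (hn : 3 ≤ n) : 1 ≤ Real.log n := by
  have : (3 : ℝ) ≤ n := by exact_mod_cast hn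
  rw [Real.le_log_iff_exp_le (by linarith)]
  exact Real.exp_one_lt_three.le.trans this

/-- The factor by which `n ^ (1 / 4)` has to exceed `log n` for the error terms to be small. -/
noncomputable def sizeConst (d : ℕ) (b : ℝ) : ℝ :=
  16 * d + 1 + 64 * sparseConst d ^ 2 + 9 * b ^ 3 + 18 * (3 + b)

lemma abs_sum_typical_kernelProb_sub_one_le_of_sizeConst {n p d : ℕ} [NeZero p] {b : ℝ}
    (hd : 3 ≤ d) (hpd : p.Coprime d) (hb : 240 ≤ b) (hn : 3 ≤ n)
    (hsize : sizeConst d b * Real.log n ≤ (n : ℝ) ^ ((1 : ℝ) / 4))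
    (hpn : (p : ℝ) ≤ (n : ℝ) ^ ((1 : ℝ) / 4)) :
    |∑ v : Fin n → ZMod p with chiSq (letterFreq v) ≤ p * (b * Real.log n / n),
      kernelProb d v - 1| ≤ (4 * sparseConst d + 3) * p / √n := by
  have hL : 1 ≤ Real.log n := one_le_log_natCast hn
  have fourth_power : ((n : ℝ) ^ ((1 : ℝ) / 4)) ^ 4 = n := by
    rw [← Real.rpow_mul_natCast (by positivity)]
    norm_num
  set x := (n : ℝ) ^ ((1 : ℝ) / 4)
  have b_pos : 0 < b := by linarith
  have b_cubed_pos : 0 < b ^ 3 := pow_pos b_pos 3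
  have sparseConst_sq_nonneg := sq_nonneg (sparseConst d)
  have size_le : sizeConst d b ≤ x := by
    refine (le_mul_of_one_le_right ?_ hL).trans hsize
    unfold sizeConst; positivity
  have le_of_le {M : ℝ} (hM : M ≤ sizeConst d b) : M * Real.log n ≤ x :=
    (by gcongr : M * Real.log n ≤ sizeConst d b * Real.log n).trans hsize
  unfold sizeConst at size_le le_of_le
  exact abs_sum_typical_kernelProb_sub_one_le_div_sqrt hd hpd fourth_power hpn hL hb
    (by linarith) (by linarith) (le_of_le (by linarith)) (le_of_le (by linarith))

end Asymptotics

section TypicalTypes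

variable {n d p : ℕ} [NeZero p]

lemma finsum_equidistributed_eq (ε : ℝ) :
    (∑ᶠ ν ∈ {ν : ZMod p → ℕ | (∑ j, ν j) = n ∧
        (∑ j : ZMod p, ((ν j : ℝ) / n - 1 / p) ^ 2) ≤ ε},
      ((n.factorial : ℝ) * ∏ j : ZMod p, ((d * ν j).factorial : ℝ)) /
          ((∏ j : ZMod p, ((ν j).factorial : ℝ)) * ((n * d).factorial : ℝ)) *
        ((Finset.univ.filter (fun a : Fin n → Fin d → ZMod p =>
          (∀ k, ∑ i, a k i = 0) ∧
          (∀ j : ZMod p, (∑ k, Phi (a k) j) = d * ν j))).card : ℝ)) =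
      ∑ v : Fin n → ZMod p with chiSq (letterFreq v) ≤ p * ε, kernelProb d v := by
  have p_pos : (0 : ℝ) < p := Nat.cast_pos.2 (NeZero.pos p)
  have sum_words := finsum_typeWeight (ι := Fin n) (d := d) fun ν : ZMod p → ℕ =>
    ∑ j, ((ν j : ℝ) / n - 1 / p) ^ 2 ≤ ε
  simp only [typeWeight, Fintype.card_fin] at sum_words
  simp only [chiSq, letterFreq, ZMod.card, Fintype.card_fin, mul_le_mul_iff_right₀ p_pos]
  convert sum_words
  rfl

end TypicalTypes

lemma mul_div_sqrt_le {C q L N : ℝ} (hC : 0 ≤ C) (hq : 1 ≤ q) (hL : 1 ≤ L) :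
    C * q / √N ≤ C * q ^ 2 * L ^ ((3 : ℝ) / 2) / √N := by
  refine div_le_div_of_nonneg_right ?_ (Real.sqrt_nonneg N)
  calc C * q = C * q * 1 := (mul_one _).symm
    _ ≤ C * q ^ 2 * L ^ ((3 : ℝ) / 2) := by
        gcongr
        · exact le_self_pow₀ hq two_ne_zero
        · exact Real.one_le_rpow hL (by norm_num)

end DirectedLCLT

open DirectedLCLT in
theorem directed_lclt_estimate_general (d : ℕ) (hd : 3 ≤ d) :
    ∃ b₀ : ℝ, 0 < b₀ ∧ ∀ b : ℝ, b₀ ≤ b →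
      ∃ C c : ℝ, ∃ N : ℕ, 0 < C ∧ 0 < c ∧ 0 < N ∧
        ∀ n : ℕ, N ≤ n → ∀ (p : ℕ) [NeZero p], Nat.gcd p d = 1 →
          (p : ℝ) ≤ c * (n : ℝ) ^ ((1 : ℝ) / 4) →
          |(∑ᶠ ν ∈ {ν : ZMod p → ℕ | (∑ j, ν j) = n ∧
                (∑ j : ZMod p, ((ν j : ℝ) / n - 1 / p) ^ 2) ≤ b * Real.log n / n},
              ((n.factorial : ℝ) * ∏ j : ZMod p, ((d * ν j).factorial : ℝ)) /
                  ((∏ j : ZMod p, ((ν j).factorial : ℝ)) * ((n * d).factorial : ℝ)) *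
                ((Finset.univ.filter (fun a : Fin n → Fin d → ZMod p =>
                  (∀ k, ∑ i, a k i = 0) ∧
                  (∀ j : ZMod p, (∑ k, Phi (a k) j) = d * ν j))).card : ℝ))
            - 1| ≤ C * (p : ℝ) / Real.sqrt n := by
  refine ⟨240, by norm_num, fun b hb => ?_⟩
  obtain ⟨N, hN⟩ := Filter.eventually_atTop.1
    (eventually_mul_log_le_rpow (sizeConst d b) (show (0 : ℝ) < 1 / 4 by norm_num))
  have C_pos : 0 < 4 * sparseConst d + 3 := by linarith [sparseConst_nonneg d]
  refine ⟨4 * sparseConst d + 3, 1, max N 3, C_pos, one_pos, by positivity, ?_⟩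
  intro n hn p _ hpd hpn
  rw [finsum_equidistributed_eq]
  exact abs_sum_typical_kernelProb_sub_one_le_of_sizeConst hd hpd hb (le_of_max_le_right hn)
    (hN n (le_of_max_le_left hn)) (by rwa [one_mul] at hpn)

/-- Local CLT estimate (directed case): for `d ≥ 3` there is `𝔟₀ > 0` so that for every
`𝔟 ≥ 𝔟₀` there are `C, c, N > 0` such that for all `n ≥ N` and primes `p` with
`gcd(p,d) = 1` and `p ≤ c n^{1/4}`, the sum over equidistributed `p`-tuples
`(n_0,…,n_{p-1})` (summing to `n`, with `Σ_j (n_j/n - 1/p)² ≤ 𝔟 ln n / n`) of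
`(n! ∏_j (d n_j)!)/((∏_j n_j!)(nd)!)` times the number of `n`-tuples in `Z_{d,p}`
with counting-vector sum `(d n_0,…,d n_{p-1})`, is within `C p² (ln n)^{3/2}/√n` of `1`. -/
theorem directed_lclt_estimate (d : ℕ) (hd : 3 ≤ d) :
    ∃ b₀ : ℝ, 0 < b₀ ∧ ∀ b : ℝ, b₀ ≤ b →
      ∃ C c : ℝ, ∃ N : ℕ, 0 < C ∧ 0 < c ∧ 0 < N ∧
        ∀ n : ℕ, N ≤ n → ∀ (p : ℕ) [Fact p.Prime], Nat.gcd p d = 1 →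
          (p : ℝ) ≤ c * (n : ℝ) ^ ((1 : ℝ) / 4) →
          |(∑ᶠ ν ∈ {ν : ZMod p → ℕ | (∑ j, ν j) = n ∧
                (∑ j : ZMod p, ((ν j : ℝ) / n - 1 / p) ^ 2) ≤ b * Real.log n / n},
              ((n.factorial : ℝ) * ∏ j : ZMod p, ((d * ν j).factorial : ℝ)) /
                  ((∏ j : ZMod p, ((ν j).factorial : ℝ)) * ((n * d).factorial : ℝ)) *
                ((Finset.univ.filter (fun a : Fin n → Fin d → ZMod p =>
                  (∀ k, ∑ i, a k i = 0) ∧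
                  (∀ j : ZMod p, (∑ k, Phi (a k) j) = d * ν j))).card : ℝ))
            - 1| ≤ C * (p : ℝ) ^ 2 * (Real.log n) ^ ((3 : ℝ) / 2) / Real.sqrt n := by
  obtain ⟨b₀, hb₀, general⟩ := directed_lclt_estimate_general d hd
  refine ⟨b₀, hb₀, fun b hb => ?_⟩
  obtain ⟨C, c, N, hC, hc, -, bound⟩ := general b hb
  exact ⟨C, c, max N 3, hC, hc, by positivity, fun n hn p _ hpd hpn =>
    (bound n (le_of_max_le_left hn) p hpd hpn).trans <| DirectedLCLT.mul_div_sqrt_le hC.le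
      (by exact_mod_cast NeZero.one_le) (DirectedLCLT.one_le_log_natCast (le_of_max_le_right hn))⟩
end

section
/- Let d ≥ 3 be a fixed integer. There exists 𝔟₀ > 0 such that for every 𝔟 ≥ 𝔟₀ there exist constants C, c, N > 0 with the following property: for all n ≥ N and all primes p with gcd(p,d) = 1 and p ≤ c·n^{(d−2)/(2d)}, letting 𝒩_𝔟 be the set of (n_0,…,n_{p−1}) ∈ ℤ_{≥0}^p with n_0+⋯+n_{p−1} = n which are neither equal to (n,0,…,0) nor satisfy Σ_{j=0}^{p−1} (n_j/n − 1/p)² ≤ 𝔟·(ln n)/n, one has Σ_{(n_0,…,n_{p−1}) ∈ 𝒩_𝔟} (n!·∏_{j=0}^{p−1}(d·n_j)!)/((∏_{j=0}^{p−1} n_j!)·(nd)!) · #{(a¹,…,aⁿ) ∈ (Z_{d,p})^n : Σ_{k=1}^n Φ(aᵏ) = (dn_0, dn_1, …, dn_{p−1})} ≤ C·p²/n^{d−2}. -/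
open Finset

/-!
Write `x = ν / n`. The saddle-point inequality `walkCount * ∏ w j ^ (d ν j) ≤ Z(w) ^ n`, where
`Z` is the generating function of `Z_{d,p}`, applied at `w = x ^ (1 - 1/d)` bounds the term of
`ν` by `Z(w) ^ n`, up to a factor `(C n)^p`. By AM-GM, `Z(w) ≤ 1`, and the deficit in AM-GM
controls how far `√x` is from being symmetric under reflections `u ↦ c - u`. If the deficit is
small, composing reflections shows that most translations, weighted by `x`, almost preserve
`√x`. The almost periods then form a subgroup of a group of prime order, so `x` is either
concentrated at one point or almost uniform.

The almost uniform `ν` are excluded from the sum, and concentration at a point `a ≠ 0` is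
impossible, as a step with all entries `a` has sum `d a ≠ 0`. For `ν` near `(n, 0, …, 0)`, let
`M = n - ν 0`. A saddle point of total weight `√(M/n)` off zero bounds the sum over the layer
`M` by `(K p (M/n)^{(d-2)/2})^M`. The layer `M = 1` contributes nothing, since a walk forces
`d ∑ ν j * j = 0` in `F_p`, and the sum over `M ≥ 2` is dominated by a convergent series with
first term of order `p² / n^{d-2}`.
-/

theorem exists_le_of_sum_mul_le {ι : Type*} [Fintype ι] {w F : ι → ℝ} {η : ℝ}
    (hw : ∀ i, 0 ≤ w i) (hw1 : ∑ i, w i = 1) (h : ∑ i, w i * F i ≤ η) : ∃ i, F i ≤ η := by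
  obtain ⟨i, -, hi⟩ := (concaveOn_id convex_univ).exists_le_of_centerMass
    (t := univ) (w := w) (p := F) (fun i _ => hw i) (by simp [hw1]) (fun _ _ => Set.mem_univ _)
  refine ⟨i, hi.trans (le_trans (le_of_eq ?_) h)⟩
  simp [centerMass_eq_of_sum_1 _ _ hw1]

theorem card_mul_prod_rpow_le_sum_sub_sq {ι : Type*} [Fintype ι] {z : ι → ℝ}
    (hz : ∀ k, 0 ≤ z k) {i j : ι} (hij : i ≠ j) :
    (Fintype.card ι : ℝ) * ∏ k, z k ^ (Fintype.card ι : ℝ)⁻¹ ≤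
      ∑ k, z k - (√(z i) - √(z j)) ^ 2 := by
  classical
  set N : ℝ := (Fintype.card ι : ℝ)
  have hN : 0 < N := Nat.cast_pos.2 (Fintype.card_pos_iff.2 ⟨i⟩)
  -- AM-GM is applied after replacing both `z i` and `z j` by their geometric mean.
  let y : ι → ℝ := fun k => if k = i ∨ k = j then √(z i) * √(z j) else z k
  have hy : ∀ k, 0 ≤ y k := fun k => by
    simp only [y]; split_ifs
    exacts [by positivity, hz k]
  have hyi : y i = √(z i) * √(z j) := if_pos (Or.inl rfl)
  have hyj : y j = √(z i) * √(z j) := if_pos (Or.inr rfl)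
  have hy_rest : ∀ k ∈ (univ.erase i).erase j, y k = z k := fun k hk =>
    if_neg (by simp only [mem_erase] at hk; tauto)
  have hj : j ∈ univ.erase i := mem_erase.2 ⟨hij.symm, mem_univ j⟩
  have hprod : ∏ k, y k = ∏ k, z k := by
    rw [← mul_prod_erase univ y (mem_univ i), ← mul_prod_erase univ z (mem_univ i),
      ← mul_prod_erase _ y hj, ← mul_prod_erase _ z hj, prod_congr rfl hy_rest, ← mul_assoc,
      ← mul_assoc, hyi, hyj, mul_mul_mul_comm, Real.mul_self_sqrt (hz i),
      Real.mul_self_sqrt (hz j)]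
  have hsum : ∑ k, y k = ∑ k, z k - (√(z i) - √(z j)) ^ 2 := by
    rw [← add_sum_erase univ y (mem_univ i), ← add_sum_erase univ z (mem_univ i),
      ← add_sum_erase _ y hj, ← add_sum_erase _ z hj, sum_congr rfl hy_rest, hyi, hyj, sub_sq,
      Real.sq_sqrt (hz i), Real.sq_sqrt (hz j)]
    ring
  have hamgm : ∏ k, y k ^ N⁻¹ ≤ ∑ k, N⁻¹ * y k :=
    Real.geom_mean_le_arith_mean_weighted univ (fun _ => N⁻¹) y (fun _ _ => by positivity)
      (by simp [N, hN.ne']) fun k _ => hy k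
  rw [Real.finsetProd_rpow _ _ fun k _ => hz k, ← hprod, ← Real.finsetProd_rpow _ _ fun k _ => hy k]
  rw [← mul_sum, hsum, le_inv_mul_iff₀ hN] at hamgm
  exact hamgm

theorem sum_sub_sq_sq_le {ι : Type*} [Fintype ι] {x : ι → ℝ} (hx : ∀ u, 0 ≤ x u) {s θ : ℝ}
    (hθ : ∑ u, (√(x u) - s) ^ 2 ≤ θ) :
    ∑ u, (x u - s ^ 2) ^ 2 ≤ 2 * θ ^ 2 + 8 * s ^ 2 * θ := by
  have hθ0 : 0 ≤ θ := (sum_nonneg fun _ _ => sq_nonneg _).trans hθ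
  have hterm : ∀ u, (x u - s ^ 2) ^ 2 ≤ (2 * θ + 8 * s ^ 2) * (√(x u) - s) ^ 2 := fun u => by
    have hu : (√(x u) - s) ^ 2 ≤ θ :=
      (single_le_sum (f := fun u => (√(x u) - s) ^ 2) (fun _ _ => sq_nonneg _) (mem_univ u)).trans
        hθ
    have hfactor : x u - s ^ 2 = (√(x u) + s) * (√(x u) - s) := by
      rw [← sq_sub_sq, Real.sq_sqrt (hx u)]
    rw [hfactor, mul_pow]
    gcongr
    linarith [add_sq_le (a := √(x u) - s) (b := 2 * s),
      congrArg (· ^ 2) (show √(x u) - s + 2 * s = √(x u) + s by ring)]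
  calc ∑ u, (x u - s ^ 2) ^ 2 ≤ (2 * θ + 8 * s ^ 2) * ∑ u, (√(x u) - s) ^ 2 := by
        rw [mul_sum]
        exact sum_le_sum fun u _ => hterm u
    _ ≤ (2 * θ + 8 * s ^ 2) * θ := by gcongr
    _ = 2 * θ ^ 2 + 8 * s ^ 2 * θ := by ring

section AlmostPeriods

variable {G : Type*} [AddCommGroup G] [Fintype G]

/-- The squared `ℓ²` distance between `r` and its translate by `t`. -/
noncomputable def shiftDist (r : G → ℝ) (t : G) : ℝ := ∑ u, (r u - r (u + t)) ^ 2

/-- The squared `ℓ²` distance between `r` and its reflection `u ↦ r (s - u)`. -/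
noncomputable def reflDist (r : G → ℝ) (s : G) : ℝ := ∑ u, (r u - r (s - u)) ^ 2

theorem shiftDist_nonneg (r : G → ℝ) (t : G) : 0 ≤ shiftDist r t :=
  sum_nonneg fun _ _ => sq_nonneg _

theorem shiftDist_zero (r : G → ℝ) : shiftDist r 0 = 0 := by simp [shiftDist]

theorem shiftDist_neg (r : G → ℝ) (t : G) : shiftDist r (-t) = shiftDist r t := by
  rw [shiftDist, ← Equiv.sum_comp (Equiv.addRight t)]
  simp only [Equiv.coe_addRight, add_neg_cancel_right, sub_sq_comm, shiftDist]

theorem shiftDist_add_le (r : G → ℝ) (s t : G) :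
    shiftDist r (s + t) ≤ 2 * shiftDist r s + 2 * shiftDist r t := by
  have ht : shiftDist r t = ∑ u, (r (u + s) - r (u + (s + t))) ^ 2 := by
    rw [shiftDist, ← Equiv.sum_comp (Equiv.addRight s)]
    simp only [Equiv.coe_addRight, add_assoc]
  rw [ht, shiftDist, shiftDist, mul_sum, mul_sum, ← sum_add_distrib]
  gcongr with u
  linarith [add_sq_le (a := r u - r (u + s)) (b := r (u + s) - r (u + (s + t))),
    congrArg (· ^ 2) (sub_add_sub_cancel (r u) (r (u + s)) (r (u + (s + t))))]

theorem shiftDist_sub_le_reflDist (r : G → ℝ) (c α β : G) :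
    shiftDist r (α - β) ≤ 2 * reflDist r (c - α) + 2 * reflDist r (c - β) := by
  have hβ : reflDist r (c - β) = ∑ u, (r (c - α - u) - r (u + (α - β))) ^ 2 := by
    rw [reflDist, ← Equiv.sum_comp (Equiv.subLeft (c - α))]
    refine sum_congr rfl fun u _ => ?_
    rw [Equiv.subLeft_apply, show c - β - (c - α - u) = u + (α - β) by abel]
  rw [hβ, reflDist, shiftDist, mul_sum, mul_sum, ← sum_add_distrib]
  gcongr with u
  linarith [add_sq_le (a := r u - r (c - α - u)) (b := r (c - α - u) - r (u + (α - β))),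
    congrArg (· ^ 2) (sub_add_sub_cancel (r u) (r (c - α - u)) (r (u + (α - β))))]

theorem sum_shiftDist (r : G → ℝ) :
    ∑ t, shiftDist r t = 2 * Fintype.card G * ∑ u, r u ^ 2 - 2 * (∑ u, r u) ^ 2 := by
  have hshift : ∀ (u : G) (f : G → ℝ), ∑ t, f (u + t) = ∑ t, f t := fun u f =>
    Equiv.sum_comp (Equiv.addLeft u) f
  simp only [shiftDist]
  rw [sum_comm]
  simp only [sub_sq, sum_add_distrib, sum_sub_distrib, ← mul_sum, hshift, ← sum_mul,
    hshift _ (fun t => r t ^ 2), sum_const, card_univ, nsmul_eq_mul]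
  ring

theorem exists_sum_mul_shiftDist_le {r : G → ℝ} (hr : ∑ u, r u ^ 2 = 1) {η : ℝ} {c : G}
    (hc : ∑ α, r α ^ 2 * reflDist r (c - α) ≤ η) :
    ∃ a, ∑ α, r α ^ 2 * shiftDist r (α - a) ≤ 4 * η := by
  obtain ⟨a, ha⟩ := exists_le_of_sum_mul_le (fun α => sq_nonneg (r α)) hr hc
  refine ⟨a, ?_⟩
  calc ∑ α, r α ^ 2 * shiftDist r (α - a)
      ≤ ∑ α, r α ^ 2 * (2 * reflDist r (c - α) + 2 * η) := by
        gcongr with α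
        linarith [shiftDist_sub_le_reflDist r c α a]
    _ = 2 * ∑ α, r α ^ 2 * reflDist r (c - α) + 2 * η * ∑ α, r α ^ 2 := by
        simp only [mul_add, sum_add_distrib, mul_left_comm _ (2 : ℝ), ← mul_sum, ← sum_mul]
        ring
    _ ≤ 4 * η := by rw [hr]; linarith

theorem sum_sq_filter_shiftDist_le {r : G → ℝ} {δ : ℝ} (hδ : 0 < δ) {a : G}
    (ha : ∑ α, r α ^ 2 * shiftDist r (α - a) ≤ δ) :
    ∑ α with ¬ shiftDist r (α - a) ≤ 8 * δ, r α ^ 2 ≤ 1 / 8 := by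
  have hmarkov : (∑ α with ¬ shiftDist r (α - a) ≤ 8 * δ, r α ^ 2) * (8 * δ) ≤ δ := by
    rw [sum_mul]
    calc ∑ α with ¬ shiftDist r (α - a) ≤ 8 * δ, r α ^ 2 * (8 * δ)
        ≤ ∑ α with ¬ shiftDist r (α - a) ≤ 8 * δ, r α ^ 2 * shiftDist r (α - a) := by
          gcongr with α hα
          exact (not_le.1 (mem_filter.1 hα).2).le
      _ ≤ ∑ α, r α ^ 2 * shiftDist r (α - a) :=
          sum_le_sum_of_subset_of_nonneg (subset_univ _) fun _ _ _ =>
            mul_nonneg (sq_nonneg _) (shiftDist_nonneg _ _)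
      _ ≤ δ := ha
  nlinarith

-- The set of near-translates of `a` carries mass at least `7/8` of `r²`, so it meets its own
-- translate by any `t` that moves `r` little; hence `t` is a difference of two small shifts.
theorem shiftDist_le_of_le_quarter {r : G → ℝ} (hr : ∑ u, r u ^ 2 = 1) {δ : ℝ} (hδ : 0 < δ)
    {a : G} (ha : ∑ α, r α ^ 2 * shiftDist r (α - a) ≤ δ) {t : G} (ht : shiftDist r t ≤ 1 / 4) :
    shiftDist r t ≤ 32 * δ := by
  classical
  let E : Finset G := univ.filter fun α => shiftDist r (α - a) ≤ 8 * δ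
  suffices h : ∃ α ∈ E, α + t ∈ E by
    obtain ⟨α, hα, hαt⟩ := h
    have hsplit : t = (α + t - a) + -(α - a) := by abel
    rw [hsplit]
    linarith [shiftDist_add_le r (α + t - a) (-(α - a)), shiftDist_neg r (α - a),
      (mem_filter.1 hα).2, (mem_filter.1 hαt).2]
  by_contra! hdisj
  have hE : 7 / 8 ≤ ∑ α ∈ E, r α ^ 2 := by
    linarith [sum_sq_filter_shiftDist_le hδ ha,
      sum_filter_add_sum_filter_not univ (fun α => shiftDist r (α - a) ≤ 8 * δ) (r · ^ 2)]
  have htranslate : ∑ α ∈ E, r (α + t) ^ 2 ≤ 1 / 8 := by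
    have hmap : ∑ α ∈ E, r (α + t) ^ 2 = ∑ u ∈ E.map (addRightEmbedding t), r u ^ 2 := by simp
    rw [hmap]
    refine (sum_le_sum_of_subset_of_nonneg (fun u hu => ?_) fun _ _ _ => sq_nonneg _).trans
      (sum_sq_filter_shiftDist_le hδ ha)
    obtain ⟨α, hα, rfl⟩ := mem_map.1 hu
    simpa [E] using hdisj α hα
  have hdist : ∑ α ∈ E, (r α - r (α + t)) ^ 2 ≤ shiftDist r t :=
    sum_le_univ_sum_of_nonneg fun _ => sq_nonneg _
  have hmass : ∑ α ∈ E, r α ^ 2 ≤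
      2 * ∑ α ∈ E, r (α + t) ^ 2 + 2 * ∑ α ∈ E, (r α - r (α + t)) ^ 2 := by
    rw [mul_sum, mul_sum, ← sum_add_distrib]
    gcongr with α
    linarith [add_sq_le (a := r (α + t)) (b := r α - r (α + t)),
      congrArg (· ^ 2) (add_sub_cancel (r (α + t)) (r α))]
  linarith

theorem one_sub_sq_le_or_forall_shiftDist_le [Fact (Nat.card G).Prime] {r : G → ℝ}
    (hr : ∑ u, r u ^ 2 = 1) {δ : ℝ} (hδ : 0 < δ) (hδ_le : δ ≤ 1 / 512) {a : G}
    (ha : ∑ α, r α ^ 2 * shiftDist r (α - a) ≤ δ) :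
    1 - r a ^ 2 ≤ 4 * δ ∨ ∀ t, shiftDist r t ≤ 32 * δ := by
  classical
  -- Closed under addition because `shiftDist r` takes no value in `(32 δ, 1 / 4]`.
  let H : AddSubgroup G :=
    { carrier := {t | shiftDist r t ≤ 32 * δ}
      zero_mem' := by simp only [Set.mem_ofPred_eq, shiftDist_zero]; positivity
      add_mem' := fun {s t} (hs : shiftDist r s ≤ _) (ht : shiftDist r t ≤ _) =>
        shiftDist_le_of_le_quarter hr hδ ha (by linarith [shiftDist_add_le r s t])
      neg_mem' := fun {t} (ht : shiftDist r t ≤ _) => (shiftDist_neg r t).trans_le ht }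
  rcases H.eq_bot_or_eq_top_of_prime_card with hH | hH
  · left
    have hfar : ∀ t ≠ 0, 1 / 4 ≤ shiftDist r t := fun t ht => by
      by_contra! hlt
      exact ht (by simpa [hH] using
        (show t ∈ H from shiftDist_le_of_le_quarter hr hδ ha hlt.le))
    have hoff : (∑ α ∈ {a}ᶜ, r α ^ 2) * (1 / 4) ≤ δ := by
      rw [sum_mul]
      calc ∑ α ∈ {a}ᶜ, r α ^ 2 * (1 / 4) ≤ ∑ α ∈ {a}ᶜ, r α ^ 2 * shiftDist r (α - a) := by
            gcongr with α hα
            exact hfar _ (sub_ne_zero.2 (by simpa using hα))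
        _ ≤ ∑ α, r α ^ 2 * shiftDist r (α - a) := sum_le_univ_sum_of_nonneg fun _ =>
            mul_nonneg (sq_nonneg _) (shiftDist_nonneg _ _)
        _ ≤ δ := ha
    linarith [Fintype.sum_eq_add_sum_compl a (r · ^ 2)]
  · exact .inr fun t => (show t ∈ H by rw [hH]; trivial)

theorem sum_sub_inv_sqrt_card_sq_le {r : G → ℝ} (hr0 : ∀ u, 0 ≤ r u) (hr : ∑ u, r u ^ 2 = 1)
    {θ : ℝ} (h : ∀ t, shiftDist r t ≤ θ) :
    ∑ u, (r u - 1 / √(Fintype.card G : ℝ)) ^ 2 ≤ θ := by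
  set q : ℝ := (Fintype.card G : ℝ)
  have hq : 0 < q := Nat.cast_pos.2 Fintype.card_pos
  have hsq : √q ^ 2 = q := Real.sq_sqrt hq.le
  have hq' : 0 < √q := Real.sqrt_pos.2 hq
  set ρ : ℝ := (∑ u, r u) / √q with hρ
  have hρ0 : 0 ≤ ρ := div_nonneg (sum_nonneg fun u _ => hr0 u) hq'.le
  have hexpand : ∑ u, (r u - 1 / √q) ^ 2 = 2 - 2 * ρ := by
    simp only [sub_sq, div_pow, hsq, sum_add_distrib, sum_sub_distrib, hr, ← sum_mul, ← mul_sum,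
      sum_const, card_univ, nsmul_eq_mul, one_pow]
    rw [mul_one_div_cancel hq.ne', hρ]
    ring
  have hρ1 : ρ ≤ 1 := by
    linarith [hexpand.symm.trans_ge (sum_nonneg fun u _ => sq_nonneg (r u - 1 / √q))]
  have hmean : q * (2 - 2 * ρ ^ 2) ≤ q * θ := by
    calc q * (2 - 2 * ρ ^ 2) = ∑ t, shiftDist r t := by
          rw [sum_shiftDist, hr, hρ, div_pow, hsq]; field_simp; rfl
      _ ≤ ∑ _t : G, θ := sum_le_sum fun t _ => h t
      _ = q * θ := by simp [q]
  nlinarith [le_of_mul_le_mul_left hmean hq]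

theorem concentrated_or_equidistributed [Fact (Nat.card G).Prime] {x : G → ℝ}
    (hx : ∀ u, 0 ≤ x u) (hx1 : ∑ u, x u = 1) {η : ℝ} (hη : 0 < η) (hη_le : η ≤ 1 / 2048) {c : G}
    (hc : ∑ α, x α * reflDist (fun u => √(x u)) (c - α) ≤ η) :
    (∃ a, 1 - x a ≤ 16 * η) ∨
      ∑ u, (√(x u) - 1 / √(Fintype.card G : ℝ)) ^ 2 ≤ 128 * η := by
  set r : G → ℝ := fun u => √(x u)
  have hsq : ∀ u, r u ^ 2 = x u := fun u => Real.sq_sqrt (hx u)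
  have hr : ∑ u, r u ^ 2 = 1 := by simpa only [hsq] using hx1
  simp only [← hsq] at hc ⊢
  obtain ⟨a, ha⟩ := exists_sum_mul_shiftDist_le hr hc
  refine (one_sub_sq_le_or_forall_shiftDist_le hr (by positivity) (by linarith) ha).imp
    (fun h => ⟨a, by linarith⟩) fun h => ?_
  simpa only [hsq] using sum_sub_inv_sqrt_card_sq_le (fun u => Real.sqrt_nonneg _) hr
    fun t => (h t).trans_eq (by ring : 32 * (4 * η) = 128 * η)

end AlmostPeriods

theorem sum_fin_succ_fun {G M : Type*} [Fintype G] [AddCommMonoid M] {k : ℕ} (i : Fin (k + 1))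
    (F : (Fin (k + 1) → G) → M) : ∑ a, F a = ∑ u, ∑ b, F (i.insertNth u b) := by
  rw [← Equiv.sum_comp (Fin.insertNthEquiv (fun _ => G) i) F, Fintype.sum_prod_type]
  rfl

theorem prod_prod_succAbove {M : Type*} [CommMonoid M] {k : ℕ} (f : Fin (k + 1) → M) :
    ∏ i : Fin (k + 1), ∏ l, f (i.succAbove l) = ∏ i, f i ^ k := by
  have hdrop : ∀ i : Fin (k + 1), ∏ l, f (i.succAbove l) = ∏ l, if l = i then 1 else f l :=
    fun i => by simp [Fin.prod_univ_succAbove _ i]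
  simp only [hdrop]
  rw [prod_comm]
  exact prod_congr rfl fun l _ => by simp [Fin.prod_univ_succAbove _ l]

theorem two_le_card_ne_zero_of_sum_eq_zero {ι G : Type*} [Fintype ι] [AddCommMonoid G]
    [DecidableEq G] {a : ι → G} (ha : a ≠ 0) (hsum : ∑ i, a i = 0) : 2 ≤ #{i | a i ≠ 0} := by
  obtain ⟨i, hi⟩ := Function.ne_iff.1 ha
  by_contra! hcard
  refine hi (Eq.trans (sum_eq_single i (fun l _ hl => ?_) (by simp)).symm hsum)
  by_contra hl0
  exact hl (card_le_one.1 (Nat.le_of_lt_succ hcard) l (by simpa using hl0) i (by simpa using hi))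

section ZeroSum

variable {G : Type*} [AddCommGroup G] [Fintype G] [DecidableEq G]

/-- The generating function `∑ w (a₁) ⋯ w (a_d)` of the `d`-tuples in `G` with sum zero: for
`G = F_p`, the generating function of `Z_{d,p}`. -/
noncomputable def zeroSumWeight (d : ℕ) (w : G → ℝ) : ℝ :=
  ∑ a : Fin d → G with ∑ i, a i = 0, ∏ i, w (a i)

theorem sum_zeroSum_eq_sum_insertNth {k : ℕ} (i : Fin (k + 1)) (F : (Fin (k + 1) → G) → ℝ) :
    ∑ a with ∑ j, a j = 0, F a = ∑ b : Fin k → G, F (i.insertNth (-∑ j, b j) b) := by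
  rw [sum_filter, sum_fin_succ_fun i, sum_comm]
  simp only [Fin.sum_univ_succAbove _ i, Fin.insertNth_apply_same, Fin.insertNth_apply_succAbove,
    add_eq_zero_iff_eq_neg, sum_ite_eq', mem_univ, if_true]

theorem sum_zeroSum_prod_succAbove {k : ℕ} (x : G → ℝ) (i : Fin (k + 1)) :
    ∑ a : Fin (k + 1) → G with ∑ j, a j = 0, ∏ l, x (a (i.succAbove l)) = (∑ u, x u) ^ k := by
  simp only [sum_zeroSum_eq_sum_insertNth i, Fin.insertNth_apply_succAbove, Fintype.sum_pow]

theorem sum_zeroSum_sqrt_sub_sqrt_sq {m : ℕ} {x : G → ℝ} (hx : ∀ u, 0 ≤ x u) :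
    ∑ a : Fin (m + 2) → G with ∑ i, a i = 0,
      (√(∏ l, x (a (Fin.succAbove 0 l))) - √(∏ l, x (a (Fin.succAbove 1 l)))) ^ 2 =
    ∑ r : Fin m → G, (∏ i, x (r i)) * reflDist (fun u => √(x u)) (-∑ i, r i) := by
  have hprod : ∀ r : Fin m → G, 0 ≤ ∏ i, x (r i) := fun r => prod_nonneg fun i _ => hx _
  rw [sum_zeroSum_eq_sum_insertNth 0, sum_fin_succ_fun 0, sum_comm]
  refine sum_congr rfl fun r _ => ?_
  rw [reflDist, mul_sum]
  refine sum_congr rfl fun v _ => ?_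
  simp only [Fin.insertNth_zero', Fin.prod_univ_succ, Fin.sum_univ_succ, Fin.succAbove_zero,
    Fin.one_succAbove_zero, Fin.one_succAbove_succ, Fin.cons_zero, Fin.cons_succ,
    Real.sqrt_mul (hx _), neg_add_rev, ← sub_eq_add_neg]
  rw [← sub_mul, mul_pow, Real.sq_sqrt (hprod r), mul_comm]

theorem mul_prod_rpow_le_sum_prod_succAbove_sub_sq {m : ℕ} {z : Fin (m + 2) → ℝ}
    (hz : ∀ i, 0 ≤ z i) :
    ((m + 2 : ℕ) : ℝ) * ∏ i, z i ^ (1 - ((m + 2 : ℕ) : ℝ)⁻¹) ≤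
      ∑ i : Fin (m + 2), ∏ l, z (i.succAbove l) -
        (√(∏ l, z (Fin.succAbove 0 l)) - √(∏ l, z (Fin.succAbove 1 l))) ^ 2 := by
  have hdrop : ∀ i : Fin (m + 2), 0 ≤ ∏ l, z (i.succAbove l) :=
    fun i => prod_nonneg fun l _ => hz _
  have hgeom : ∏ i : Fin (m + 2), (∏ l, z (i.succAbove l)) ^ ((m + 2 : ℕ) : ℝ)⁻¹ =
      ∏ i, z i ^ (1 - ((m + 2 : ℕ) : ℝ)⁻¹) := by
    rw [Real.finsetProd_rpow _ _ fun i _ => hdrop i, prod_prod_succAbove,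
      ← Real.finsetProd_rpow _ _ fun i _ => pow_nonneg (hz i) _]
    refine prod_congr rfl fun i _ => ?_
    rw [← Real.rpow_natCast_mul (hz i)]
    congr 1
    push_cast
    field_simp
    ring
  simpa only [hgeom, Fintype.card_fin] using
    card_mul_prod_rpow_le_sum_sub_sq hdrop (zero_ne_one (α := Fin (m + 2)))

theorem sum_prod_mul_reflDist_le {m : ℕ} {x : G → ℝ} (hx : ∀ u, 0 ≤ x u) (hx1 : ∑ u, x u = 1) :
    ∑ r : Fin m → G, (∏ i, x (r i)) * reflDist (fun u => √(x u)) (-∑ i, r i) ≤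
      (m + 2 : ℕ) * (1 - zeroSumWeight (m + 2) fun u => x u ^ (1 - ((m + 2 : ℕ) : ℝ)⁻¹)) := by
  have hsum := sum_le_sum (s := univ.filter fun a : Fin (m + 2) → G => ∑ i, a i = 0)
    fun a _ => mul_prod_rpow_le_sum_prod_succAbove_sub_sq fun i => hx (a i)
  rw [← mul_sum, sum_sub_distrib, sum_comm, sum_zeroSum_sqrt_sub_sqrt_sq hx] at hsum
  simp only [sum_zeroSum_prod_succAbove, hx1, one_pow, sum_const, card_univ, Fintype.card_fin,
    nsmul_eq_mul, mul_one] at hsum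
  rw [zeroSumWeight]
  linarith

theorem exists_sum_mul_reflDist_le {d : ℕ} (hd : 3 ≤ d) {x : G → ℝ} (hx : ∀ u, 0 ≤ x u)
    (hx1 : ∑ u, x u = 1) :
    ∃ c, ∑ α, x α * reflDist (fun u => √(x u)) (c - α) ≤
      d * (1 - zeroSumWeight d fun u => x u ^ (1 - (d : ℝ)⁻¹)) := by
  obtain ⟨m, rfl⟩ := Nat.exists_eq_add_of_le' hd
  have hsplit := sum_prod_mul_reflDist_le (m := m + 1) hx hx1
  rw [sum_fin_succ_fun 0, sum_comm] at hsplit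
  simp only [Fin.insertNth_zero', Fin.prod_univ_succ, Fin.sum_univ_succ, Fin.cons_zero,
    Fin.cons_succ, neg_add_rev, ← sub_eq_add_neg, mul_comm (x _), mul_assoc, ← mul_sum] at hsplit
  obtain ⟨b, hb⟩ := exists_le_of_sum_mul_le (fun b : Fin m → G => prod_nonneg fun i _ => hx (b i))
    (by rw [← Fintype.sum_pow, hx1, one_pow]) hsplit
  exact ⟨-∑ i, b i, by simpa only [mul_comm (x _)] using hb⟩

theorem zeroSumWeight_nonneg {d : ℕ} {w : G → ℝ} (hw : ∀ u, 0 ≤ w u) : 0 ≤ zeroSumWeight d w :=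
  sum_nonneg fun _ _ => prod_nonneg fun _ _ => hw _

theorem zeroSumWeight_le_or_concentrated_or_equidistributed [Fact (Nat.card G).Prime] {d : ℕ}
    (hd : 3 ≤ d) {x : G → ℝ} (hx : ∀ u, 0 ≤ x u) (hx1 : ∑ u, x u = 1) {η : ℝ} (hη : 0 < η)
    (hη_le : η ≤ 1 / 2048) :
    (zeroSumWeight d fun u => x u ^ (1 - (d : ℝ)⁻¹)) ≤ 1 - η / d ∨ (∃ a, 1 - x a ≤ 16 * η) ∨
      ∑ u, (√(x u) - 1 / √(Fintype.card G : ℝ)) ^ 2 ≤ 128 * η := by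
  refine or_iff_not_imp_left.2 fun hlarge => ?_
  obtain ⟨c, hc⟩ := exists_sum_mul_reflDist_le hd hx hx1
  have hd0 : (0 : ℝ) < d := Nat.cast_pos.2 (by lia)
  refine concentrated_or_equidistributed hx hx1 hη hη_le (hc.trans ?_)
  rw [← le_div_iff₀' hd0]
  linarith

theorem zeroSumWeight_le_one_add {d : ℕ} {t : ℝ} (ht0 : 0 ≤ t) (ht1 : t ≤ 1) {y : G → ℝ}
    (hy : ∀ u, 0 ≤ y u) :
    (zeroSumWeight d fun u => if u = 0 then 1 else t * y u) ≤
      1 + t ^ 2 * (1 + ∑ u ∈ {0}ᶜ, y u) ^ d := by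
  let z : G → ℝ := fun u => if u = 0 then 1 else y u
  have hz : ∀ u, 0 ≤ z u := fun u => by
    simp only [z]; split_ifs
    exacts [zero_le_one, hy u]
  have hz_sum : ∑ u, z u = 1 + ∑ u ∈ {0}ᶜ, y u := by
    rw [Fintype.sum_eq_add_sum_compl 0, show z 0 = 1 from if_pos rfl]
    exact congrArg _ (sum_congr rfl fun u hu => if_neg (by simpa using hu))
  have hterm : ∀ a ∈ (univ.filter fun a : Fin d → G => ∑ i, a i = 0).erase 0,
      ∏ i, (if a i = 0 then 1 else t * y (a i)) ≤ t ^ 2 * ∏ i, z (a i) := fun a ha => by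
    obtain ⟨ha0, ha⟩ := mem_erase.1 ha
    have hfactor : ∀ u : G, (if u = 0 then 1 else t * y u) = (if u ≠ 0 then t else 1) * z u :=
      fun u => by simp only [z]; split_ifs <;> simp_all
    simp only [hfactor, prod_mul_distrib]
    rw [← prod_filter, prod_const]
    exact mul_le_mul_of_nonneg_right
      (pow_le_pow_of_le_one ht0 ht1 (two_le_card_ne_zero_of_sum_eq_zero ha0 (mem_filter.1 ha).2))
      (prod_nonneg fun i _ => hz _)
  rw [zeroSumWeight, ← add_sum_erase _ _ (show (0 : Fin d → G) ∈ _ by simp)]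
  refine add_le_add (by simp) ((sum_le_sum hterm).trans ?_)
  rw [← mul_sum, ← hz_sum, Fintype.sum_pow]
  exact mul_le_mul_of_nonneg_left
    (sum_le_univ_sum_of_nonneg fun a => prod_nonneg fun i _ => hz _) (sq_nonneg t)

end ZeroSum

theorem Phi_lt_of_sum_eq_zero {d p : ℕ} {a : Fin d → ZMod p} (ha : ∑ i, a i = 0) {j : ZMod p}
    (hj : (d : ZMod p) * j ≠ 0) : Phi a j < d := by
  refine lt_of_le_of_ne ((card_le_univ _).trans_eq (Fintype.card_fin d)) fun hall => hj ?_
  have hconst : ∀ i, a i = j := by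
    simpa [Phi, filter_eq_self] using
      eq_univ_of_card (univ.filter fun r => a r = j) (hall.trans (Fintype.card_fin d).symm)
  simpa [hconst] using ha

section Walks

variable {p : ℕ} [NeZero p]

theorem prod_pow_Phi {M : Type*} [CommMonoid M] {d : ℕ} (a : Fin d → ZMod p) (w : ZMod p → M) :
    ∏ j, w j ^ Phi a j = ∏ i, w (a i) := by
  simp only [Phi, ← prod_const]
  exact prod_fiberwise' univ a w

theorem sum_Phi_mul_self {d : ℕ} (a : Fin d → ZMod p) :
    ∑ j, (Phi a j : ZMod p) * j = ∑ i, a i := by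
  simp only [Phi, ← nsmul_eq_mul, ← sum_const]
  exact sum_fiberwise' univ a id

/-- The number of sequences of `n` elements of `Z_{d,p}` whose images under `Φ` add up to
`(d ν₀, …, d ν_{p-1})`. -/
def walkCount (d n : ℕ) (ν : ZMod p → ℕ) : ℕ :=
  #{a : Fin n → Fin d → ZMod p | (∀ k, ∑ i, a k i = 0) ∧ ∀ j, ∑ k, Phi (a k) j = d * ν j}

theorem exists_walk_of_walkCount_ne_zero {d n : ℕ} {ν : ZMod p → ℕ} (h : walkCount d n ν ≠ 0) :
    ∃ a : Fin n → Fin d → ZMod p, (∀ k, ∑ i, a k i = 0) ∧ ∀ j, ∑ k, Phi (a k) j = d * ν j := by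
  obtain ⟨a, ha⟩ := card_ne_zero.1 h
  exact ⟨a, (mem_filter.1 ha).2⟩

theorem mul_sum_eq_zero_of_walkCount_ne_zero {d n : ℕ} {ν : ZMod p → ℕ}
    (h : walkCount d n ν ≠ 0) : (d : ZMod p) * ∑ j, (ν j : ZMod p) * j = 0 := by
  obtain ⟨a, hzero, hΦ⟩ := exists_walk_of_walkCount_ne_zero h
  calc (d : ZMod p) * ∑ j, (ν j : ZMod p) * j = ∑ j, ((d * ν j : ℕ) : ZMod p) * j := by
        simp only [mul_sum, Nat.cast_mul, mul_assoc]
    _ = ∑ k, ∑ j, (Phi (a k) j : ZMod p) * j := by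
        simp only [← hΦ, Nat.cast_sum, sum_mul]
        exact sum_comm
    _ = 0 := sum_eq_zero fun k _ => by rw [sum_Phi_mul_self, hzero]

theorem mul_le_of_walkCount_ne_zero {d n : ℕ} {ν : ZMod p → ℕ} (h : walkCount d n ν ≠ 0)
    {j : ZMod p} (hj : (d : ZMod p) * j ≠ 0) : d * ν j ≤ n * (d - 1) := by
  obtain ⟨a, hzero, hΦ⟩ := exists_walk_of_walkCount_ne_zero h
  calc d * ν j = ∑ k, Phi (a k) j := (hΦ j).symm
    _ ≤ ∑ _k : Fin n, (d - 1) :=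
        sum_le_sum fun k _ => Nat.le_sub_one_of_lt (Phi_lt_of_sum_eq_zero (hzero k) hj)
    _ = n * (d - 1) := by simp

theorem walkCount_mul_prod_pow_le {w : ZMod p → ℝ} (hw : ∀ j, 0 ≤ w j) (d n : ℕ)
    (ν : ZMod p → ℕ) :
    walkCount d n ν * ∏ j, w j ^ (d * ν j) ≤ zeroSumWeight d w ^ n := by
  rw [zeroSumWeight, sum_pow', walkCount, ← nsmul_eq_mul, ← sum_const]
  calc ∑ a : Fin n → Fin d → ZMod p with
          (∀ k, ∑ i, a k i = 0) ∧ ∀ j, ∑ k, Phi (a k) j = d * ν j, ∏ j, w j ^ (d * ν j)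
      = ∑ a : Fin n → Fin d → ZMod p with
          (∀ k, ∑ i, a k i = 0) ∧ ∀ j, ∑ k, Phi (a k) j = d * ν j, ∏ k, ∏ i, w (a k i) := by
        refine sum_congr rfl fun a ha => ?_
        simp only [← (mem_filter.1 ha).2.2, ← prod_pow_eq_pow_sum, ← prod_pow_Phi]
        exact prod_comm
    _ ≤ ∑ a ∈ Fintype.piFinset fun _ : Fin n => univ.filter fun a : Fin d → ZMod p => ∑ i, a i = 0,
          ∏ k, ∏ i, w (a k i) := by
        refine sum_le_sum_of_subset_of_nonneg (fun a ha => ?_) fun _ _ _ =>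
          prod_nonneg fun _ _ => prod_nonneg fun _ _ => hw _
        simpa using (mem_filter.1 ha).2.1

/-- The summand of the large deviation sum. -/
noncomputable def ldpTerm (d n : ℕ) (ν : ZMod p → ℕ) : ℝ :=
  ((n.factorial : ℝ) * ∏ j, ((d * ν j).factorial : ℝ)) /
    ((∏ j, ((ν j).factorial : ℝ)) * ((n * d).factorial : ℝ)) * walkCount d n ν

theorem ldpTerm_eq_zero {d n : ℕ} {ν : ZMod p → ℕ} (h : walkCount d n ν = 0) :
    ldpTerm d n ν = 0 := by
  simp [ldpTerm, h]

end Walks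

theorem div_exp_one_pow_le_factorial (k : ℕ) : ((k : ℝ) / Real.exp 1) ^ k ≤ k.factorial := by
  rw [div_pow, ← Real.exp_nat_mul, mul_one]
  exact div_le_of_le_mul₀ (Real.exp_nonneg _) (by positivity)
    ((div_le_iff₀' (by positivity)).1 (Real.pow_div_factorial_le_exp k k.cast_nonneg k))

theorem factorial_le_mul_div_exp_one_pow (k : ℕ) :
    (k.factorial : ℝ) ≤ Real.exp 1 * (k + 1) * ((k : ℝ) / Real.exp 1) ^ k := by
  obtain - | k := k
  · simp
  have hstirling : Stirling.stirlingSeq (k + 1) ≤ Real.exp 1 / √2 :=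
    (Stirling.stirlingSeq'_antitone k.zero_le).trans_eq Stirling.stirlingSeq_one
  have hsqrt : √((k + 1 : ℕ) : ℝ) ≤ (k + 1 : ℕ) + 1 :=
    (Real.sqrt_le_left (by positivity)).2 (by nlinarith [(k + 1).cast_nonneg (α := ℝ)])
  rw [Stirling.stirlingSeq, div_le_div_iff₀ (by positivity) (by positivity),
    Real.sqrt_mul (by positivity)] at hstirling
  refine le_of_mul_le_mul_right (hstirling.trans ?_) (show 0 < √(2 : ℝ) by positivity)
  calc Real.exp 1 * (√2 * √((k + 1 : ℕ) : ℝ) * (((k + 1 : ℕ) : ℝ) / Real.exp 1) ^ (k + 1))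
      = Real.exp 1 * √((k + 1 : ℕ) : ℝ) * (((k + 1 : ℕ) : ℝ) / Real.exp 1) ^ (k + 1) * √2 := by
        ring
    _ ≤ Real.exp 1 * ((k + 1 : ℕ) + 1) * (((k + 1 : ℕ) : ℝ) / Real.exp 1) ^ (k + 1) * √2 := by
        gcongr

theorem prod_factorial_le {ι : Type*} [Fintype ι] (μ : ι → ℕ) {N : ℕ} (hN : ∑ i, μ i = N) :
    ∏ i, ((μ i).factorial : ℝ) ≤
      (Real.exp 1 * (N + 1)) ^ Fintype.card ι * (∏ i, ((μ i : ℝ) / N) ^ μ i) * N.factorial := by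
  have hle : ∀ i, μ i ≤ N := fun i => hN ▸ single_le_sum (fun _ _ => Nat.zero_le _) (mem_univ i)
  have hterm : ∀ i, ((μ i).factorial : ℝ) ≤
      Real.exp 1 * (N + 1) * (((μ i : ℝ) / N) ^ μ i * ((N : ℝ) / Real.exp 1) ^ μ i) := fun i => by
    have hscale : (μ i : ℝ) / N * (N / Real.exp 1) = μ i / Real.exp 1 := by
      rcases eq_or_ne N 0 with rfl | hN0
      · simp [Nat.le_zero.1 (hle i)]
      · exact div_mul_div_cancel₀ (Nat.cast_ne_zero.2 hN0)
    rw [← mul_pow, hscale]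
    refine (factorial_le_mul_div_exp_one_pow _).trans ?_
    gcongr
    exact hle i
  calc ∏ i, ((μ i).factorial : ℝ)
      ≤ ∏ i, (Real.exp 1 * (N + 1) * (((μ i : ℝ) / N) ^ μ i * ((N : ℝ) / Real.exp 1) ^ μ i)) :=
        prod_le_prod (fun _ _ => by positivity) fun i _ => hterm i
    _ = (Real.exp 1 * (N + 1)) ^ Fintype.card ι * (∏ i, ((μ i : ℝ) / N) ^ μ i) *
          ((N : ℝ) / Real.exp 1) ^ N := by
        simp only [prod_mul_distrib, prod_const, card_univ, prod_pow_eq_pow_sum, hN,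
          mul_pow, mul_assoc]
    _ ≤ _ := by
        gcongr
        exact div_exp_one_pow_le_factorial N

theorem multinomial_mul_prod_pow_le {ι : Type*} [Fintype ι] {x : ι → ℝ} (hx : ∀ i, 0 ≤ x i)
    (ν : ι → ℕ) : Nat.multinomial univ ν * ∏ i, x i ^ ν i ≤ (∑ i, x i) ^ ∑ i, ν i := by
  classical
  rw [sum_pow_eq_sum_piAntidiag]
  exact single_le_sum (f := fun μ : ι → ℕ => (Nat.multinomial univ μ : ℝ) * ∏ i, x i ^ μ i)
    (fun μ _ => mul_nonneg (Nat.cast_nonneg _) (prod_nonneg fun i _ => pow_nonneg (hx i) _))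
    (mem_piAntidiag.2 ⟨rfl, fun i _ => mem_univ i⟩)

theorem multinomial_mul_prod_div_pow_le_one {ι : Type*} [Fintype ι] {ν : ι → ℕ} {n : ℕ}
    (hν : ∑ i, ν i = n) : Nat.multinomial univ ν * ∏ i, ((ν i : ℝ) / n) ^ ν i ≤ 1 := by
  refine (multinomial_mul_prod_pow_le (fun i => by positivity) ν).trans (pow_le_one₀ ?_ ?_)
  · positivity
  · rw [← sum_div, ← Nat.cast_sum, hν]
    exact div_self_le_one _

theorem cast_multinomial {ι : Type*} (s : Finset ι) (ν : ι → ℕ) :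
    (Nat.multinomial s ν : ℝ) = (∑ i ∈ s, ν i).factorial / ∏ i ∈ s, ((ν i).factorial : ℝ) := by
  rw [eq_div_iff (by positivity), mul_comm]
  exact_mod_cast Nat.multinomial_spec s ν

theorem ldpTerm_le_zeroSumWeight_pow {p : ℕ} [NeZero p] {d n : ℕ} (hd : d ≠ 0) {ν : ZMod p → ℕ}
    (hν : ∑ j, ν j = n) :
    ldpTerm d n ν ≤ (Real.exp 1 * (n * d + 1)) ^ p *
      zeroSumWeight d (fun j => ((ν j : ℝ) / n) ^ (1 - (d : ℝ)⁻¹)) ^ n := by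
  set X : ℝ := ∏ j, ((ν j : ℝ) / n) ^ ν j
  set L : ℝ := (Real.exp 1 * (n * d + 1)) ^ p
  have hmult : Nat.multinomial univ ν * X ≤ 1 := multinomial_mul_prod_div_pow_le_one hν
  have hfact : ∏ j, ((d * ν j).factorial : ℝ) ≤ L * X ^ d * (n * d).factorial := by
    have h := prod_factorial_le (fun j => d * ν j) (N := n * d) (by rw [← mul_sum, hν, mul_comm])
    have hpow : ∏ j, (((d * ν j : ℕ) : ℝ) / (n * d : ℕ)) ^ (d * ν j) = X ^ d := by
      rw [← prod_pow]
      refine prod_congr rfl fun j _ => ?_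
      rw [← pow_mul, mul_comm (ν j), Nat.cast_mul, Nat.cast_mul, mul_comm (n : ℝ),
        mul_div_mul_left _ _ (Nat.cast_ne_zero.2 hd)]
    rwa [hpow, ZMod.card, Nat.cast_mul] at h
  have hwalk := walkCount_mul_prod_pow_le
    (fun j => Real.rpow_nonneg (by positivity : 0 ≤ (ν j : ℝ) / n) (1 - (d : ℝ)⁻¹)) d n ν
  have hsaddle : ∏ j, (((ν j : ℝ) / n) ^ (1 - (d : ℝ)⁻¹)) ^ (d * ν j) = X ^ (d - 1) := by
    rw [← prod_pow]
    refine prod_congr rfl fun j _ => ?_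
    rw [pow_mul, ← Real.rpow_mul_natCast (by positivity), sub_mul, one_mul,
      inv_mul_cancel₀ (Nat.cast_ne_zero.2 hd), ← Nat.cast_pred (Nat.pos_of_ne_zero hd),
      Real.rpow_natCast, pow_right_comm]
  rw [hsaddle] at hwalk
  calc ldpTerm d n ν
      = Nat.multinomial univ ν * ((∏ j, ((d * ν j).factorial : ℝ)) / (n * d).factorial) *
          walkCount d n ν := by
        rw [ldpTerm, cast_multinomial, hν, div_mul_div_comm]
    _ ≤ Nat.multinomial univ ν * (L * X ^ d) * walkCount d n ν := by
        gcongr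
        exact div_le_of_le_mul₀ (by positivity) (by positivity) hfact
    _ = L * ((Nat.multinomial univ ν * X) * (walkCount d n ν * X ^ (d - 1))) := by
        rw [← mul_pow_sub_one hd X]
        ring
    _ ≤ L * (1 * zeroSumWeight d (fun j => ((ν j : ℝ) / n) ^ (1 - (d : ℝ)⁻¹)) ^ n) := by gcongr
    _ = _ := by rw [one_mul]

theorem one_le_mul_one_sub_div_of_walkCount_ne_zero {p : ℕ} [NeZero p] {d n : ℕ} {ν : ZMod p → ℕ}
    (h : walkCount d n ν ≠ 0) {j : ZMod p} (hj : (d : ZMod p) * j ≠ 0) :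
    1 ≤ d * (1 - (ν j : ℝ) / n) := by
  have hd : 1 ≤ d := Nat.one_le_iff_ne_zero.2 fun hd => hj (by simp [hd])
  have hmul : (d : ℝ) * ν j ≤ n * (d - 1) := by
    exact_mod_cast mul_le_of_walkCount_ne_zero h hj
  have hdiv : d * ((ν j : ℝ) / n) ≤ d - 1 := by
    rw [← mul_div_assoc]
    exact div_le_of_le_mul₀ n.cast_nonneg (sub_nonneg.2 (Nat.one_le_cast.2 hd)) (by linarith)
  linarith

theorem ldpTerm_le_exp_or_one_sub_le {p : ℕ} [Fact p.Prime] {d n : ℕ} (hd : 3 ≤ d)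
    (hpd : (d : ZMod p) ≠ 0) (hn : n ≠ 0) {ν : ZMod p → ℕ} (hν : ∑ j, ν j = n) {η : ℝ}
    (hη : 0 < η) (hη_le : η ≤ 1 / 2048) (hdη : d * (16 * η) < 1)
    (hfar : 2 * (128 * η) ^ 2 + 8 * (1 / p) * (128 * η) < ∑ j, ((ν j : ℝ) / n - 1 / p) ^ 2) :
    ldpTerm d n ν ≤ (Real.exp 1 * (n * d + 1)) ^ p * Real.exp (-(η * n / d)) ∨
      1 - (ν 0 : ℝ) / n ≤ 16 * η := by
  have : Fact (Nat.card (ZMod p)).Prime := ⟨by rw [Nat.card_zmod]; exact Fact.out⟩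
  have hx : ∀ j, 0 ≤ (ν j : ℝ) / n := fun j => by positivity
  have hx1 : ∑ j, (ν j : ℝ) / n = 1 := by
    rw [← sum_div, ← Nat.cast_sum, hν, div_self (Nat.cast_ne_zero.2 hn)]
  rcases zeroSumWeight_le_or_concentrated_or_equidistributed hd hx hx1 hη hη_le with
    hsmall | ⟨a, ha⟩ | hequi
  · left
    refine (ldpTerm_le_zeroSumWeight_pow (by lia) hν).trans ?_
    have hexp : Real.exp (-(η * n / d)) = Real.exp (-(η / d)) ^ n := by
      rw [← Real.exp_nat_mul]; ring_nf
    rw [hexp]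
    gcongr
    · exact zeroSumWeight_nonneg fun j => Real.rpow_nonneg (hx j) _
    · exact hsmall.trans (Real.one_sub_le_exp_neg _)
  · rcases eq_or_ne a 0 with rfl | ha0
    · exact .inr ha
    · left
      rw [ldpTerm_eq_zero]
      · positivity
      by_contra hwalk
      have hbound := one_le_mul_one_sub_div_of_walkCount_ne_zero hwalk (mul_ne_zero hpd ha0)
      exact hdη.not_ge (hbound.trans (by gcongr))
  · rw [ZMod.card] at hequi
    refine absurd (sum_sub_sq_sq_le hx hequi) (not_le.2 ?_)
    rwa [div_pow, one_pow, Real.sq_sqrt p.cast_nonneg]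

theorem factorial_add_le_factorial_mul_pow (k M : ℕ) :
    (k + M).factorial ≤ k.factorial * (k + M) ^ M := by
  have h := Nat.factorial_mul_descFactorial (Nat.le_add_left M k)
  rw [Nat.add_sub_cancel] at h
  rw [← h]
  gcongr
  exact Nat.descFactorial_le_pow _ _

theorem factorial_mul_half_pow_le_factorial_add {k M : ℕ} (h : M ≤ k) :
    (k.factorial : ℝ) * (((k + M : ℕ) : ℝ) / 2) ^ M ≤ (k + M).factorial := by
  have hhalf : ((k + M : ℕ) : ℝ) / 2 ≤ (k + 1 : ℕ) := by
    have : (M : ℝ) ≤ k := Nat.cast_le.2 h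
    push_cast
    linarith
  calc (k.factorial : ℝ) * (((k + M : ℕ) : ℝ) / 2) ^ M ≤ k.factorial * ((k + 1 : ℕ) : ℝ) ^ M := by
        gcongr
    _ ≤ (k + M).factorial := by exact_mod_cast Nat.factorial_mul_pow_le_factorial

theorem prod_factorial_mul_le {ι : Type*} (s : Finset ι) (d : ℕ) (ν : ι → ℕ) :
    ∏ i ∈ s, (d * ν i).factorial ≤ d ^ (d * ∑ i ∈ s, ν i) * (∏ i ∈ s, ν i ^ ν i) ^ d := by
  calc ∏ i ∈ s, (d * ν i).factorial ≤ ∏ i ∈ s, (d * ν i) ^ (d * ν i) :=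
        prod_le_prod' fun i _ => Nat.factorial_le_pow _
    _ = d ^ (d * ∑ i ∈ s, ν i) * (∏ i ∈ s, ν i ^ ν i) ^ d := by
        simp only [mul_pow, prod_mul_distrib, prod_pow_eq_pow_sum, mul_sum, ← prod_pow, ← pow_mul,
          mul_comm (ν _)]

section NearRegime

variable {p : ℕ} [NeZero p]

-- The saddle point here is `w 0 = 1` and `w j = t ν j / M` for `j ≠ 0`, with `t ^ 2 = M / n`.
theorem walkCount_mul_prod_pow_self_le (d n : ℕ) {ν : ZMod p → ℕ} {M : ℕ}
    (hM : ∑ j ∈ {0}ᶜ, ν j = M) (hM0 : M ≠ 0) (hMn : M ≤ n) :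
    walkCount d n ν * (∏ j ∈ {0}ᶜ, (ν j : ℝ) ^ ν j) ^ d ≤
      (Real.exp (2 ^ d) * (M / √((M : ℝ) / n)) ^ d) ^ M := by
  have hM_pos : (0 : ℝ) < M := Nat.cast_pos.2 (Nat.pos_of_ne_zero hM0)
  have hn_pos : (0 : ℝ) < n := hM_pos.trans_le (Nat.cast_le.2 hMn)
  set t : ℝ := √((M : ℝ) / n)
  have ht : 0 < t := Real.sqrt_pos.2 (by positivity)
  have ht_le : t ≤ 1 := Real.sqrt_le_one.2 (div_le_one_of_le₀ (Nat.cast_le.2 hMn) hn_pos.le)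
  have ht_sq : t ^ 2 = M / n := Real.sq_sqrt (by positivity)
  have hw : ∀ j : ZMod p, 0 ≤ if j = 0 then 1 else t * ((ν j : ℝ) / M) := fun j => by
    split_ifs <;> positivity
  have hweight : (zeroSumWeight d fun j : ZMod p => if j = 0 then 1 else t * ((ν j : ℝ) / M)) ^ n ≤
      Real.exp (2 ^ d) ^ M := by
    have hsum : ∑ j ∈ {0}ᶜ, (ν j : ℝ) / M = 1 := by
      rw [← sum_div, ← Nat.cast_sum, hM, div_self hM_pos.ne']
    have hle := zeroSumWeight_le_one_add (d := d) ht.le ht_le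
      fun j => (by positivity : 0 ≤ (ν j : ℝ) / M)
    rw [hsum, one_add_one_eq_two, ht_sq] at hle
    calc _ ≤ Real.exp (M / n * 2 ^ d) ^ n := by
          gcongr
          · exact zeroSumWeight_nonneg hw
          · linarith [Real.add_one_le_exp ((M : ℝ) / n * 2 ^ d)]
      _ = Real.exp (2 ^ d) ^ M := by
          rw [← Real.exp_nat_mul, ← Real.exp_nat_mul]
          field_simp
  have hprod : ∏ j : ZMod p, (if j = 0 then 1 else t * ((ν j : ℝ) / M)) ^ (d * ν j) =
      (∏ j ∈ {0}ᶜ, (ν j : ℝ) ^ ν j) ^ d / ((M / t) ^ d) ^ M := by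
    rw [Fintype.prod_eq_mul_prod_compl 0, if_pos rfl, one_pow, one_mul, ← hM, ← prod_pow_eq_pow_sum,
      ← prod_pow, ← prod_div_distrib]
    refine prod_congr rfl fun j hj => ?_
    rw [if_neg (by simpa using hj), pow_mul, pow_right_comm (ν j : ℝ), ← div_pow, ← div_pow]
    field_simp
  have hwalk := walkCount_mul_prod_pow_le hw d n ν
  rw [hprod, ← mul_div_assoc, div_le_iff₀ (by positivity)] at hwalk
  rw [mul_pow]
  exact hwalk.trans (by gcongr)

/-- A constant `K` such that the terms with `n - ν 0 = M` contribute at most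
`(K p (M/n)^{(d-2)/2})^M` to the large deviation sum. -/
noncomputable def nearConst (d : ℕ) : ℝ := Real.exp (2 ^ d) * Real.exp 1 * 2 ^ d

theorem nearConst_pos (d : ℕ) : 0 < nearConst d := by
  unfold nearConst; positivity

theorem mul_pow_mul_div_sqrt_pow_eq {d : ℕ} (hd : 2 ≤ d) {M n : ℝ} (hM : 0 < M) (hn : 0 < n) :
    n * d ^ d * (Real.exp (2 ^ d) * (M / √(M / n)) ^ d) =
      nearConst d * √(M / n) ^ (d - 2) * (M / Real.exp 1) * (n * d / 2) ^ d := by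
  set t : ℝ := √(M / n)
  have ht : 0 < t := Real.sqrt_pos.2 (by positivity)
  have hMt : M = t ^ 2 * n := by rw [Real.sq_sqrt (by positivity)]; field_simp
  obtain ⟨e, rfl⟩ := Nat.exists_eq_add_of_le' hd
  rw [hMt, nearConst, show t ^ 2 * n / t = t * n by field_simp, div_pow, Nat.add_sub_cancel]
  field_simp
  ring

theorem ldpTerm_le_near {d n : ℕ} (hd : 2 ≤ d) {ν : ZMod p → ℕ} (hν : ∑ j, ν j = n) {M : ℕ}
    (hM : ∑ j ∈ {0}ᶜ, ν j = M) (hM0 : M ≠ 0) (hMn : 2 * M ≤ n) :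
    ldpTerm d n ν ≤
      (nearConst d * √((M : ℝ) / n) ^ (d - 2)) ^ M * Nat.multinomial {0}ᶜ ν := by
  have hM_pos : (0 : ℝ) < M := Nat.cast_pos.2 (Nat.pos_of_ne_zero hM0)
  have hn : n = ν 0 + M := by rw [← hν, ← hM, Fintype.sum_eq_add_sum_compl 0]
  have hn_pos : (0 : ℝ) < n := Nat.cast_pos.2 (by lia)
  set Y : ℝ := ∏ j ∈ {0}ᶜ, (ν j : ℝ) ^ ν j
  set F : ℝ := ∏ j ∈ {0}ᶜ, ((ν j).factorial : ℝ) with hF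
  set W : ℝ := (walkCount d n ν : ℝ) with hW
  set K : ℝ := nearConst d * √((M : ℝ) / n) ^ (d - 2)
  have hK : 0 ≤ K := mul_nonneg (nearConst_pos d).le (by positivity)
  have hfact_n : (n.factorial : ℝ) ≤ (ν 0).factorial * (n : ℝ) ^ M := by
    rw [hn]; exact_mod_cast factorial_add_le_factorial_mul_pow (ν 0) M
  have hfact_nd : ((d * ν 0).factorial : ℝ) * ((n : ℝ) * d / 2) ^ (d * M) ≤ (n * d).factorial := by
    have hsplit : n * d = d * ν 0 + d * M := by rw [hn, mul_comm, mul_add]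
    rw [← Nat.cast_mul, hsplit]
    exact factorial_mul_half_pow_le_factorial_add (Nat.mul_le_mul_left d (by lia))
  have hfact_off : ∏ j ∈ {0}ᶜ, ((d * ν j).factorial : ℝ) ≤ (d : ℝ) ^ (d * M) * Y ^ d := by
    have h := prod_factorial_mul_le {0}ᶜ d ν
    rw [hM] at h
    simp only [Y]
    exact_mod_cast h
  have hfact_M : ((M : ℝ) / Real.exp 1) ^ M ≤ F * Nat.multinomial {0}ᶜ ν := by
    rw [cast_multinomial, hM, mul_div_cancel₀ _ (by positivity)]
    exact div_exp_one_pow_le_factorial M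
  have hwalk : W * Y ^ d ≤ (Real.exp (2 ^ d) * (M / √((M : ℝ) / n)) ^ d) ^ M :=
    walkCount_mul_prod_pow_self_le d n hM hM0 (by lia)
  rw [ldpTerm, Fintype.prod_eq_mul_prod_compl 0, Fintype.prod_eq_mul_prod_compl 0, ← hW, ← hF,
    div_mul_eq_mul_div, div_le_iff₀ (by positivity)]
  calc (n.factorial : ℝ) * ((d * ν 0).factorial * ∏ j ∈ {0}ᶜ, ((d * ν j).factorial : ℝ)) * W
      ≤ ((ν 0).factorial * (n : ℝ) ^ M) *
          ((d * ν 0).factorial * ((d : ℝ) ^ (d * M) * Y ^ d)) * W := by gcongr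
    _ = (ν 0).factorial * (d * ν 0).factorial * ((n * (d : ℝ) ^ d) ^ M * (W * Y ^ d)) := by
        rw [mul_pow, ← pow_mul]; ring
    _ ≤ (ν 0).factorial * (d * ν 0).factorial *
          ((n * (d : ℝ) ^ d) ^ M * (Real.exp (2 ^ d) * (M / √((M : ℝ) / n)) ^ d) ^ M) := by gcongr
    _ = K ^ M * (M / Real.exp 1) ^ M * (ν 0).factorial *
          ((d * ν 0).factorial * ((n : ℝ) * d / 2) ^ (d * M)) := by
        rw [← mul_pow, mul_pow_mul_div_sqrt_pow_eq hd hM_pos hn_pos, mul_pow, mul_pow, pow_mul]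
        ring
    _ ≤ K ^ M * (F * Nat.multinomial {0}ᶜ ν) * (ν 0).factorial * (n * d).factorial := by gcongr
    _ = K ^ M * Nat.multinomial {0}ᶜ ν * ((ν 0).factorial * F * (n * d).factorial) := by ring

theorem sum_multinomial_le_card_pow {ι : Type*} (s : Finset ι) {M : ℕ} {S : Finset (ι → ℕ)}
    (hS : ∀ ν ∈ S, ∑ i ∈ s, ν i = M)
    (hinj : Set.InjOn (s.restrict (π := fun _ => ℕ)) S) :
    ∑ ν ∈ S, Nat.multinomial s ν ≤ #s ^ M := by
  classical
  let trunc : (ι → ℕ) → ι → ℕ := fun ν i => if i ∈ s then ν i else 0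
  have htrunc : ∀ ν, ∀ i ∈ s, trunc ν i = ν i := fun ν i hi => if_pos hi
  have htrunc_inj : Set.InjOn trunc S := fun ν hν μ hμ h => hinj hν hμ <| funext fun i => by
    rw [restrict, restrict, ← htrunc ν i i.2, h, htrunc μ i i.2]
  have htotal : ∑ μ ∈ s.piAntidiag M, Nat.multinomial s μ = #s ^ M := by
    simpa using (sum_pow_eq_sum_piAntidiag s (fun _ => (1 : ℕ)) M).symm
  calc ∑ ν ∈ S, Nat.multinomial s ν = ∑ μ ∈ S.image trunc, Nat.multinomial s μ := by
        rw [sum_image htrunc_inj]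
        exact sum_congr rfl fun ν _ => (Nat.multinomial_congr (htrunc ν)).symm
    _ ≤ ∑ μ ∈ s.piAntidiag M, Nat.multinomial s μ := by
        refine sum_le_sum_of_subset fun μ hμ => ?_
        obtain ⟨ν, hν, rfl⟩ := mem_image.1 hμ
        refine mem_piAntidiag.2 ⟨(sum_congr rfl (htrunc ν)).trans (hS ν hν), fun i hi => ?_⟩
        by_contra his
        exact hi (if_neg his)
    _ = #s ^ M := htotal

theorem sum_multinomial_compl_zero_le {n M : ℕ} {S : Finset (ZMod p → ℕ)}
    (hS : ∀ ν ∈ S, ∑ j, ν j = n ∧ ∑ j ∈ {0}ᶜ, ν j = M) :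
    ∑ ν ∈ S, Nat.multinomial {0}ᶜ ν ≤ p ^ M := by
  refine (sum_multinomial_le_card_pow _ (fun ν hν => (hS ν hν).2) fun ν hν μ hμ h => ?_).trans ?_
  · have hoff : ∀ j ≠ 0, ν j = μ j := fun j hj => congrFun h ⟨j, by simpa using hj⟩
    refine funext fun j => ?_
    rcases eq_or_ne j 0 with rfl | hj
    · have hsum := (hS ν hν).1.trans (hS μ hμ).1.symm
      rw [Fintype.sum_eq_add_sum_compl 0, Fintype.sum_eq_add_sum_compl 0, (hS ν hν).2,
        (hS μ hμ).2] at hsum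
      exact Nat.add_right_cancel hsum
    · exact hoff j hj
  · gcongr
    exact (card_le_univ _).trans_eq (ZMod.card p)

theorem sum_ldpTerm_le_of_sum_compl_eq {d n : ℕ} (hd : 2 ≤ d) {M : ℕ} (hM2 : 2 ≤ M)
    (hMn : 2 * M ≤ n) (hgrow : nearConst d * p * √((M : ℝ) / n) ^ (d - 2) ≤ 1 / 2)
    {S : Finset (ZMod p → ℕ)} (hS : ∀ ν ∈ S, ∑ j, ν j = n ∧ ∑ j ∈ {0}ᶜ, ν j = M) :
    ∑ ν ∈ S, ldpTerm d n ν ≤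
      4 * nearConst d ^ 2 * p ^ 2 / n ^ (d - 2) * (M ^ (d - 2) * (1 / 2) ^ M) := by
  set t : ℝ := √((M : ℝ) / n)
  have ht_sq : t ^ 2 = M / n := Real.sq_sqrt (by positivity)
  have hK := nearConst_pos d
  obtain ⟨e, rfl⟩ := Nat.exists_eq_add_of_le hM2
  calc ∑ ν ∈ S, ldpTerm d n ν
      ≤ ∑ ν ∈ S, (nearConst d * t ^ (d - 2)) ^ (2 + e) * (Nat.multinomial {0}ᶜ ν : ℝ) :=
        sum_le_sum fun ν hν => ldpTerm_le_near hd (hS ν hν).1 (hS ν hν).2 (by lia) hMn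
    _ ≤ (nearConst d * t ^ (d - 2)) ^ (2 + e) * (p : ℝ) ^ (2 + e) := by
        rw [← mul_sum]
        gcongr
        exact_mod_cast sum_multinomial_compl_zero_le hS
    _ = (nearConst d * p * t ^ (d - 2)) ^ 2 * (nearConst d * p * t ^ (d - 2)) ^ e := by ring
    _ ≤ (nearConst d * p * t ^ (d - 2)) ^ 2 * (1 / 2) ^ e := by gcongr
    _ = 4 * nearConst d ^ 2 * p ^ 2 * (t ^ 2) ^ (d - 2) * (1 / 2) ^ (2 + e) := by ring
    _ = _ := by rw [ht_sq, div_pow]; ring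

end NearRegime

theorem exists_eq_one_of_sum_eq_one {ι : Type*} {s : Finset ι} {ν : ι → ℕ}
    (h : ∑ i ∈ s, ν i = 1) : ∃ a ∈ s, ν a = 1 ∧ ∀ i ∈ s, i ≠ a → ν i = 0 := by
  classical
  obtain ⟨a, ha, hνa⟩ := exists_ne_zero_of_sum_ne_zero (h.trans_ne one_ne_zero)
  have hsplit := add_sum_erase s ν ha
  refine ⟨a, ha, by lia, fun i hi hia => ?_⟩
  have hle := single_le_sum (f := ν) (fun _ _ => Nat.zero_le _) (mem_erase.2 ⟨hia, hi⟩)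
  lia

section Prime

variable {p : ℕ} [Fact p.Prime]

theorem walkCount_eq_zero_of_sum_compl_eq_one {d n : ℕ} (hpd : (d : ZMod p) ≠ 0)
    {ν : ZMod p → ℕ} (hM : ∑ j ∈ {0}ᶜ, ν j = 1) : walkCount d n ν = 0 := by
  by_contra hwalk
  obtain ⟨a, ha, hνa, hν⟩ := exists_eq_one_of_sum_eq_one hM
  have hsum : ∑ j, (ν j : ZMod p) * j = a := by
    rw [sum_eq_single a (fun j _ hja => ?_) (by simp), hνa, Nat.cast_one, one_mul]
    rcases eq_or_ne j 0 with rfl | hj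
    · exact mul_zero _
    · rw [hν j (by simpa using hj) hja, Nat.cast_zero, zero_mul]
  have hzero := mul_sum_eq_zero_of_walkCount_ne_zero hwalk
  rw [hsum] at hzero
  exact mul_ne_zero hpd (by simpa using ha) hzero

theorem ldpTerm_eq_zero_of_sum_compl_lt_two {d n : ℕ} (hpd : (d : ZMod p) ≠ 0) {ν : ZMod p → ℕ}
    (hν : ∑ j, ν j = n) (hne : ν ≠ fun j => if j = 0 then n else 0)
    (hM : ∑ j ∈ {0}ᶜ, ν j < 2) : ldpTerm d n ν = 0 := by
  refine ldpTerm_eq_zero (walkCount_eq_zero_of_sum_compl_eq_one hpd ?_)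
  by_contra hM1
  have hM0 : ∑ j ∈ {0}ᶜ, ν j = 0 := by lia
  refine hne (funext fun j => ?_)
  split_ifs with hj
  · rw [hj, ← hν, Fintype.sum_eq_add_sum_compl 0, hM0, add_zero]
  · exact sum_eq_zero_iff.1 hM0 j (by simpa using hj)

theorem sum_ldpTerm_layer_le {d n : ℕ} (hd : 2 ≤ d) (hpd : (d : ZMod p) ≠ 0) {M : ℕ}
    (hMn : 2 * M ≤ n) (hgrow : nearConst d * p * √((M : ℝ) / n) ^ (d - 2) ≤ 1 / 2)
    {S : Finset (ZMod p → ℕ)} (hS : ∀ ν ∈ S, ∑ j, ν j = n ∧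
      ν ≠ (fun j => if j = 0 then n else 0) ∧ ∑ j ∈ {0}ᶜ, ν j = M) :
    ∑ ν ∈ S, ldpTerm d n ν ≤
      4 * nearConst d ^ 2 * p ^ 2 / n ^ (d - 2) * (M ^ (d - 2) * (1 / 2) ^ M) := by
  rcases lt_or_ge M 2 with hM | hM
  · rw [sum_eq_zero fun ν hν => ldpTerm_eq_zero_of_sum_compl_lt_two hpd (hS ν hν).1 (hS ν hν).2.1
      ((hS ν hν).2.2.trans_lt hM)]
    positivity
  · exact sum_ldpTerm_le_of_sum_compl_eq hd hM hMn hgrow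
      fun ν hν => ⟨(hS ν hν).1, (hS ν hν).2.2⟩

theorem sum_ldpTerm_near_le {d n : ℕ} (hd : 2 ≤ d) (hpd : (d : ZMod p) ≠ 0) (hn : n ≠ 0) {δ : ℝ}
    (hδ : δ ≤ 1 / 2) (hgrow : nearConst d * p * √δ ^ (d - 2) ≤ 1 / 2) {S : Finset (ZMod p → ℕ)}
    (hS : ∀ ν ∈ S, ∑ j, ν j = n ∧ ν ≠ (fun j => if j = 0 then n else 0) ∧
      1 - (ν 0 : ℝ) / n ≤ δ) :
    ∑ ν ∈ S, ldpTerm d n ν ≤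
      4 * nearConst d ^ 2 * (∑' M : ℕ, (M : ℝ) ^ (d - 2) * (1 / 2) ^ M) * p ^ 2 /
        n ^ (d - 2) := by
  have hn_pos : (0 : ℝ) < n := Nat.cast_pos.2 (Nat.pos_of_ne_zero hn)
  have hK := nearConst_pos d
  have hoff : ∀ ν ∈ S, ((∑ j ∈ {0}ᶜ, ν j : ℕ) : ℝ) / n ≤ δ := fun ν hν => by
    refine le_of_eq_of_le ?_ (hS ν hν).2.2
    rw [eq_sub_iff_add_eq, ← add_div, ← Nat.cast_add, add_comm, ← Fintype.sum_eq_add_sum_compl,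
      (hS ν hν).1, div_self hn_pos.ne']
  let layers : Finset ℕ := S.image fun ν => ∑ j ∈ {0}ᶜ, ν j
  have hlayer : ∀ M ∈ layers,
      ∑ ν ∈ S with ∑ j ∈ {0}ᶜ, ν j = M, ldpTerm d n ν ≤
        4 * nearConst d ^ 2 * p ^ 2 / n ^ (d - 2) * (M ^ (d - 2) * (1 / 2) ^ M) := fun M hM => by
    obtain ⟨μ, hμ, rfl⟩ := mem_image.1 hM
    have hhalf := (div_le_iff₀ hn_pos).1 ((hoff μ hμ).trans hδ)
    refine sum_ldpTerm_layer_le hd hpd ?_ (le_trans ?_ hgrow) fun ν hν => ?_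
    · rw [← Nat.cast_le (α := ℝ), Nat.cast_mul, Nat.cast_two]
      linarith
    · gcongr
      exact hoff μ hμ
    · obtain ⟨hνS, hνM⟩ := mem_filter.1 hν
      exact ⟨(hS ν hνS).1, (hS ν hνS).2.1, hνM⟩
  have hsummable : Summable fun M : ℕ => (M : ℝ) ^ (d - 2) * (1 / 2) ^ M :=
    summable_pow_mul_geometric_of_norm_lt_one (d - 2) (by norm_num)
  calc ∑ ν ∈ S, ldpTerm d n ν
      = ∑ M ∈ layers, ∑ ν ∈ S with ∑ j ∈ {0}ᶜ, ν j = M, ldpTerm d n ν :=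
        (sum_fiberwise_of_maps_to (fun _ => mem_image_of_mem _) _).symm
    _ ≤ 4 * nearConst d ^ 2 * p ^ 2 / n ^ (d - 2) *
          ∑ M ∈ layers, (M : ℝ) ^ (d - 2) * (1 / 2) ^ M := by
        rw [mul_sum]
        exact sum_le_sum hlayer
    _ ≤ 4 * nearConst d ^ 2 * p ^ 2 / n ^ (d - 2) *
          ∑' M : ℕ, (M : ℝ) ^ (d - 2) * (1 / 2) ^ M := by
        gcongr
        exact hsummable.sum_le_tsum _ fun M _ => by positivity
    _ = _ := by ring

theorem card_le_of_sum_eq {ι : Type*} [Fintype ι] {n : ℕ} {S : Finset (ι → ℕ)}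
    (hS : ∀ ν ∈ S, ∑ i, ν i = n) : #S ≤ (n + 1) ^ Fintype.card ι := by
  classical
  calc #S ≤ #(Fintype.piFinset fun _ : ι => range (n + 1)) := card_le_card fun ν hν =>
        Fintype.mem_piFinset.2 fun i => mem_range_succ_iff.2 <|
          (single_le_sum (fun _ _ => Nat.zero_le _) (mem_univ i)).trans_eq (hS ν hν)
    _ = (n + 1) ^ Fintype.card ι := by simp

theorem sum_ldpTerm_le_add {d n : ℕ} (hd : 3 ≤ d) (hpd : (d : ZMod p) ≠ 0) (hn : n ≠ 0) {η : ℝ}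
    (hη : 0 < η) (hη_le : η ≤ 1 / 2048) (hdη : d * (16 * η) < 1)
    (hgrow : nearConst d * p * √(16 * η) ^ (d - 2) ≤ 1 / 2) {S : Finset (ZMod p → ℕ)}
    (hS : ∀ ν ∈ S, ∑ j, ν j = n ∧ ν ≠ (fun j => if j = 0 then n else 0) ∧
      2 * (128 * η) ^ 2 + 8 * (1 / p) * (128 * η) < ∑ j, ((ν j : ℝ) / n - 1 / p) ^ 2) :
    ∑ ν ∈ S, ldpTerm d n ν ≤
      4 * nearConst d ^ 2 * (∑' M : ℕ, (M : ℝ) ^ (d - 2) * (1 / 2) ^ M) * p ^ 2 / n ^ (d - 2) +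
        (n + 1) ^ p * ((Real.exp 1 * (n * d + 1)) ^ p * Real.exp (-(η * n / d))) := by
  rw [← sum_filter_add_sum_filter_not S fun ν => 1 - (ν 0 : ℝ) / n ≤ 16 * η]
  refine add_le_add (sum_ldpTerm_near_le (by lia) hpd hn (by linarith) hgrow fun ν hν => ?_) ?_
  · obtain ⟨hνS, hν0⟩ := mem_filter.1 hν
    exact ⟨(hS ν hνS).1, (hS ν hνS).2.1, hν0⟩
  · set T := S.filter fun ν => ¬ 1 - (ν 0 : ℝ) / n ≤ 16 * η
    have hcard : (#T : ℝ) ≤ (n + 1) ^ p := by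
      have h := card_le_of_sum_eq fun ν (hν : ν ∈ T) => (hS ν (mem_filter.1 hν).1).1
      rw [ZMod.card] at h
      exact_mod_cast h
    calc ∑ ν ∈ T, ldpTerm d n ν
        ≤ ∑ _ν ∈ T, (Real.exp 1 * (n * d + 1)) ^ p * Real.exp (-(η * n / d)) := by
          refine sum_le_sum fun ν hν => ?_
          obtain ⟨hνS, hν0⟩ := mem_filter.1 hν
          exact (ldpTerm_le_exp_or_one_sub_le hd hpd hn (hS ν hνS).1 hη hη_le hdη
            (hS ν hνS).2.2).resolve_right hν0
      _ ≤ (n + 1) ^ p * ((Real.exp 1 * (n * d + 1)) ^ p * Real.exp (-(η * n / d))) := by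
          rw [sum_const, nsmul_eq_mul]
          gcongr

end Prime

/-- The saddle-point deficit separating the two regimes: it is the value `η` for which
`exp (-(η n / d)) = n ^ (-(d + 6) p)`, which beats the number of terms. -/
noncomputable def deficit (d p n : ℕ) : ℝ := d * (d + 6) * p * Real.log n / n

theorem pow_mul_exp_deficit_le {d n p : ℕ} (hd : d ≠ 0) (hn : d + 3 ≤ n) (hp : p ≠ 0) :
    ((n : ℝ) + 1) ^ p * ((Real.exp 1 * (n * d + 1)) ^ p * Real.exp (-(deficit d p n * n / d))) ≤
      1 / (n : ℝ) ^ (d - 2) := by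
  have hn' : (d : ℝ) + 3 ≤ n := by exact_mod_cast hn
  have hn_pos : (0 : ℝ) < n := by linarith [d.cast_nonneg (α := ℝ)]
  have hn_one : (1 : ℝ) ≤ n := by linarith [d.cast_nonneg (α := ℝ)]
  have hexp : Real.exp (-(deficit d p n * n / d)) = (((n : ℝ) ^ (d + 6))⁻¹) ^ p := by
    have hexponent : -(deficit d p n * n / d) = -(((p * (d + 6) : ℕ) : ℝ) * Real.log n) := by
      rw [deficit]
      push_cast
      field_simp
    rw [hexponent, Real.exp_neg, Real.exp_nat_mul, Real.exp_log hn_pos, inv_pow, ← pow_mul,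
      mul_comm p]
  have hexp_one : Real.exp 1 ≤ (n : ℝ) ^ 2 := by
    nlinarith [Real.exp_one_lt_d9, d.cast_nonneg (α := ℝ)]
  have hbase : ((n : ℝ) + 1) * (Real.exp 1 * (n * d + 1) * ((n : ℝ) ^ (d + 6))⁻¹) ≤
      1 / (n : ℝ) ^ d := by
    calc ((n : ℝ) + 1) * (Real.exp 1 * (n * d + 1) * ((n : ℝ) ^ (d + 6))⁻¹)
        ≤ (n : ℝ) ^ 2 * ((n : ℝ) ^ 2 * (n : ℝ) ^ 2 * ((n : ℝ) ^ (d + 6))⁻¹) := by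
          gcongr <;> nlinarith [d.cast_nonneg (α := ℝ)]
      _ = 1 / (n : ℝ) ^ d := by field_simp; ring
  rw [hexp, ← mul_pow, ← mul_pow]
  calc _ ≤ (1 / (n : ℝ) ^ d) ^ p := by gcongr
    _ ≤ 1 / (n : ℝ) ^ d := by
        refine pow_le_of_le_one (by positivity) ?_ hp
        exact div_le_one_of_le₀ (one_le_pow₀ hn_one) (by positivity)
    _ ≤ 1 / (n : ℝ) ^ (d - 2) := by
        gcongr
        exact Nat.sub_le d 2

section Asymptotics

open Filter Topology

theorem tendsto_log_div_rpow_natCast {r : ℝ} (hr : 0 < r) :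
    Tendsto (fun n : ℕ => Real.log n / (n : ℝ) ^ r) atTop (𝓝 0) :=
  (isLittleO_log_rpow_atTop hr).tendsto_div_nhds_zero.comp tendsto_natCast_atTop_atTop

theorem tendsto_log_div_sqrt_natCast :
    Tendsto (fun n : ℕ => Real.log n / √(n : ℝ)) atTop (𝓝 0) := by
  simpa only [Real.sqrt_eq_rpow] using tendsto_log_div_rpow_natCast one_half_pos

theorem pow_le_sqrt_pow_of_le_rpow {d : ℕ} (hd : 2 ≤ d) {x n : ℝ} (hx : 0 ≤ x) (hn : 0 ≤ n)
    (h : x ≤ n ^ (((d : ℝ) - 2) / (2 * d))) : x ^ d ≤ √n ^ (d - 2) := by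
  calc x ^ d ≤ (n ^ (((d : ℝ) - 2) / (2 * d))) ^ d := by gcongr
    _ = √n ^ (d - 2) := by
        rw [Real.sqrt_eq_rpow, ← Real.rpow_mul_natCast hn, ← Real.rpow_mul_natCast hn,
          Nat.cast_sub hd, Nat.cast_two]
        have : (d : ℝ) ≠ 0 := Nat.cast_ne_zero.2 (by lia)
        congr 1
        field_simp

theorem le_sqrt_of_le_rpow {d : ℕ} {x n : ℝ} (hn : 1 ≤ n)
    (h : x ≤ n ^ (((d : ℝ) - 2) / (2 * d))) : x ≤ √n := by
  rw [Real.sqrt_eq_rpow]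
  refine h.trans (Real.rpow_le_rpow_of_exponent_le hn ?_)
  exact div_le_of_le_mul₀ (by positivity) (by norm_num) (by linarith)

theorem sq_mul_rpow_le_of_le_rpow {d : ℕ} (hd : d ≠ 0) {x n : ℝ} (hx : 0 ≤ x) (hn : 0 < n)
    (h : x ≤ n ^ (((d : ℝ) - 2) / (2 * d))) : x ^ 2 * n ^ (2 / (d : ℝ)) ≤ n := by
  calc x ^ 2 * n ^ (2 / (d : ℝ))
      ≤ (n ^ (((d : ℝ) - 2) / (2 * d))) ^ 2 * n ^ (2 / (d : ℝ)) := by gcongr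
    _ = n := by
        rw [← Real.rpow_mul_natCast hn.le, ← Real.rpow_add hn]
        convert Real.rpow_one n using 2
        push_cast
        field_simp
        ring

theorem eventually_deficit_le {d : ℕ} {ε : ℝ} (hε : 0 < ε) :
    ∀ᶠ n : ℕ in atTop, ∀ p : ℕ, (p : ℝ) ≤ √(n : ℝ) → deficit d p n ≤ ε := by
  have hlim : Tendsto (fun n : ℕ => d * (d + 6) * (Real.log n / √(n : ℝ))) atTop (𝓝 0) := by
    simpa using tendsto_log_div_sqrt_natCast.const_mul ((d : ℝ) * (d + 6))
  filter_upwards [hlim.eventually_le_const hε] with n hn p hp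
  refine le_trans ?_ hn
  calc deficit d p n = d * (d + 6) * Real.log n * (p / n) := by rw [deficit]; ring
    _ ≤ d * (d + 6) * Real.log n * (√n / n) := by
        gcongr
    _ = d * (d + 6) * (Real.log n / √(n : ℝ)) := by rw [Real.sqrt_div_self', mul_assoc, mul_one_div]

theorem mul_sqrt_deficit_pow_le {d n p : ℕ} (hd : 2 ≤ d) (hpow : (p : ℝ) ^ d ≤ √n ^ (d - 2)) :
    p * √(16 * deficit d p n) ^ (d - 2) ≤
      √(16 * (d * (d + 6)) * (Real.log n / √(n : ℝ))) ^ (d - 2) := by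
  set L : ℝ := 16 * (d * (d + 6)) * Real.log n with hL
  have hdeficit : 16 * deficit d p n = p * (L / n) := by rw [deficit]; ring
  have hdeficit_nonneg : 0 ≤ 16 * deficit d p n := by unfold deficit; positivity
  refine (abs_le_of_sq_le_sq' ?_ (by positivity)).2
  calc (p * √(16 * deficit d p n) ^ (d - 2)) ^ 2 = p ^ 2 * (p * (L / n)) ^ (d - 2) := by
        rw [mul_pow, pow_right_comm, Real.sq_sqrt hdeficit_nonneg, hdeficit]
    _ = p ^ d * (L / n) ^ (d - 2) := by
        rw [mul_pow, ← mul_assoc, ← pow_add, Nat.add_sub_cancel' hd]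
    _ ≤ √n ^ (d - 2) * (L / n) ^ (d - 2) := by gcongr
    _ = (√(16 * (d * (d + 6)) * (Real.log n / √(n : ℝ))) ^ (d - 2)) ^ 2 := by
        rw [← mul_pow, pow_right_comm, Real.sq_sqrt (by positivity), mul_div_left_comm,
          Real.sqrt_div_self', mul_one_div, hL, mul_div_assoc]

theorem eventually_const_mul_sqrt_deficit_le {d : ℕ} (hd : 3 ≤ d) (K : ℝ) :
    ∀ᶠ n : ℕ in atTop, ∀ p : ℕ, (p : ℝ) ≤ (n : ℝ) ^ (((d : ℝ) - 2) / (2 * d)) →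
      K * p * √(16 * deficit d p n) ^ (d - 2) ≤ 1 / 2 := by
  have hlim : Tendsto
      (fun n : ℕ => |K| * √(16 * (d * (d + 6)) * (Real.log n / √(n : ℝ))) ^ (d - 2))
      atTop (𝓝 0) := by
    have h := (tendsto_log_div_sqrt_natCast.const_mul (16 * ((d : ℝ) * (d + 6)))).sqrt
    simpa [show d - 2 ≠ 0 by lia] using (h.pow (d - 2)).const_mul |K|
  filter_upwards [hlim.eventually_le_const one_half_pos] with n hn p hp
  refine le_trans ?_ hn
  calc K * p * √(16 * deficit d p n) ^ (d - 2)
      ≤ |K| * (p * √(16 * deficit d p n) ^ (d - 2)) := by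
        rw [mul_assoc]
        gcongr
        exact le_abs_self K
    _ ≤ _ := by
        gcongr
        exact mul_sqrt_deficit_pow_le (by lia)
          (pow_le_sqrt_pow_of_le_rpow (by lia) p.cast_nonneg n.cast_nonneg hp)

theorem eventually_two_mul_deficit_sq_add_le {d : ℕ} (hd : d ≠ 0) :
    ∀ᶠ n : ℕ in atTop, ∀ p : ℕ, p ≠ 0 → (p : ℝ) ≤ (n : ℝ) ^ (((d : ℝ) - 2) / (2 * d)) →
      2 * (128 * deficit d p n) ^ 2 + 8 * (1 / p) * (128 * deficit d p n) ≤
        (1024 * (d * (d + 6)) + 1) * Real.log n / n := by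
  have hlim : Tendsto (fun n : ℕ => 2 * 128 ^ 2 * ((d : ℝ) * (d + 6)) ^ 2 *
      (Real.log n / (n : ℝ) ^ (2 / (d : ℝ)))) atTop (𝓝 0) := by
    simpa using (tendsto_log_div_rpow_natCast (r := 2 / (d : ℝ)) (by positivity)).const_mul _
  filter_upwards [hlim.eventually_le_const one_pos, eventually_gt_atTop 0] with n hn hn0 p hp0 hp
  have hn_pos : (0 : ℝ) < n := Nat.cast_pos.2 hn0
  have hsq := sq_mul_rpow_le_of_le_rpow hd p.cast_nonneg hn_pos hp
  rw [mul_div_assoc', div_le_one (by positivity)] at hn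
  have hquad : 2 * (128 * deficit d p n) ^ 2 ≤ Real.log n / n := by
    calc 2 * (128 * deficit d p n) ^ 2
        = p ^ 2 * (2 * 128 ^ 2 * ((d : ℝ) * (d + 6)) ^ 2 * Real.log n) / n * (Real.log n / n) := by
          rw [deficit]; ring
      _ ≤ p ^ 2 * (n : ℝ) ^ (2 / (d : ℝ)) / n * (Real.log n / n) := by gcongr
      _ ≤ 1 * (Real.log n / n) := by
          gcongr
          exact div_le_one_of_le₀ hsq hn_pos.le
      _ = Real.log n / n := one_mul _
  have hlin : 8 * (1 / p) * (128 * deficit d p n) = 1024 * (d * (d + 6)) * Real.log n / n := by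
    rw [deficit]
    field_simp
    ring
  calc _ ≤ Real.log n / n + 1024 * (d * (d + 6)) * Real.log n / n := by rw [hlin]; gcongr
    _ = _ := by ring

theorem eventually_sum_ldpTerm_le {d : ℕ} (hd : 3 ≤ d) :
    ∀ᶠ n : ℕ in atTop, ∀ (p : ℕ) [Fact p.Prime], (d : ZMod p) ≠ 0 →
      (p : ℝ) ≤ (n : ℝ) ^ (((d : ℝ) - 2) / (2 * d)) → ∀ S : Finset (ZMod p → ℕ),
      (∀ ν ∈ S, ∑ j, ν j = n ∧ ν ≠ (fun j => if j = 0 then n else 0) ∧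
        (1024 * (d * (d + 6)) + 1) * Real.log n / n < ∑ j, ((ν j : ℝ) / n - 1 / p) ^ 2) →
      ∑ ν ∈ S, ldpTerm d n ν ≤
        (4 * nearConst d ^ 2 * (∑' M : ℕ, (M : ℝ) ^ (d - 2) * (1 / 2) ^ M) + 1) * p ^ 2 /
          n ^ (d - 2) := by
  have : (0 : ℝ) < d := Nat.cast_pos.2 (by lia)
  filter_upwards [eventually_deficit_le (d := d) (ε := 1 / 2048) (by norm_num),
    eventually_deficit_le (d := d) (ε := 1 / (32 * d)) (by positivity),
    eventually_const_mul_sqrt_deficit_le hd (nearConst d),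
    eventually_two_mul_deficit_sq_add_le (d := d) (by lia), eventually_ge_atTop (d + 3)] with
    n hsmall hsmall_d hgrow hfar hn p _ hpd hp S hS
  have hn_one : (1 : ℝ) < n := Nat.one_lt_cast.2 (by lia)
  have hp0 : p ≠ 0 := NeZero.ne p
  have hp_one : (1 : ℝ) ≤ p := Nat.one_le_cast.2 (Nat.one_le_iff_ne_zero.2 hp0)
  have hp_sqrt := le_sqrt_of_le_rpow hn_one.le hp
  have hη : 0 < deficit d p n := by
    have := Real.log_pos hn_one
    unfold deficit
    positivity
  have hdη : d * (16 * deficit d p n) < 1 := by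
    have h := (le_div_iff₀ (by positivity)).1 (hsmall_d p hp_sqrt)
    linarith
  have hsum := sum_ldpTerm_le_add hd hpd (by lia) hη (hsmall p hp_sqrt) hdη (hgrow p hp)
    fun ν hν => ⟨(hS ν hν).1, (hS ν hν).2.1, (hfar p hp0 hp).trans_lt (hS ν hν).2.2⟩
  refine (hsum.trans (add_le_add_right (pow_mul_exp_deficit_le (by lia) hn hp0) _)).trans ?_
  rw [add_mul, add_div, one_mul]
  gcongr
  exact one_le_pow₀ hp_one

end Asymptotics

theorem natCast_ne_zero_of_gcd_eq_one {p d : ℕ} [Fact p.Prime] (h : Nat.gcd p d = 1) :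
    (d : ZMod p) ≠ 0 := fun hd =>
  (Nat.Prime.coprime_iff_not_dvd Fact.out).1 h ((ZMod.natCast_eq_zero_iff d p).1 hd)

/-- Large deviation estimate (directed case): for `d ≥ 3` there is `𝔟₀ > 0` so that for
every `𝔟 ≥ 𝔟₀` there are `C, c, N > 0` such that for all `n ≥ N` and primes `p` with
`gcd(p,d) = 1` and `p ≤ c n^{(d-2)/(2d)}`, the sum over non-equidistributed `p`-tuples
`(n_0,…,n_{p-1})` (summing to `n`, not equal to `(n,0,…,0)` and with
`Σ_j (n_j/n - 1/p)² > 𝔟 ln n / n`) of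
`(n! ∏_j (d n_j)!)/((∏_j n_j!)(nd)!)` times the walk count is at most `C p²/n^{d-2}`. -/
theorem directed_ldp_estimate (d : ℕ) (hd : 3 ≤ d) :
    ∃ b₀ : ℝ, 0 < b₀ ∧ ∀ b : ℝ, b₀ ≤ b →
      ∃ C c : ℝ, ∃ N : ℕ, 0 < C ∧ 0 < c ∧ 0 < N ∧
        ∀ n : ℕ, N ≤ n → ∀ (p : ℕ) [Fact p.Prime], Nat.gcd p d = 1 →
          (p : ℝ) ≤ c * (n : ℝ) ^ (((d : ℝ) - 2) / (2 * (d : ℝ))) →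
          (∑ᶠ ν ∈ {ν : ZMod p → ℕ | (∑ j, ν j) = n ∧
                ν ≠ (fun j => if j = 0 then n else 0) ∧
                ¬ ((∑ j : ZMod p, ((ν j : ℝ) / n - 1 / p) ^ 2) ≤ b * Real.log n / n)},
              ((n.factorial : ℝ) * ∏ j : ZMod p, ((d * ν j).factorial : ℝ)) /
                  ((∏ j : ZMod p, ((ν j).factorial : ℝ)) * ((n * d).factorial : ℝ)) *
                ((Finset.univ.filter (fun a : Fin n → Fin d → ZMod p =>
                  (∀ k, ∑ i, a k i = 0) ∧
                  (∀ j : ZMod p, (∑ k, Phi (a k) j) = d * ν j))).card : ℝ))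
            ≤ C * (p : ℝ) ^ 2 / (n : ℝ) ^ (d - 2) := by
  obtain ⟨N, hN⟩ := Filter.eventually_atTop.1 (eventually_sum_ldpTerm_le hd)
  have : 0 ≤ ∑' M : ℕ, (M : ℝ) ^ (d - 2) * (1 / 2) ^ M := tsum_nonneg fun M => by positivity
  refine ⟨1024 * (d * (d + 6)) + 1, by positivity, fun b hb =>
    ⟨4 * nearConst d ^ 2 * (∑' M : ℕ, (M : ℝ) ^ (d - 2) * (1 / 2) ^ M) + 1, 1, max N 1,
      by positivity, one_pos, by positivity, fun n hn p _ hpd hp => ?_⟩⟩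
  rw [one_mul] at hp
  classical
  let S : Finset (ZMod p → ℕ) := (univ.piAntidiag n).filter fun ν =>
    ν ≠ (fun j => if j = 0 then n else 0) ∧
      ¬ ((∑ j : ZMod p, ((ν j : ℝ) / n - 1 / p) ^ 2) ≤ b * Real.log n / n)
  have hS : {ν : ZMod p → ℕ | (∑ j, ν j) = n ∧ ν ≠ (fun j => if j = 0 then n else 0) ∧
      ¬ ((∑ j : ZMod p, ((ν j : ℝ) / n - 1 / p) ^ 2) ≤ b * Real.log n / n)} = S := by
    ext ν
    simp [S]
  rw [hS, finsum_mem_coe_finset]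
  refine hN n (le_of_max_le_left hn) p (natCast_ne_zero_of_gcd_eq_one hpd) hp S fun ν hν => ?_
  obtain ⟨hsum, hne, hfar⟩ := hS.ge hν
  exact ⟨hsum, hne, lt_of_le_of_lt (by gcongr) (not_le.1 hfar)⟩
end
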